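/- Let (s,u) and (σ,v) be solutions of problem (P) with initial data (s₀,φ) ∈ W and (σ₀,ψ) ∈ W and maximal existence times T_u and T_v, respectively. Assume s₀ ≤ σ₀ and φ ≤ ψ on [0,s₀]. Then T_u ≥ T_v, s(t) ≤ σ(t) for all t ∈ (0,T_v), and u ≤ v on D_s(T) for every T ∈ (0,T_v). -/

import Mathlib

open Set MeasureTheory Filter Topology Real
open scoped ENNReal

noncomputable section

/-- `(s₀, φ)` belongs to the class `W`: `s₀ ∈ (0,∞)`, `φ` is Lipschitz on `[0,s₀]`,
not identically zero, nonnegative there, and vanishes at `s₀`. -/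
def memW (s₀ : ℝ) (φ : ℝ → ℝ) : Prop :=
  0 < s₀ ∧ (∃ K : NNReal, LipschitzOnWith K φ (Icc 0 s₀)) ∧
    (∃ x ∈ Icc 0 s₀, φ x ≠ 0) ∧ (∀ x ∈ Icc 0 s₀, 0 ≤ φ x) ∧ φ s₀ = 0

/-- `(s,u)` is a solution of the one-phase Stefan problem (P) on `(0,T]` (finite `T`)
with exponent `p` and initial data `(s₀,φ)`. -/
structure IsSolOn (p s₀ : ℝ) (φ : ℝ → ℝ) (T : ℝ) (s : ℝ → ℝ) (u : ℝ → ℝ → ℝ) : Prop where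
  T_pos : 0 < T
  s_cont : ContinuousOn s (Icc 0 T)
  s_diff : ∀ t ∈ Ioc 0 T, DifferentiableAt ℝ s t
  s_deriv_cont : ContinuousOn (deriv s) (Ioc 0 T)
  s_pos : ∀ t ∈ Icc 0 T, 0 < s t
  ut_diff : ∀ t ∈ Ioc 0 T, ∀ x ∈ Ioo 0 (s t), DifferentiableAt ℝ (fun τ => u τ x) t
  ux_diff : ∀ t ∈ Ioc 0 T, ∀ x ∈ Ioo 0 (s t), DifferentiableAt ℝ (u t) x
  uxx_diff : ∀ t ∈ Ioc 0 T, ∀ x ∈ Ioo 0 (s t), DifferentiableAt ℝ (deriv (u t)) x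
  ut_cont : ContinuousOn (fun q : ℝ × ℝ => deriv (fun τ => u τ q.2) q.1)
      {q : ℝ × ℝ | q.1 ∈ Ioc 0 T ∧ q.2 ∈ Ioo 0 (s q.1)}
  uxx_cont : ContinuousOn (fun q : ℝ × ℝ => deriv (deriv (u q.1)) q.2)
      {q : ℝ × ℝ | q.1 ∈ Ioc 0 T ∧ q.2 ∈ Ioo 0 (s q.1)}
  ux_cont : ContinuousOn (fun q : ℝ × ℝ => deriv (u q.1) q.2)
      {q : ℝ × ℝ | q.1 ∈ Ioc 0 T ∧ q.2 ∈ Icc 0 (s q.1)}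
  u_cont : ContinuousOn (fun q : ℝ × ℝ => u q.1 q.2)
      {q : ℝ × ℝ | q.1 ∈ Icc 0 T ∧ q.2 ∈ Icc 0 (s q.1)}
  u_nonneg : ∀ t ∈ Icc 0 T, ∀ x ∈ Icc 0 (s t), 0 ≤ u t x
  heat : ∀ t ∈ Ioc 0 T, ∀ x ∈ Ioo 0 (s t),
      deriv (fun τ => u τ x) t = deriv (deriv (u t)) x
  bc_zero : ∀ t ∈ Ioc 0 T, -deriv (u t) 0 = u t 0 ^ p
  bc_free : ∀ t ∈ Ioc 0 T, u t (s t) = 0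
  stefan : ∀ t ∈ Ioc 0 T, deriv s t = -deriv (u t) (s t)
  init : ∀ x ∈ Icc 0 s₀, u 0 x = φ x
  init_s : s 0 = s₀

/-- `(s,u)` is a global-in-time solution of problem (P). -/
def IsGlobalSol (p s₀ : ℝ) (φ : ℝ → ℝ) (s : ℝ → ℝ) (u : ℝ → ℝ → ℝ) : Prop :=
  ∀ T : ℝ, 0 < T → IsSolOn p s₀ φ T s u

/-- `Tm ∈ (0,∞]` is the maximal existence time of the solution `(s,u)` of (P) with
initial data `(s₀,φ)`: the solution exists on `(0,T]` for every `T < Tm`, and for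
`T > Tm` problem (P) admits no solution on `(0,T]`. -/
def IsMaxSol (p s₀ : ℝ) (φ : ℝ → ℝ) (Tm : ℝ≥0∞) (s : ℝ → ℝ) (u : ℝ → ℝ → ℝ) : Prop :=
  0 < Tm ∧
    (∀ T : ℝ, 0 < T → ENNReal.ofReal T < Tm → IsSolOn p s₀ φ T s u) ∧
    (∀ T : ℝ, Tm < ENNReal.ofReal T → ¬∃ σ v, IsSolOn p s₀ φ T σ v)

/-- The sup norm `‖u(t)‖_{L^∞(0,s(t))}`. -/
def supNorm (s : ℝ → ℝ) (u : ℝ → ℝ → ℝ) (t : ℝ) : ℝ :=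
  sSup (u t '' Ioo 0 (s t))

/-- The `L¹` norm `‖u(t)‖_{L¹(0,s(t))}` of the nonnegative function `u(t,·)`. -/
def L1Norm (s : ℝ → ℝ) (u : ℝ → ℝ → ℝ) (t : ℝ) : ℝ :=
  ∫ x in (0:ℝ)..(s t), u t x

/-- The energy `E(s(t),u(t))`. -/
def energy (p : ℝ) (s : ℝ → ℝ) (u : ℝ → ℝ → ℝ) (t : ℝ) : ℝ :=
  1 / 2 * (∫ x in (0:ℝ)..(s t), (deriv (u t) x) ^ 2) - u t 0 ^ (p + 1) / (p + 1)

set_option linter.all false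
lemma left_end {f : ℝ → ℝ} {d x : ℝ} (hf : HasDerivWithinAt f d (Ici x) x)
    (h : ∀ᶠ y in 𝓝[>] x, f y ≤ f x) : d ≤ 0 := by
  have h1 := (hasDerivWithinAt_iff_tendsto_slope' (by simp)).1 (hf.mono Ioi_subset_Ici_self)
  refine le_of_tendsto h1 ?_
  filter_upwards [h, self_mem_nhdsWithin] with y hy hy2
  rw [slope_def_field]
  exact div_nonpos_of_nonpos_of_nonneg (by linarith) (by linarith [mem_Ioi.1 hy2])

lemma right_end {f : ℝ → ℝ} {d x : ℝ} (hf : HasDerivWithinAt f d (Iic x) x)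
    (h : ∀ᶠ y in 𝓝[<] x, f y ≤ f x) : 0 ≤ d := by
  have h1 := (hasDerivWithinAt_iff_tendsto_slope' (by simp)).1 (hf.mono Iio_subset_Iic_self)
  refine ge_of_tendsto h1 ?_
  filter_upwards [h, self_mem_nhdsWithin] with y hy hy2
  rw [slope_def_field]
  exact div_nonneg_of_nonpos (by linarith) (by linarith [mem_Iio.1 hy2])

lemma dt_ge {f : ℝ → ℝ} {a t : ℝ} (hf : HasDerivAt f a t)
    (h : ∀ᶠ τ in 𝓝[<] t, f τ ≤ exp (τ - t) * f t) : f t ≤ a := by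
  have h2 : HasDerivAt (fun τ => exp (τ - t) * f t) (exp (t - t) * 1 * f t) t :=
    (((hasDerivAt_id t).sub_const t).exp).mul_const _
  have := right_end (hf.sub h2).hasDerivWithinAt (by
    filter_upwards [h] with τ hτ
    simp only [Pi.sub_apply, sub_self, exp_zero]; linarith)
  simp at this; linarith

lemma dd_nonpos {f f' : ℝ → ℝ} {x c : ℝ} (hf : ∀ᶠ y in 𝓝 x, HasDerivAt f (f' y) y)
    (hf' : HasDerivAt f' c x) (hm : IsLocalMax f x) : c ≤ 0 := by
  by_contra hc
  push Not at hc
  have e1 : deriv f =ᶠ[𝓝 x] f' := hf.mono fun y hy => hy.deriv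
  have e2 : deriv (deriv f) x = c := by rw [e1.deriv_eq, hf'.deriv]
  have hx := hf.self_of_nhds
  have := isLocalMin_of_deriv_deriv_pos (by rw [e2]; exact hc) hm.deriv_eq_zero hx.continuousAt
  have e3 : f =ᶠ[𝓝 x] fun _ => f x := by
    filter_upwards [this, hm] with y h1 h2 using le_antisymm h2 h1
  have e4 : deriv f =ᶠ[𝓝 x] fun _ => 0 := by
    filter_upwards [e3.eventuallyEq_nhds] with y hy
    rw [hy.deriv_eq]; simp
  rw [e4.deriv_eq] at e2
  simp at e2; linarith

lemma exp_max {X : Type*} [TopologicalSpace X] {Q : Set (ℝ × X)} (hQ : IsCompact Q)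
    {W : ℝ × X → ℝ} (hW : ContinuousOn W Q) {q : ℝ × X} (hq : q ∈ Q) (hp : 0 < W q) :
    ∃ q₀ ∈ Q, 0 < W q₀ ∧ ∀ r ∈ Q, W r ≤ exp (r.1 - q₀.1) * W q₀ := by
  have hc : ContinuousOn (fun r : ℝ × X => exp (-r.1) * W r) Q :=
    ContinuousOn.mul (by fun_prop) hW
  obtain ⟨q₀, h0, hm⟩ := hQ.exists_isMaxOn ⟨q, hq⟩ hc
  have key : ∀ r ∈ Q, W r ≤ exp (r.1 - q₀.1) * W q₀ := fun r hr => by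
    have h1 : exp (-r.1) * W r ≤ exp (-q₀.1) * W q₀ := hm hr
    have h2 := mul_le_mul_of_nonneg_left h1 (exp_pos r.1).le
    rwa [← mul_assoc, ← mul_assoc, ← exp_add, ← exp_add, add_neg_cancel, exp_zero, one_mul,
      ← sub_eq_add_neg] at h2
  refine ⟨q₀, h0, ?_, key⟩
  have := hp.trans_le (key q hq)
  exact pos_of_mul_pos_right this (exp_pos _).le

lemma region_compact {b : ℝ → ℝ} {T : ℝ} (hb : ContinuousOn b (Icc 0 T))
    (hb0 : ∀ t ∈ Icc 0 T, 0 < b t) :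
    IsCompact {q : ℝ × ℝ | q.1 ∈ Icc 0 T ∧ q.2 ∈ Icc 0 (b q.1)} := by
  have h1 : IsCompact (Icc (0:ℝ) T ×ˢ Icc (0:ℝ) 1) := isCompact_Icc.prod isCompact_Icc
  have h2 : ContinuousOn (fun q : ℝ × ℝ => (q.1, q.2 * b q.1)) (Icc (0:ℝ) T ×ˢ Icc (0:ℝ) 1) := by
    refine continuousOn_fst.prodMk (continuousOn_snd.mul (hb.comp continuousOn_fst ?_))
    exact fun q hq => hq.1
  convert h1.image_of_continuousOn h2 using 1
  ext ⟨t, x⟩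
  simp only [mem_ofPred_eq, mem_image, mem_prod, Prod.mk.injEq, Prod.exists]
  constructor
  · rintro ⟨ht, hx⟩
    have := hb0 t ht
    exact ⟨t, x / b t, ⟨ht, div_nonneg hx.1 this.le, (div_le_one this).2 hx.2⟩, rfl,
      div_mul_cancel₀ _ this.ne'⟩
  · rintro ⟨t', y, ⟨ht, hy⟩, rfl, rfl⟩
    have := hb0 t' ht
    exact ⟨ht, mul_nonneg hy.1 this.le, by nlinarith [hy.2]⟩

lemma left_mem {b : ℝ → ℝ} {T t x : ℝ} (hb : ContinuousOn b (Icc 0 T)) (ht : t ∈ Ioc 0 T)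
    (hx : x < b t) : ∀ᶠ τ in 𝓝[<] t, τ ∈ Icc 0 T ∧ x < b τ := by
  have h1 : ContinuousWithinAt b (Icc 0 T) t := hb t ⟨ht.1.le, ht.2⟩
  have h2 : ∀ᶠ τ in 𝓝[Icc 0 T] t, x < b τ := h1.eventually (lt_mem_nhds hx)
  have h3 : ∀ᶠ τ in 𝓝[<] t, τ ∈ Icc 0 T := by
    filter_upwards [Ioo_mem_nhdsLT ht.1] with τ hτ using ⟨hτ.1.le, hτ.2.le.trans ht.2⟩
  have h4 : 𝓝[<] t ≤ 𝓝[Icc 0 T] t :=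
    le_inf (nhdsWithin_le_nhds) (le_principal_iff.2 h3)
  exact h3.and (h4 h2)

lemma maxpr {b : ℝ → ℝ} {T : ℝ} {W : ℝ → ℝ → ℝ} (hb : ContinuousOn b (Icc 0 T))
    (hb0 : ∀ t ∈ Icc 0 T, 0 < b t)
    (hW : ContinuousOn (fun q : ℝ × ℝ => W q.1 q.2)
      {q : ℝ × ℝ | q.1 ∈ Icc 0 T ∧ q.2 ∈ Icc 0 (b q.1)})
    (h0 : ∀ x ∈ Icc 0 (b 0), W 0 x ≤ 0) (hr : ∀ t ∈ Ioc 0 T, W t (b t) ≤ 0)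
    (hl : ∀ t ∈ Ioc 0 T, 0 < W t 0 → ∃ d > 0, HasDerivWithinAt (W t) d (Ici 0) 0)
    (hi : ∀ t ∈ Ioc 0 T, ∀ x ∈ Ioo 0 (b t), ∃ a c W', HasDerivAt (fun τ => W τ x) a t ∧
      (∀ᶠ y in 𝓝 x, HasDerivAt (W t) (W' y) y) ∧ HasDerivAt W' c x ∧ a ≤ c) :
    ∀ t ∈ Icc 0 T, ∀ x ∈ Icc 0 (b t), W t x ≤ 0 := by
  intro t ht x hx
  by_contra hpos
  push Not at hpos
  obtain ⟨⟨t₀, x₀⟩, hq, hp, hm⟩ := exp_max (region_compact hb hb0) hW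
    (q := (t, x)) ⟨ht, hx⟩ hpos
  simp only [mem_ofPred_eq] at hq hp hm
  obtain ⟨ht0, hx0⟩ := hq
  have htp : t₀ ∈ Ioc 0 T := by
    refine ⟨lt_of_le_of_ne ht0.1 fun h => ?_, ht0.2⟩
    subst h
    linarith [h0 x₀ hx0]
  have hmx : ∀ y ∈ Icc 0 (b t₀), W t₀ y ≤ W t₀ x₀ := fun y hy => by
    simpa using hm (t₀, y) ⟨ht0, hy⟩
  have hxb : x₀ < b t₀ := by
    refine lt_of_le_of_ne hx0.2 fun h => ?_
    subst h
    linarith [hr t₀ htp]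
  rcases hx0.1.eq_or_lt with h | h
  · subst h
    obtain ⟨d, hd, hd2⟩ := hl t₀ htp hp
    have := left_end hd2 (by
      filter_upwards [Ioo_mem_nhdsGT hxb] with y hy using hmx y ⟨hy.1.le, hy.2.le⟩)
    linarith
  · obtain ⟨a, c, W', h1, h2, h3, h4⟩ := hi t₀ htp x₀ ⟨h, hxb⟩
    have h5 := dd_nonpos h2 h3 (by
      filter_upwards [Ioo_mem_nhds h hxb] with y hy using hmx y ⟨hy.1.le, hy.2.le⟩)
    have h6 := dt_ge h1 (by
      filter_upwards [left_mem hb htp hxb] with τ hτ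
      exact hm (τ, x₀) ⟨hτ.1, h.le, hτ.2.le⟩)
    linarith

section basics
variable {p s₀ T : ℝ} {φ s : ℝ → ℝ} {u : ℝ → ℝ → ℝ}

lemma IsSolOn.pk (h : IsSolOn p s₀ φ T s u) {t x : ℝ} (ht : t ∈ Ioc 0 T) (hx : x ∈ Ioo 0 (s t)) :
    HasDerivAt (fun τ => u τ x) (deriv (deriv (u t)) x) t ∧
    (∀ᶠ y in 𝓝 x, HasDerivAt (u t) (deriv (u t) y) y) ∧
    HasDerivAt (deriv (u t)) (deriv (deriv (u t)) x) x := by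
  refine ⟨?_, ?_, (h.uxx_diff t ht x hx).hasDerivAt⟩
  · rw [← h.heat t ht x hx]; exact (h.ut_diff t ht x hx).hasDerivAt
  · filter_upwards [Ioo_mem_nhds hx.1 hx.2] with y hy using (h.ux_diff t ht y hy).hasDerivAt

lemma IsSolOn.slice (h : IsSolOn p s₀ φ T s u) {t : ℝ} (ht : t ∈ Icc 0 T) :
    ContinuousOn (u t) (Icc 0 (s t)) :=
  h.u_cont.comp (f := fun x => (t, x)) (by fun_prop) fun x hx => ⟨ht, hx⟩

lemma IsSolOn.sliceX (h : IsSolOn p s₀ φ T s u) {t : ℝ} (ht : t ∈ Ioc 0 T) :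
    ContinuousOn (deriv (u t)) (Icc 0 (s t)) :=
  h.ux_cont.comp (f := fun x => (t, x)) (by fun_prop) fun x hx => ⟨ht, hx⟩

lemma IsSolOn.d0 (h : IsSolOn p s₀ φ T s u) {t : ℝ} (ht : t ∈ Ioc 0 T) :
    HasDerivWithinAt (u t) (deriv (u t) 0) (Ici 0) 0 := by
  have hs := h.s_pos t (Ioc_subset_Icc_self ht)
  refine hasDerivWithinAt_Ici_of_tendsto_deriv (s := Ioo 0 (s t))
    (fun x hx => (h.ux_diff t ht x hx).differentiableWithinAt) ?_ (Ioo_mem_nhdsGT hs) ?_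
  · exact (h.slice (Ioc_subset_Icc_self ht) 0 ⟨le_rfl, hs.le⟩).mono Ioo_subset_Icc_self
  · have := (h.sliceX ht 0 ⟨le_rfl, hs.le⟩).mono Ioo_subset_Icc_self
    rwa [ContinuousWithinAt, nhdsWithin_Ioo_eq_nhdsGT hs] at this

lemma IsSolOn.d1 (h : IsSolOn p s₀ φ T s u) {t : ℝ} (ht : t ∈ Ioc 0 T) :
    HasDerivWithinAt (u t) (deriv (u t) (s t)) (Iic (s t)) (s t) := by
  have hs := h.s_pos t (Ioc_subset_Icc_self ht)
  refine hasDerivWithinAt_Iic_of_tendsto_deriv (s := Ioo 0 (s t))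
    (fun x hx => (h.ux_diff t ht x hx).differentiableWithinAt) ?_ (Ioo_mem_nhdsLT hs) ?_
  · exact (h.slice (Ioc_subset_Icc_self ht) (s t) ⟨hs.le, le_rfl⟩).mono Ioo_subset_Icc_self
  · have := (h.sliceX ht (s t) ⟨hs.le, le_rfl⟩).mono Ioo_subset_Icc_self
    rwa [ContinuousWithinAt, nhdsWithin_Ioo_eq_nhdsLT hs] at this

lemma IsSolOn.ds (h : IsSolOn p s₀ φ T s u) {t : ℝ} (ht : t ∈ Ioc 0 T) : 0 ≤ deriv s t := by
  have hs := h.s_pos t (Ioc_subset_Icc_self ht)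
  rw [h.stefan t ht]
  refine right_end (h.d1 ht).neg ?_
  filter_upwards [Ioo_mem_nhdsLT hs] with y hy
  have := h.u_nonneg t (Ioc_subset_Icc_self ht) y (Ioo_subset_Icc_self hy)
  simp [h.bc_free t ht, this]

lemma IsSolOn.mono (h : IsSolOn p s₀ φ T s u) : MonotoneOn s (Icc 0 T) := by
  refine monotoneOn_of_deriv_nonneg (convex_Icc _ _) h.s_cont ?_ ?_ <;> rw [interior_Icc]
  · exact fun t ht => (h.s_diff t (Ioo_subset_Ioc_self ht)).differentiableWithinAt
  · exact fun t ht => h.ds (Ioo_subset_Ioc_self ht)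

lemma IsSolOn.s_ge (h : IsSolOn p s₀ φ T s u) {t : ℝ} (ht : t ∈ Icc 0 T) : s₀ ≤ s t := by
  rw [← h.init_s]; exact h.mono ⟨le_rfl, h.T_pos.le⟩ ht ht.1

lemma IsSolOn.cont_s (h : IsSolOn p s₀ φ T s u) {A : Set (ℝ × ℝ)} (hA : ∀ q ∈ A, q.1 ∈ Icc 0 T) :
    ContinuousOn (fun q : ℝ × ℝ => s q.1) A := h.s_cont.comp continuousOn_fst hA

lemma IsSolOn.barrier (h : IsSolOn p s₀ φ T s u) {M K : ℝ} (hK0 : 0 ≤ K)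
    (hM : ∀ t ∈ Icc 0 T, u t 0 ≤ M) (hK : M ≤ K * s₀)
    (hφ : ∀ x ∈ Icc 0 s₀, φ x ≤ K * (s₀ - x)) :
    ∀ t ∈ Icc 0 T, ∀ x ∈ Icc 0 (s t), u t x ≤ K * (s t - x) := by
  have := maxpr (W := fun t x => u t x - K * (s t - x)) h.s_cont h.s_pos ?_ ?_ ?_ ?_ ?_
  · intro t ht x hx; linarith [this t ht x hx]
  · exact h.u_cont.sub (continuousOn_const.mul ((h.cont_s fun q hq => hq.1).sub continuousOn_snd))
  · intro x hx; rw [h.init_s] at hx ⊢; rw [h.init x hx]; linarith [hφ x hx]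
  · intro t ht; simp [h.bc_free t ht]
  · intro t ht hp
    have h1 := hM t (Ioc_subset_Icc_self ht)
    have h2 := mul_le_mul_of_nonneg_left (h.s_ge (Ioc_subset_Icc_self ht)) hK0
    simp only [sub_zero] at hp; linarith
  · intro t ht x hx
    obtain ⟨h1, h2, h3⟩ := h.pk ht hx
    refine ⟨_, _, fun y => deriv (u t) y - K * (0 - 1), h1.sub
      (((h.s_diff t ht).hasDerivAt.sub_const x).const_mul K), ?_, h3.sub_const _, ?_⟩
    · filter_upwards [h2] with y hy
      exact hy.sub (((hasDerivAt_const y (s t)).sub (hasDerivAt_id y)).const_mul K)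
    · linarith [mul_nonneg hK0 (h.ds ht)]

lemma IsSolOn.lip (h : IsSolOn p s₀ φ T s u) {M L e : ℝ} (hL0 : 0 ≤ L) (he : e = 1 ∨ e = -1)
    (hp : 0 < p) (hM : ∀ t ∈ Icc 0 T, u t 0 ≤ M) (hK : M ≤ L * s₀) (hML : M ^ p < L)
    (hφ : ∀ x ∈ Icc 0 s₀, ∀ y ∈ Icc 0 s₀, |φ x - φ y| ≤ L * |x - y|) (h0 : φ s₀ = 0) :
    ∀ t ∈ Icc 0 T, ∀ x ∈ Icc 0 (s t), ∀ y ∈ Icc 0 x, e * (u t x - u t y) ≤ L * (x - y) := by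
  have hs0 : 0 < s₀ := h.init_s ▸ h.s_pos 0 ⟨le_rfl, h.T_pos.le⟩
  have hbar := h.barrier hL0 hM hK (fun x hx => by
    have := hφ x hx s₀ ⟨hs0.le, le_rfl⟩
    rw [h0, sub_zero, abs_sub_comm, abs_of_nonneg (sub_nonneg.2 hx.2)] at this
    exact (le_abs_self _).trans this)
  intro t ht x hx y hy
  by_contra hcon
  push Not at hcon
  let Q : Set (ℝ × (ℝ × ℝ)) := {q | q.1 ∈ Icc 0 T ∧ q.2.1 ∈ Icc 0 (s q.1) ∧ q.2.2 ∈ Icc 0 q.2.1}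
  have hQ : IsCompact Q := by
    have h1 := (region_compact h.s_cont h.s_pos).prod (isCompact_Icc (a := (0:ℝ)) (b := 1))
    have h2 := h1.image (f := fun q : (ℝ × ℝ) × ℝ => (q.1.1, q.1.2, q.2 * q.1.2)) (by fun_prop)
    convert h2 using 1
    ext ⟨t, x, y⟩
    simp only [Q, mem_ofPred_eq, mem_image, mem_prod, Prod.mk.injEq, Prod.exists]
    constructor
    · rintro ⟨ht, hx, hy⟩
      rcases hx.1.eq_or_lt with h' | h'
      · subst h'
        exact ⟨t, 0, 0, ⟨⟨ht, hx⟩, by simp⟩, rfl, rfl, by simpa using (le_antisymm hy.2 hy.1).symm⟩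
      · exact ⟨t, x, y / x, ⟨⟨ht, hx⟩, div_nonneg hy.1 h'.le, (div_le_one h').2 hy.2⟩, rfl, rfl,
          div_mul_cancel₀ _ h'.ne'⟩
    · rintro ⟨t', x', z, ⟨⟨ht, hx⟩, hz⟩, rfl, rfl, rfl⟩
      exact ⟨ht, hx, mul_nonneg hz.1 hx.1, by nlinarith [hz.2, hx.1]⟩
  have hWc : ContinuousOn
      (fun q : ℝ × (ℝ × ℝ) => e * (u q.1 q.2.1 - u q.1 q.2.2) - L * (q.2.1 - q.2.2)) Q := by
    have c1 : ContinuousOn (fun q : ℝ × (ℝ × ℝ) => u q.1 q.2.1) Q :=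
      h.u_cont.comp (f := fun q : ℝ × (ℝ × ℝ) => (q.1, q.2.1)) (by fun_prop)
        fun q hq => ⟨hq.1, hq.2.1⟩
    have c2 : ContinuousOn (fun q : ℝ × (ℝ × ℝ) => u q.1 q.2.2) Q :=
      h.u_cont.comp (f := fun q : ℝ × (ℝ × ℝ) => (q.1, q.2.2)) (by fun_prop)
        fun q hq => ⟨hq.1, hq.2.2.1, hq.2.2.2.trans hq.2.1.2⟩
    exact (continuousOn_const.mul (c1.sub c2)).sub (by fun_prop)
  obtain ⟨⟨t₀, x₀, y₀⟩, hq, hpos, hm⟩ := exp_max hQ hWc (q := (t, x, y)) ⟨ht, hx, hy⟩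
    (by simpa using hcon)
  obtain ⟨ht0, hx0, hy0⟩ := hq
  simp only at ht0 hx0 hy0 hpos hm
  have hys : y₀ ∈ Icc 0 (s t₀) := ⟨hy0.1, hy0.2.trans hx0.2⟩
  have hyx : y₀ < x₀ := by
    refine lt_of_le_of_ne hy0.2 fun h' => ?_
    subst h'; simp at hpos
  have htp : t₀ ∈ Ioc 0 T := by
    refine ⟨lt_of_le_of_ne ht0.1 fun h' => ?_, ht0.2⟩
    subst h'
    rw [h.init_s] at hx0 hys
    rw [h.init _ hx0, h.init _ hys] at hpos
    have := hφ _ hx0 _ hys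
    rw [abs_of_pos (sub_pos.2 hyx)] at this
    rcases he with rfl | rfl
    · linarith [le_abs_self (φ x₀ - φ y₀)]
    · linarith [neg_abs_le (φ x₀ - φ y₀)]
  have hxs : x₀ < s t₀ := by
    refine lt_of_le_of_ne hx0.2 fun h' => ?_
    subst h'
    have h1 := h.u_nonneg t₀ ht0 y₀ hys
    have h2 := hbar t₀ ht0 y₀ hys
    rw [h.bc_free t₀ htp] at hpos
    have := mul_nonneg hL0 (sub_nonneg.2 hy0.2)
    rcases he with rfl | rfl <;> linarith
  have hmy : ∀ z ∈ Icc 0 x₀, -e * u t₀ z + L * z ≤ -e * u t₀ y₀ + L * y₀ := fun z hz => by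
    have := hm (t₀, x₀, z) ⟨ht0, hx0, hz⟩
    simp only [sub_self, exp_zero] at this; linarith
  rcases hy0.1.eq_or_lt with h' | h'
  · subst h'
    have h1 := left_end (((h.d0 htp).const_mul (-e)).add ((hasDerivWithinAt_id _ _).const_mul L))
      (by filter_upwards [Ioo_mem_nhdsGT hyx] with z hz
          simpa using hmy z (Ioo_subset_Icc_self hz))
    have h2 := h.bc_zero t₀ htp
    have h3 := h.u_nonneg t₀ ht0 0 hys
    have h4 := rpow_le_rpow h3 (hM t₀ ht0) hp.le
    have h5 := rpow_nonneg h3 p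
    rcases he with rfl | rfl <;> linarith
  · have hxi : x₀ ∈ Ioo 0 (s t₀) := ⟨h'.trans hyx, hxs⟩
    have hyi : y₀ ∈ Ioo 0 (s t₀) := ⟨h', hyx.trans hxs⟩
    obtain ⟨a1, a2, a3⟩ := h.pk htp hxi
    obtain ⟨b1, b2, b3⟩ := h.pk htp hyi
    have k1 := dd_nonpos (f := fun z => -e * u t₀ z + L * z)
      (f' := fun z => -e * deriv (u t₀) z + L * 1)
      (b2.mono fun z hz => (hz.const_mul (-e)).add ((hasDerivAt_id z).const_mul L))
      ((b3.const_mul (-e)).add_const _) (by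
        filter_upwards [Ioo_mem_nhds h' hyx] with z hz using hmy z (Ioo_subset_Icc_self hz))
    have k2 := dd_nonpos (f := fun z => e * u t₀ z - L * z)
      (f' := fun z => e * deriv (u t₀) z - L * 1)
      (a2.mono fun z hz => (hz.const_mul e).sub ((hasDerivAt_id z).const_mul L))
      ((a3.const_mul e).sub_const _) (by
        filter_upwards [Ioo_mem_nhds hyx hxs] with z hz
        have := hm (t₀, z, y₀) ⟨ht0, ⟨(h'.trans hz.1).le, hz.2.le⟩, h'.le, hz.1.le⟩
        simp only [sub_self, exp_zero] at this; linarith)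
    have k3 := dt_ge (((a1.sub b1).const_mul e).sub_const (L * (x₀ - y₀))) (by
      filter_upwards [left_mem h.s_cont htp hxs] with τ hτ
      exact hm (τ, x₀, y₀) ⟨hτ.1, ⟨hx0.1, hτ.2.le⟩, hy0⟩)
    simp only [Pi.sub_apply] at k3
    linarith
end basics

def cl (a b x : ℝ) : ℝ := max a (min x b)

@[fun_prop] lemma cl_cont {X : Type*} [TopologicalSpace X] {f g k : X → ℝ} (hf : Continuous f)
    (hg : Continuous g) (hk : Continuous k) : Continuous fun x => cl (f x) (g x) (k x) :=
  hf.max (hk.min hg)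

lemma cl_mem {a b : ℝ} (h : a ≤ b) (x : ℝ) : cl a b x ∈ Icc a b :=
  ⟨le_max_left _ _, max_le h (min_le_right _ _)⟩

lemma cl_eq {a b x : ℝ} (h : x ∈ Icc a b) : cl a b x = x := by
  rw [cl, min_eq_left h.2, max_eq_right h.1]

/-- clamped `u + 1` -/
def Ef (T : ℝ) (s : ℝ → ℝ) (u : ℝ → ℝ → ℝ) (t y : ℝ) : ℝ :=
  u (cl 0 T t) (cl 0 (s (cl 0 T t)) y) + 1

def Hf (T : ℝ) (s : ℝ → ℝ) (u : ℝ → ℝ → ℝ) (t x : ℝ) : ℝ :=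
  ∫ y in (min x (s (cl 0 T t)))..(s (cl 0 T t)), Ef T s u t y

def Xf (r T : ℝ) (s : ℝ → ℝ) (u : ℝ → ℝ → ℝ) (t y : ℝ) : ℝ :=
  deriv (u (cl r T t)) (cl 0 (s (cl r T t)) y)

section hfun
variable {p s₀ T : ℝ} {φ s : ℝ → ℝ} {u : ℝ → ℝ → ℝ}

lemma IsSolOn.sc (h : IsSolOn p s₀ φ T s u) {r : ℝ} (h0 : 0 ≤ r) (hr : r ≤ T) :
    Continuous fun t => s (cl r T t) :=
  h.s_cont.comp_continuous (by fun_prop)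
    fun t => ⟨h0.trans (cl_mem hr t).1, (cl_mem hr t).2⟩

lemma IsSolOn.Ec (h : IsSolOn p s₀ φ T s u) : Continuous fun q : ℝ × ℝ => Ef T s u q.1 q.2 := by
  have h1 := h.sc le_rfl h.T_pos.le
  refine (h.u_cont.comp_continuous (f := fun q : ℝ × ℝ =>
    (cl 0 T q.1, cl 0 (s (cl 0 T q.1)) q.2)) ?_ fun q => ?_).add continuous_const
  · exact Continuous.prodMk (by fun_prop)
      (cl_cont continuous_const (h1.comp continuous_fst) continuous_snd)
  · have := cl_mem h.T_pos.le q.1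
    exact ⟨this, cl_mem (h.s_pos _ this).le _⟩

lemma IsSolOn.Xc (h : IsSolOn p s₀ φ T s u) {r : ℝ} (h0 : 0 < r) (hr : r ≤ T) :
    Continuous fun q : ℝ × ℝ => Xf r T s u q.1 q.2 := by
  have h1 := h.sc h0.le hr
  refine h.ux_cont.comp_continuous (f := fun q : ℝ × ℝ =>
    (cl r T q.1, cl 0 (s (cl r T q.1)) q.2)) ?_ fun q => ?_
  · exact Continuous.prodMk (by fun_prop)
      (cl_cont continuous_const (h1.comp continuous_fst) continuous_snd)
  · have := cl_mem hr q.1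
    exact ⟨⟨h0.trans_le this.1, this.2⟩, cl_mem (h.s_pos _ ⟨h0.le.trans this.1, this.2⟩).le _⟩

lemma Ef_eq {t y : ℝ} (ht : t ∈ Icc 0 T) (hy : y ∈ Icc 0 (s t)) : Ef T s u t y = u t y + 1 := by
  rw [Ef, cl_eq ht, cl_eq hy]

lemma Xf_eq {r t y : ℝ} (ht : t ∈ Icc r T) (hy : y ∈ Icc 0 (s t)) :
    Xf r T s u t y = deriv (u t) y := by
  rw [Xf, cl_eq ht, cl_eq hy]

lemma IsSolOn.Hc (h : IsSolOn p s₀ φ T s u) : Continuous fun q : ℝ × ℝ => Hf T s u q.1 q.2 := by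
  have h1 := h.sc le_rfl h.T_pos.le
  have h2 : Continuous (Function.uncurry fun (q : ℝ × ℝ) y => Ef T s u q.1 y) :=
    h.Ec.comp (f := fun z : (ℝ × ℝ) × ℝ => (z.1.1, z.2)) (by fun_prop)
  have h3 : ∀ q : ℝ × ℝ, Continuous (Ef T s u q.1) := fun q =>
    h.Ec.comp (f := fun y : ℝ => (q.1, y)) (by fun_prop)
  have a1 := intervalIntegral.continuous_parametric_intervalIntegral_of_continuous
    (μ := volume) (a₀ := 0) h2 (h1.comp continuous_fst)
  have a2 := intervalIntegral.continuous_parametric_intervalIntegral_of_continuous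
    (μ := volume) (a₀ := 0) h2 (continuous_snd.min (h1.comp continuous_fst))
  refine (a1.sub a2).congr fun q => ?_
  exact intervalIntegral.integral_interval_sub_left ((h3 q).intervalIntegrable _ _)
    ((h3 q).intervalIntegrable _ _)

lemma Hf_zero {t x : ℝ} (ht : t ∈ Icc 0 T) (hx : s t ≤ x) : Hf T s u t x = 0 := by
  rw [Hf, cl_eq ht, min_eq_right hx, intervalIntegral.integral_same]

lemma IsSolOn.Hsl (h : IsSolOn p s₀ φ T s u) {t x : ℝ} (ht : t ∈ Icc 0 T) (hx : x ≤ s t) :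
    HasDerivWithinAt (Hf T s u t) (-Ef T s u t x) (Iic x) x := by
  have h3 : Continuous (Ef T s u t) := h.Ec.comp (f := fun y : ℝ => (t, y)) (by fun_prop)
  have := (intervalIntegral.integral_hasDerivAt_left (h3.intervalIntegrable x (s t))
    h3.stronglyMeasurable.stronglyMeasurableAtFilter h3.continuousAt).hasDerivWithinAt (s := Iic x)
  refine this.congr (fun y hy => ?_) ?_ <;> rw [Hf, cl_eq ht, min_eq_left]
  exacts [(mem_Iic.1 hy).trans hx, hx]

lemma IsSolOn.Hsx (h : IsSolOn p s₀ φ T s u) {t x : ℝ} (ht : t ∈ Icc 0 T) (hx : x < s t) :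
    HasDerivAt (Hf T s u t) (-Ef T s u t x) x := by
  have h3 : Continuous (Ef T s u t) := h.Ec.comp (f := fun y : ℝ => (t, y)) (by fun_prop)
  have := (intervalIntegral.integral_hasDerivAt_left (h3.intervalIntegrable x (s t))
    h3.stronglyMeasurable.stronglyMeasurableAtFilter h3.continuousAt)
  refine this.congr_of_eventuallyEq ?_
  filter_upwards [Iio_mem_nhds hx] with y hy
  rw [Hf, cl_eq ht, min_eq_left (mem_Iio.1 hy).le]

lemma IsSolOn.rect (h : IsSolOn p s₀ φ T s u) {r t x b : ℝ} (hr : 0 < r) (hrt : r ≤ t) (ht : t ≤ T)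
    (hx : 0 < x) (hxb : x ≤ b) (hb : b < s r) :
    ∫ y in x..b, (u t y - u r y) = ∫ τ in r..t, (deriv (u τ) b - deriv (u τ) x) := by
  have hin : ∀ τ ∈ Icc r t, ∀ y ∈ Icc x b, τ ∈ Ioc 0 T ∧ y ∈ Ioo 0 (s τ) := fun τ hτ y hy =>
    have hτ' : τ ∈ Ioc 0 T := ⟨hr.trans_le hτ.1, hτ.2.trans ht⟩
    ⟨hτ', hx.trans_le hy.1, (hy.2.trans_lt hb).trans_le (h.mono ⟨hr.le, hrt.trans ht⟩
      (Ioc_subset_Icc_self hτ') hτ.1)⟩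
  have hc : ContinuousOn (fun q : ℝ × ℝ => deriv (deriv (u q.1)) q.2) (Icc r t ×ˢ Icc x b) :=
    h.uxx_cont.mono fun q hq => hin _ hq.1 _ hq.2
  have e1 : ∀ y ∈ uIcc x b, u t y - u r y = ∫ τ in r..t, deriv (deriv (u τ)) y := fun y hy => by
    rw [uIcc_of_le hxb] at hy
    refine (intervalIntegral.integral_eq_sub_of_hasDerivAt (f := fun τ => u τ y) ?_ ?_).symm
    · intro τ hτ; rw [uIcc_of_le hrt] at hτ
      exact (h.pk (hin τ hτ y hy).1 (hin τ hτ y hy).2).1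
    · refine ContinuousOn.intervalIntegrable ?_
      rw [uIcc_of_le hrt]
      exact hc.comp (f := fun τ => (τ, y)) (by fun_prop) fun τ hτ => ⟨hτ, hy⟩
  have e2 : ∀ τ ∈ uIcc r t, deriv (u τ) b - deriv (u τ) x = ∫ y in x..b, deriv (deriv (u τ)) y :=
      fun τ hτ => by
    rw [uIcc_of_le hrt] at hτ
    refine (intervalIntegral.integral_eq_sub_of_hasDerivAt (f := deriv (u τ)) ?_ ?_).symm
    · intro y hy; rw [uIcc_of_le hxb] at hy
      exact (h.pk (hin τ hτ y hy).1 (hin τ hτ y hy).2).2.2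
    · refine ContinuousOn.intervalIntegrable ?_
      rw [uIcc_of_le hxb]
      exact hc.comp (f := fun y => (τ, y)) (by fun_prop) fun y hy => ⟨hτ, hy⟩
  rw [intervalIntegral.integral_congr e1, intervalIntegral.integral_congr e2,
    intervalIntegral_intervalIntegral_swap]
  rw [uIoc_of_le hrt, uIoc_of_le hxb]
  have hc' : ContinuousOn (fun q : ℝ × ℝ => deriv (deriv (u q.2)) q.1) (Icc x b ×ˢ Icc r t) :=
    hc.comp (f := fun q : ℝ × ℝ => (q.2, q.1)) (by fun_prop) fun q hq => ⟨hq.2, hq.1⟩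
  exact (hc'.integrableOn_compact (isCompact_Icc.prod isCompact_Icc) (μ := volume)).mono_set
    (prod_mono Ioc_subset_Icc_self Ioc_subset_Icc_self)

lemma IsSolOn.rect' (h : IsSolOn p s₀ φ T s u) {r t x : ℝ} (hr : 0 < r) (hrt : r ≤ t) (ht : t ≤ T)
    (hx : 0 < x) (hxb : x < s r) :
    ∫ y in x..(s r), (Ef T s u t y - Ef T s u r y) =
      ∫ τ in r..t, (Xf r T s u τ (s r) - Xf r T s u τ x) := by
  have hE : ∀ t, Continuous (Ef T s u t) := fun t =>
    h.Ec.comp (f := fun y : ℝ => (t, y)) (by fun_prop)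
  have hX := h.Xc hr (hrt.trans ht)
  have c1 : Continuous fun b => ∫ y in x..b, (Ef T s u t y - Ef T s u r y) :=
    intervalIntegral.continuous_primitive
      (fun a b => ((hE t).sub (hE r)).intervalIntegrable a b) x
  have c2 : Continuous fun b => ∫ τ in r..t, (Xf r T s u τ b - Xf r T s u τ x) := by
    refine intervalIntegral.continuous_parametric_intervalIntegral_of_continuous ?_ continuous_const
    exact (hX.comp (f := fun z : ℝ × ℝ => (z.2, z.1)) (by fun_prop)).sub
      (hX.comp (f := fun z : ℝ × ℝ => (z.2, x)) (by fun_prop))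
  have hrT : r ∈ Icc 0 T := ⟨hr.le, hrt.trans ht⟩
  have htT : t ∈ Icc 0 T := ⟨hr.le.trans hrt, ht⟩
  have hm : ∀ τ ∈ Icc r t, s r ≤ s τ := fun τ hτ => h.mono hrT ⟨hr.le.trans hτ.1, hτ.2.trans ht⟩ hτ.1
  have eq : EqOn (fun b => ∫ y in x..b, (Ef T s u t y - Ef T s u r y))
      (fun b => ∫ τ in r..t, (Xf r T s u τ b - Xf r T s u τ x)) (Ico x (s r)) := fun b hb => by
    have := h.rect hr hrt ht hx hb.1 hb.2
    refine Eq.trans ?_ (this.trans ?_)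
    · refine intervalIntegral.integral_congr fun y hy => ?_
      rw [uIcc_of_le hb.1] at hy
      have h1 : y ∈ Icc 0 (s r) := ⟨hx.le.trans hy.1, hy.2.trans hb.2.le⟩
      have h2 : y ∈ Icc 0 (s t) := ⟨h1.1, h1.2.trans (hm t ⟨hrt, le_rfl⟩)⟩
      simp only [Ef_eq hrT h1, Ef_eq htT h2]; ring
    · refine intervalIntegral.integral_congr fun τ hτ => ?_
      rw [uIcc_of_le hrt] at hτ
      have h1 := hm τ hτ
      have h2 : τ ∈ Icc r T := ⟨hτ.1, hτ.2.trans ht⟩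
      rw [Xf_eq h2 ⟨hx.le.trans hb.1, hb.2.le.trans h1⟩, Xf_eq h2 ⟨hx.le, hxb.le.trans h1⟩]
  have := eq.closure c1 c2
  rw [closure_Ico hxb.ne] at this
  exact this ⟨hxb.le, le_rfl⟩

lemma IsSolOn.Hright (h : IsSolOn p s₀ φ T s u) {r x : ℝ} (hr : 0 < r) (hrT : r < T)
    (hx : 0 < x) (hxs : x < s r) :
    HasDerivWithinAt (fun τ => Hf T s u τ x) (-deriv (u r) x) (Ici r) r := by
  have hE : ∀ t, Continuous (Ef T s u t) := fun t =>
    h.Ec.comp (f := fun y : ℝ => (t, y)) (by fun_prop)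
  have hX := h.Xc hr hrT.le
  have hrm : r ∈ Icc 0 T := ⟨hr.le, hrT.le⟩
  have hrm' : r ∈ Ioc 0 T := ⟨hr, hrT.le⟩
  have hsp := h.s_pos r hrm
  have d1 : HasDerivAt (fun t => ∫ τ in r..t, (Xf r T s u τ (s r) - Xf r T s u τ x))
      (Xf r T s u r (s r) - Xf r T s u r x) r := by
    have hc : Continuous fun τ => Xf r T s u τ (s r) - Xf r T s u τ x :=
      (hX.comp (f := fun z : ℝ => (z, s r)) (by fun_prop)).sub
      (hX.comp (f := fun z : ℝ => (z, x)) (by fun_prop))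
    exact intervalIntegral.integral_hasDerivAt_right (hc.intervalIntegrable _ _)
      hc.stronglyMeasurable.stronglyMeasurableAtFilter hc.continuousAt
  have d2 : HasDerivAt (fun t => ∫ y in (s r)..(s t), (Ef T s u t y - 1)) 0 r := by
    rw [hasDerivAt_iff_isLittleO]
    simp only [intervalIntegral.integral_same, sub_zero, smul_zero]
    have hO : (fun t => s t - s r) =O[𝓝 r] fun t => t - r :=
      (h.s_diff r hrm').hasDerivAt.isBigO_sub
    refine Asymptotics.IsLittleO.trans_isBigO ?_ hO
    rw [Asymptotics.isLittleO_iff]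
    intro ε hε
    have hlim : ∀ᶠ q : ℝ × ℝ in 𝓝 (r, s r), |Ef T s u q.1 q.2 - 1| < ε := by
      have c0 : Continuous fun q : ℝ × ℝ => |Ef T s u q.1 q.2 - 1| :=
        (h.Ec.sub continuous_const).abs
      refine c0.continuousAt.eventually (gt_mem_nhds ?_)
      simp only
      rw [Ef_eq hrm ⟨hsp.le, le_rfl⟩, h.bc_free r hrm']; simpa using hε
    obtain ⟨η, hη, hball⟩ := Metric.eventually_nhds_iff.1 hlim
    have hsc : ContinuousAt s r := (h.s_diff r hrm').continuousAt
    filter_upwards [Metric.ball_mem_nhds r hη, hsc.eventually (Metric.ball_mem_nhds (s r) hη)]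
      with t ht hst
    refine intervalIntegral.norm_integral_le_of_norm_le_const (f := fun y => Ef T s u t y - 1)
      (C := ε) (a := s r) (b := s t) fun y hy => ?_
    refine (hball (y := (t, y)) ?_).le
    rw [Prod.dist_eq]
    refine max_lt ht ?_
    rw [Real.dist_eq] at hst
    rw [Real.dist_eq]
    have := abs_sub_left_of_mem_uIcc (uIoc_subset_uIcc hy)
    linarith
  have d3 := (h.s_diff r hrm').hasDerivAt.sub_const (s r)
  have dd := ((d1.add d2).add d3).add_const (Hf T s u r x)
  have hval : Xf r T s u r (s r) - Xf r T s u r x + 0 + deriv s r = -deriv (u r) x := by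
    rw [Xf_eq ⟨le_rfl, hrT.le⟩ ⟨hsp.le, le_rfl⟩, Xf_eq ⟨le_rfl, hrT.le⟩ ⟨hx.le, hxs.le⟩,
      h.stefan r hrm']; ring
  rw [hval] at dd
  refine (dd.hasDerivWithinAt (s := Icc r T)).congr_of_mem ?_ ⟨le_rfl, hrT.le⟩ |>.mono_of_mem_nhdsWithin
    (Icc_mem_nhdsGE hrT)
  intro t ht
  have htm : t ∈ Icc 0 T := ⟨hr.le.trans ht.1, ht.2⟩
  have hst : s r ≤ s t := h.mono hrm htm ht.1
  simp only [Pi.add_apply]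
  rw [← h.rect' hr ht.1 ht.2 hx hxs, Hf, Hf, cl_eq hrm, cl_eq htm, min_eq_left hxs.le,
    min_eq_left (hxs.le.trans hst), intervalIntegral.integral_sub, intervalIntegral.integral_sub,
    ← intervalIntegral.integral_add_adjacent_intervals (b := s r)]
  · simp only [intervalIntegral.integral_const, smul_eq_mul, mul_one]; ring
  all_goals first | exact (hE _).intervalIntegrable _ _ | exact continuous_const.intervalIntegrable _ _

lemma IsSolOn.Hid (h : IsSolOn p s₀ φ T s u) {r t x : ℝ} (hr : 0 < r) (hrt : r ≤ t) (ht : t < T)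
    (hx : 0 < x) (hxs : x < s r) :
    Hf T s u t x = Hf T s u r x - ∫ τ in r..t, Xf r T s u τ x := by
  have hX := h.Xc hr (hrt.trans ht.le)
  have hc : Continuous fun τ => Xf r T s u τ x := hX.comp (f := fun z : ℝ => (z, x)) (by fun_prop)
  have := constant_of_has_deriv_right_zero (a := r) (b := t)
    (f := fun t => Hf T s u t x + ∫ τ in r..t, Xf r T s u τ x) ?_ ?_ t ⟨hrt, le_rfl⟩
  · simp only [intervalIntegral.integral_same] at this; linarith
  · refine (Continuous.add ?_ ?_).continuousOn
    · exact h.Hc.comp (f := fun t => (t, x)) (by fun_prop)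
    · exact intervalIntegral.continuous_primitive (fun a b => hc.intervalIntegrable a b) r
  · intro τ hτ
    have hτ0 : 0 < τ := hr.trans_le hτ.1
    have hτT : τ < T := hτ.2.trans ht
    have hxτ := hxs.trans_le (h.mono ⟨hr.le, (hrt.trans ht.le)⟩ ⟨hτ0.le, hτT.le⟩ hτ.1)
    have h1 := h.Hright hτ0 hτT hx hxτ
    have h2 := (intervalIntegral.integral_hasDerivAt_right (hc.intervalIntegrable r τ)
      hc.stronglyMeasurable.stronglyMeasurableAtFilter hc.continuousAt).hasDerivWithinAt (s := Ici τ)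
    have := h1.add h2
    rw [Xf_eq ⟨hτ.1, hτT.le⟩ ⟨hx.le, hxτ.le⟩, neg_add_cancel] at this
    exact this

lemma IsSolOn.Ht (h : IsSolOn p s₀ φ T s u) {t x : ℝ} (ht : t ∈ Ioo 0 T) (hx : x ∈ Ioo 0 (s t)) :
    HasDerivAt (fun τ => Hf T s u τ x) (-deriv (u t) x) t := by
  obtain ⟨r, ⟨h1, h2⟩, h3⟩ := ((left_mem h.s_cont (Ioo_subset_Ioc_self ht) hx.2).and
    (Ioo_mem_nhdsLT ht.1)).exists
  have hX := h.Xc h3.1 h1.2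
  have hc : Continuous fun τ => Xf r T s u τ x := hX.comp (f := fun z : ℝ => (z, x)) (by fun_prop)
  have hd := (intervalIntegral.integral_hasDerivAt_right (hc.intervalIntegrable r t)
      hc.stronglyMeasurable.stronglyMeasurableAtFilter hc.continuousAt).const_sub (Hf T s u r x)
  rw [Xf_eq ⟨h3.2.le, ht.2.le⟩ (Ioo_subset_Icc_self hx)] at hd
  refine hd.congr_of_eventuallyEq ?_
  filter_upwards [Ioo_mem_nhds h3.2 ht.2] with τ hτ
  exact h.Hid h3.1 hτ.1.le hτ.2 hx.1 h2

lemma IsSolOn.Hzero (h : IsSolOn p s₀ φ T s u) (hp : 0 < p) {t : ℝ} (ht : t ∈ Ico 0 T) :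
    Hf T s u t 0 = Hf T s u 0 0 + ∫ τ in 0..t, (u (cl 0 T τ) 0) ^ p := by
  have hu0 : Continuous fun τ => (u (cl 0 T τ) 0) ^ p := by
    refine Continuous.rpow_const ?_ fun _ => Or.inr hp.le
    refine h.u_cont.comp_continuous (f := fun τ => (cl 0 T τ, 0)) (by fun_prop) fun q => ?_
    have := cl_mem h.T_pos.le q
    exact ⟨this, le_rfl, (h.s_pos _ this).le⟩
  have key : ∀ r ∈ Ioc 0 t, Hf T s u t 0 - ∫ τ in 0..t, (u (cl 0 T τ) 0) ^ p =
      Hf T s u r 0 - ∫ τ in 0..r, (u (cl 0 T τ) 0) ^ p := by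
    intro r hr
    have hrT : r ∈ Icc 0 T := ⟨hr.1.le, hr.2.trans ht.2.le⟩
    have hX := h.Xc hr.1 (hr.2.trans ht.2.le)
    have c1 : Continuous fun x => Hf T s u t x := h.Hc.comp (f := fun x => (t, x)) (by fun_prop)
    have c2 : Continuous fun x => Hf T s u r x := h.Hc.comp (f := fun x => (r, x)) (by fun_prop)
    have c3 : Continuous fun x => ∫ τ in r..t, Xf r T s u τ x := by
      refine intervalIntegral.continuous_parametric_intervalIntegral_of_continuous ?_ continuous_const
      exact hX.comp (f := fun z : ℝ × ℝ => (z.2, z.1)) (by fun_prop)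
    have eq : EqOn (fun x => Hf T s u t x) (fun x => Hf T s u r x - ∫ τ in r..t, Xf r T s u τ x)
        (Ioo 0 (s r)) := fun x hx => h.Hid hr.1 hr.2 ht.2 hx.1 hx.2
    have e0 := eq.closure c1 (c2.sub c3)
    rw [closure_Ioo (h.s_pos r hrT).ne] at e0
    have e1 := e0 (x := 0) ⟨le_rfl, (h.s_pos r hrT).le⟩
    have e2 : ∫ τ in r..t, Xf r T s u τ 0 = - ∫ τ in r..t, (u (cl 0 T τ) 0) ^ p := by
      rw [← intervalIntegral.integral_neg]
      refine intervalIntegral.integral_congr fun τ hτ => ?_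
      rw [uIcc_of_le hr.2] at hτ
      have hτ1 : τ ∈ Ioc 0 T := ⟨hr.1.trans_le hτ.1, hτ.2.trans ht.2.le⟩
      have hτ2 := Ioc_subset_Icc_self hτ1
      rw [Xf_eq ⟨hτ.1, hτ1.2⟩ ⟨le_rfl, (h.s_pos τ hτ2).le⟩, cl_eq hτ2, ← h.bc_zero τ hτ1, neg_neg]
    have e3 := intervalIntegral.integral_add_adjacent_intervals
      (hu0.intervalIntegrable (μ := volume) 0 r) (hu0.intervalIntegrable r t)
    simp only at e1
    linarith
  rcases ht.1.eq_or_lt with h' | h'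
  · subst h'; simp
  have cF : Continuous fun r => Hf T s u r 0 - ∫ τ in 0..r, (u (cl 0 T τ) 0) ^ p :=
    (h.Hc.comp (f := fun x => (x, 0)) (by fun_prop)).sub
      (intervalIntegral.continuous_primitive (fun a b => hu0.intervalIntegrable a b) 0)
  have e4 := (EqOn.closure (s := Ioc 0 t) (fun r hr => (key r hr).symm) cF continuous_const)
  rw [closure_Ioc h'.ne] at e4
  have := e4 (x := 0) ⟨le_rfl, h'.le⟩
  simp only [intervalIntegral.integral_same] at this
  linarith
end hfun

lemma le_of_eps {a b c : ℝ} (h : ∀ ε > 0, a ≤ b + ε * c) : a ≤ b := by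
  refine ge_of_tendsto (x := 𝓝[>] (0:ℝ)) (f := fun ε => b + ε * c) ?_
    (by filter_upwards [self_mem_nhdsWithin] with ε hε using h ε hε)
  have : Continuous fun ε : ℝ => b + ε * c := by fun_prop
  simpa using (this.tendsto 0).mono_left nhdsWithin_le_nhds

section comparison
variable {p s₀ σ₀ T : ℝ} {φ ψ s σ : ℝ → ℝ} {u v : ℝ → ℝ → ℝ}

lemma IsSolOn.Ege (h : IsSolOn p s₀ φ T s u) (t x : ℝ) : 1 ≤ Ef T s u t x := by
  have h1 := cl_mem h.T_pos.le t
  have := h.u_nonneg _ h1 _ (cl_mem (h.s_pos _ h1).le x)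
  rw [Ef]; linarith

lemma IsSolOn.Eci (h : IsSolOn p s₀ φ T s u) (t a b : ℝ) :
    IntervalIntegrable (Ef T s u t) volume a b :=
  (h.Ec.comp (f := fun y : ℝ => (t, y)) (by fun_prop)).intervalIntegrable _ _

lemma IsSolOn.Hge (h : IsSolOn p s₀ φ T s u) (t x : ℝ) :
    s (cl 0 T t) - x ≤ Hf T s u t x ∧ 0 ≤ Hf T s u t x := by
  have hle := min_le_right x (s (cl 0 T t))
  have := intervalIntegral.integral_mono_on (f := fun _ => (1:ℝ)) (μ := volume) hle
    (by simp) (h.Eci t _ _) (fun y _ => h.Ege t y)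
  simp only [intervalIntegral.integral_const, smul_eq_mul, mul_one] at this
  rw [Hf]
  exact ⟨by linarith [min_le_left x (s (cl 0 T t))], by linarith⟩

lemma stepD (hp : 0 < p) (h : IsSolOn p s₀ φ T s u) (k : IsSolOn p σ₀ ψ T σ v) (h0 : s₀ ≤ σ₀)
    (hφψ : ∀ x ∈ Icc 0 s₀, φ x ≤ ψ x) {T' P l : ℝ} (hT : T' < T) (hP : 0 ≤ P) (hl : 0 < l)
    (hm : ∀ t ∈ Icc 0 T', u t 0 ^ p - v t 0 ^ p ≤ P * exp (l * t)) :
    ∀ t ∈ Icc 0 T', ∀ x, 0 ≤ x → Hf T s u t x - Hf T σ v t x ≤ P / l * exp (l * t) := by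
  have h00 : (0:ℝ) ∈ Icc 0 T := ⟨le_rfl, h.T_pos.le⟩
  have hPl : 0 ≤ P / l := by positivity
  have D0 : ∀ x, 0 ≤ x → Hf T s u 0 x - Hf T σ v 0 x ≤ 0 := by
    intro x hx
    have a1 := k.Hge 0 x
    rcases le_or_gt s₀ x with hc | hc
    · rw [Hf_zero h00 (by rw [h.init_s]; exact hc)]; linarith [a1.2]
    rw [Hf, Hf, cl_eq h00, h.init_s, k.init_s, min_eq_left hc.le, min_eq_left (hc.le.trans h0),
      ← intervalIntegral.integral_add_adjacent_intervals (k.Eci 0 x s₀) (k.Eci 0 s₀ σ₀)]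
    have b1 := intervalIntegral.integral_nonneg (μ := volume) h0
      (f := Ef T σ v 0) fun y _ => by linarith [k.Ege 0 y]
    have b2 := intervalIntegral.integral_mono_on (μ := volume) hc.le (h.Eci 0 x s₀) (k.Eci 0 x s₀)
      (fun y hy => by
        have y1 : y ∈ Icc 0 s₀ := ⟨hx.trans hy.1, hy.2⟩
        have y2 : y ∈ Icc 0 σ₀ := ⟨y1.1, hy.2.trans h0⟩
        rw [Ef_eq h00 (by rw [h.init_s]; exact y1), Ef_eq h00 (by rw [k.init_s]; exact y2),
          h.init y y1, k.init y y2]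
        linarith [hφψ y y1])
    linarith
  have Dx0 : ∀ t ∈ Icc 0 T', Hf T s u t 0 - Hf T σ v t 0 ≤ P / l * exp (l * t) := by
    intro t ht
    have htT : t ∈ Ico 0 T := ⟨ht.1, ht.2.trans_lt hT⟩
    rw [h.Hzero hp htT, k.Hzero hp htT]
    have hi : ∀ {s₀ φ s u}, IsSolOn p s₀ φ T s u →
        IntervalIntegrable (fun τ => (u (cl 0 T τ) 0) ^ p) volume 0 t := fun {s₀ φ s u} h => by
      refine Continuous.intervalIntegrable (Continuous.rpow_const ?_ fun _ => Or.inr hp.le) _ _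
      refine h.u_cont.comp_continuous (f := fun τ => (cl 0 T τ, 0)) (by fun_prop) fun q => ?_
      have := cl_mem h.T_pos.le q
      exact ⟨this, le_rfl, (h.s_pos _ this).le⟩
    have e1 := intervalIntegral.integral_mono_on (μ := volume) ht.1 ((hi h).sub (hi k))
      (g := fun τ => P * exp (l * τ)) (Continuous.intervalIntegrable (by fun_prop) _ _)
      (fun τ hτ => by
        rw [cl_eq ⟨hτ.1, hτ.2.trans htT.2.le⟩]; exact hm τ ⟨hτ.1, hτ.2.trans ht.2⟩)
    rw [intervalIntegral.integral_sub (hi h) (hi k)] at e1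
    have e2 : ∫ τ in (0:ℝ)..t, P * exp (l * τ) = P / l * exp (l * t) - P / l * exp (l * 0) := by
      refine intervalIntegral.integral_eq_sub_of_hasDerivAt (f := fun τ => P / l * exp (l * τ))
        (fun x _ => ?_) (Continuous.intervalIntegrable (by fun_prop) _ _)
      have h3 := (((hasDerivAt_id x).const_mul l).exp).const_mul (P / l)
      have h4 : P / l * (exp (l * x) * (l * 1)) = P * exp (l * x) := by field_simp
      exact h4 ▸ h3
    have e3 := D0 0 le_rfl
    rw [mul_zero, exp_zero] at e2
    rw [e2] at e1
    linarith
  intro t ht x hx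
  refine le_of_eps (c := x) fun ε hε => ?_
  set B := max x (s T)
  by_contra hcon
  push Not at hcon
  obtain ⟨⟨t₀, x₀⟩, hq, hpos, hmax⟩ := exp_max (Q := Icc 0 T' ×ˢ Icc 0 B)
    (isCompact_Icc.prod isCompact_Icc)
    (W := fun q : ℝ × ℝ => Hf T s u q.1 q.2 - Hf T σ v q.1 q.2 - P / l * exp (l * q.1) - ε * q.2)
    (((h.Hc.sub k.Hc).sub (by fun_prop)).sub (by fun_prop)).continuousOn
    (q := (t, x)) ⟨ht, hx, le_max_left _ _⟩ (by simp only; linarith)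
  simp only [mem_prod] at hq hpos hmax
  obtain ⟨ht0, hx0⟩ := hq
  have hE0 : 0 ≤ P / l * exp (l * t₀) := by positivity
  have htp : 0 < t₀ := by
    refine lt_of_le_of_ne ht0.1 fun h => ?_
    subst h
    have := D0 x₀ hx0.1
    nlinarith [hx0.1]
  have hxp : 0 < x₀ := by
    refine lt_of_le_of_ne hx0.1 fun h => ?_
    subst h
    have := Dx0 t₀ ht0
    linarith
  have htI : t₀ ∈ Icc 0 T := ⟨htp.le, ht0.2.trans hT.le⟩
  have htI' : t₀ ∈ Ioc 0 T := ⟨htp, ht0.2.trans hT.le⟩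
  have htI'' : t₀ ∈ Ioo 0 T := ⟨htp, ht0.2.trans_lt hT⟩
  have hxs : x₀ < s t₀ := by
    by_contra hh
    push Not at hh
    rw [Hf_zero htI hh] at hpos
    have := (k.Hge t₀ x₀).2
    nlinarith
  have hmx : ∀ y ∈ Icc 0 B, Hf T s u t₀ y - Hf T σ v t₀ y - P / l * exp (l * t₀) - ε * y ≤
      Hf T s u t₀ x₀ - Hf T σ v t₀ x₀ - P / l * exp (l * t₀) - ε * x₀ := fun y hy => by
    simpa using hmax (t₀, y) ⟨ht0, hy⟩
  have hev : ∀ᶠ y in 𝓝[<] x₀, y ∈ Icc 0 B := by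
    filter_upwards [Ioo_mem_nhdsLT hxp] with y hy using ⟨hy.1.le, hy.2.le.trans hx0.2⟩
  have hEu : Ef T s u t₀ x₀ = u t₀ x₀ + 1 := Ef_eq htI ⟨hxp.le, hxs.le⟩
  have hun := h.u_nonneg t₀ htI x₀ ⟨hxp.le, hxs.le⟩
  have hlin : HasDerivAt (fun y => ε * y) ε x₀ := by
    simpa using (hasDerivAt_id x₀).const_mul ε
  rcases lt_trichotomy x₀ (σ t₀) with hc | hc | hc
  · have hEv : Ef T σ v t₀ x₀ = v t₀ x₀ + 1 := Ef_eq htI ⟨hxp.le, hc.le⟩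
    have e1 : HasDerivAt (fun y => Hf T s u t₀ y - Hf T σ v t₀ y - P / l * exp (l * t₀) - ε * y)
      (-Ef T s u t₀ x₀ - -Ef T σ v t₀ x₀ - ε) x₀ :=
      (((h.Hsx htI hxs).sub (k.Hsx htI hc)).sub_const _).sub hlin
    have e0 := right_end e1.hasDerivWithinAt (by
      filter_upwards [hev] with y hy using hmx y hy)
    have pu := (h.pk htI' ⟨hxp, hxs⟩)
    have pv := (k.pk htI' ⟨hxp, hc⟩)
    have ht' : HasDerivAt (fun τ => Hf T s u τ x₀ - Hf T σ v τ x₀ - P / l * exp (l * τ) - ε * x₀)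
        (-deriv (u t₀) x₀ - -deriv (v t₀) x₀ - P / l * (exp (l * t₀) * (l * 1))) t₀ :=
      (((h.Ht htI'' ⟨hxp, hxs⟩).sub (k.Ht htI'' ⟨hxp, hc⟩)).sub
        ((((hasDerivAt_id t₀).const_mul l).exp).const_mul (P / l))).sub_const _
    have f1 := dt_ge ht' (by
      filter_upwards [Ioo_mem_nhdsLT htp] with τ hτ
      exact hmax (τ, x₀) ⟨⟨hτ.1.le, hτ.2.le.trans ht0.2⟩, hx0⟩)
    have hP2 : 0 ≤ P / l * (exp (l * t₀) * (l * 1)) := by positivity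
    rw [hEu, hEv] at e0
    have hxe : x₀ < B := (hxs.trans_le (h.mono htI ⟨h.T_pos.le, le_rfl⟩ htI.2)).trans_le
      (le_max_right _ _)
    have f2 := dd_nonpos (f := fun y => Hf T s u t₀ y - Hf T σ v t₀ y - P / l * exp (l * t₀) - ε * y)
      (f' := fun y => -(u t₀ y + 1) - -(v t₀ y + 1) - ε) (x := x₀)
      (c := -deriv (u t₀) x₀ - -deriv (v t₀) x₀) (by
        filter_upwards [Ioo_mem_nhds hxp hxs, Ioo_mem_nhds hxp hc] with y hy1 hy2
        have := (((h.Hsx htI hy1.2).sub (k.Hsx htI hy2.2)).sub_const (P / l * exp (l * t₀))).sub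
          ((hasDerivAt_id y).const_mul ε)
        rw [Ef_eq htI (Ioo_subset_Icc_self hy1), Ef_eq htI (Ioo_subset_Icc_self hy2), mul_one] at this
        exact this)
      (by
        exact ((pu.2.1.self_of_nhds.add_const 1).neg.sub
          (pv.2.1.self_of_nhds.add_const 1).neg).sub_const ε)
      (by filter_upwards [Ioo_mem_nhds hxp hxe] with y hy using hmx y ⟨hy.1.le, hy.2.le⟩)
    linarith
  · subst hc
    have e1 := (((h.Hsl htI hxs.le).sub (k.Hsl htI le_rfl)).sub_const (P / l * exp (l * t₀))).sub
      (hlin.hasDerivWithinAt (s := Iic (σ t₀)))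
    have e0 := right_end e1 (by filter_upwards [hev] with y hy using hmx y hy)
    rw [hEu, Ef_eq htI ⟨hxp.le, le_rfl⟩, k.bc_free t₀ htI'] at e0
    linarith
  · have hz : HasDerivAt (Hf T σ v t₀) 0 x₀ := by
      refine (hasDerivAt_const x₀ (0:ℝ)).congr_of_eventuallyEq ?_
      filter_upwards [Ioi_mem_nhds hc] with y hy using Hf_zero htI (mem_Ioi.1 hy).le
    have e1 := (((h.Hsl htI hxs.le).sub (hz.hasDerivWithinAt (s := Iic x₀))).sub_const
      (P / l * exp (l * t₀))).sub (hlin.hasDerivWithinAt (s := Iic x₀))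
    have e0 := right_end e1 (by filter_upwards [hev] with y hy using hmx y hy)
    rw [hEu] at e0
    linarith

lemma pow_lip (hp : 1 < p) {M a b : ℝ} (ha : a ∈ Icc 0 M) (hb : b ∈ Icc 0 M) :
    |a ^ p - b ^ p| ≤ p * M ^ (p - 1) * |a - b| := by
  have := (convex_Icc 0 M).norm_image_sub_le_of_norm_hasDerivWithin_le (f := fun x : ℝ => x ^ p)
    (f' := fun x => p * x ^ (p - 1)) (C := p * M ^ (p - 1)) (x := b) (y := a)
    (fun x hx => (Real.hasDerivAt_rpow_const (Or.inr hp.le)).hasDerivWithinAt)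
    (fun x hx => by
      have := Real.rpow_nonneg hx.1 (p - 1)
      rw [Real.norm_eq_abs, abs_of_nonneg (by positivity)]
      have := Real.rpow_le_rpow hx.1 hx.2 (by linarith : 0 ≤ p - 1)
      gcongr) hb ha
  exact this

lemma pow_pos_lip (hp : 1 < p) {M a b : ℝ} (ha : a ∈ Icc 0 M) (hb : b ∈ Icc 0 M) :
    a ^ p - b ^ p ≤ p * M ^ (p - 1) * max (a - b) 0 := by
  rcases le_total a b with hc | hc
  · have := Real.rpow_le_rpow ha.1 hc (by linarith : 0 ≤ p)
    rw [max_eq_right (by linarith)]; linarith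
  · have := pow_lip hp ha hb
    rw [max_eq_left (by linarith)]
    rw [abs_of_nonneg (sub_nonneg.2 hc)] at this
    exact (le_abs_self _).trans this

lemma IsSolOn.mono_T (h : IsSolOn p s₀ φ T s u) {T' : ℝ} (h0 : 0 < T') (hT : T' ≤ T) :
    IsSolOn p s₀ φ T' s u where
  T_pos := h0
  s_cont := h.s_cont.mono (Icc_subset_Icc_right hT)
  s_diff t ht := h.s_diff t (Ioc_subset_Ioc_right hT ht)
  s_deriv_cont := h.s_deriv_cont.mono (Ioc_subset_Ioc_right hT)
  s_pos t ht := h.s_pos t (Icc_subset_Icc_right hT ht)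
  ut_diff t ht := h.ut_diff t (Ioc_subset_Ioc_right hT ht)
  ux_diff t ht := h.ux_diff t (Ioc_subset_Ioc_right hT ht)
  uxx_diff t ht := h.uxx_diff t (Ioc_subset_Ioc_right hT ht)
  ut_cont := h.ut_cont.mono fun q hq => ⟨Ioc_subset_Ioc_right hT hq.1, hq.2⟩
  uxx_cont := h.uxx_cont.mono fun q hq => ⟨Ioc_subset_Ioc_right hT hq.1, hq.2⟩
  ux_cont := h.ux_cont.mono fun q hq => ⟨Ioc_subset_Ioc_right hT hq.1, hq.2⟩
  u_cont := h.u_cont.mono fun q hq => ⟨Icc_subset_Icc_right hT hq.1, hq.2⟩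
  u_nonneg t ht := h.u_nonneg t (Icc_subset_Icc_right hT ht)
  heat t ht := h.heat t (Ioc_subset_Ioc_right hT ht)
  bc_zero t ht := h.bc_zero t (Ioc_subset_Ioc_right hT ht)
  bc_free t ht := h.bc_free t (Ioc_subset_Ioc_right hT ht)
  stefan t ht := h.stefan t (Ioc_subset_Ioc_right hT ht)
  init := h.init
  init_s := h.init_s

lemma IsSolOn.bdd (h : IsSolOn p s₀ φ T s u) :
    ∃ M, 0 ≤ M ∧ ∀ t ∈ Icc 0 T, ∀ x ∈ Icc 0 (s t), u t x ≤ M := by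
  obtain ⟨M, hM⟩ := (region_compact h.s_cont h.s_pos).bddAbove_image h.u_cont
  refine ⟨max M 0, le_max_right _ _, fun t ht x hx => ?_⟩
  exact (hM ⟨(t, x), ⟨ht, hx⟩, rfl⟩ : u t x ≤ M).trans
    (le_max_left _ _)

theorem comparison (hp : 1 < p) (h : IsSolOn p s₀ φ T s u) (k : IsSolOn p σ₀ ψ T σ v)
    (h0 : s₀ ≤ σ₀) (hφψ : ∀ x ∈ Icc 0 s₀, φ x ≤ ψ x) {L : ℝ} (hL0 : 0 ≤ L)
    (hL : ∀ x ∈ Icc 0 s₀, φ x ≤ L * (s₀ - x)) {T' : ℝ} (hT0 : 0 < T') (hT : T' < T) :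
    ∀ t ∈ Icc 0 T', s t ≤ σ t ∧ ∀ x ∈ Icc 0 (s t), u t x ≤ v t x := by
  have hp0 : 0 < p := by linarith
  have hs0 : 0 < s₀ := h.init_s ▸ h.s_pos 0 ⟨le_rfl, h.T_pos.le⟩
  obtain ⟨M1, hM1, hu⟩ := h.bdd
  obtain ⟨M2, hM2, hv⟩ := k.bdd
  have z1 : ∀ t ∈ Icc 0 T, (0:ℝ) ∈ Icc 0 (s t) := fun t ht => ⟨le_rfl, (h.s_pos t ht).le⟩
  have z2 : ∀ t ∈ Icc 0 T, (0:ℝ) ∈ Icc 0 (σ t) := fun t ht => ⟨le_rfl, (k.s_pos t ht).le⟩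
  set M := M1 + M2
  set C := p * M ^ (p - 1)
  have hC : 0 ≤ C := mul_nonneg hp0.le (Real.rpow_nonneg (by positivity) _)
  set K := L + M1 / s₀
  have hK : 0 ≤ K := by positivity
  have hbar := h.barrier (M := M1) (K := K) hK (fun t ht => hu t ht 0 (z1 t ht))
    (by simp only [K, add_mul]; rw [div_mul_cancel₀ _ hs0.ne']; nlinarith)
    (fun x hx => (hL x hx).trans (by
      have : 0 ≤ s₀ - x := by linarith [hx.2]
      have : 0 ≤ M1 / s₀ := by positivity
      gcongr
      simp only [K]; linarith))
  have hsub : Icc 0 T' ⊆ Icc 0 T := Icc_subset_Icc_right hT.le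
  set μ := 2 * (K + 1) * C + 1
  have hμ : 1 ≤ μ := by simp only [μ]; nlinarith [mul_nonneg (add_nonneg hK zero_le_one) hC]
  set l := μ ^ 2
  have hl : 0 < l := by positivity
  have hlμ : μ ≤ l := by simp only [l]; nlinarith
  -- sup
  have cu : ContinuousOn (fun t => exp (-(l * t)) * max (u t 0 - v t 0) 0) (Icc 0 T') := by
    refine ContinuousOn.mul (by fun_prop) (ContinuousOn.sup (ContinuousOn.sub ?_ ?_) continuousOn_const)
    · exact h.u_cont.comp (f := fun t => (t, (0:ℝ))) (by fun_prop) fun t ht =>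
        ⟨hsub ht, z1 t (hsub ht)⟩
    · exact k.u_cont.comp (f := fun t => (t, (0:ℝ))) (by fun_prop) fun t ht =>
        ⟨hsub ht, z2 t (hsub ht)⟩
  obtain ⟨t₁, ht₁, hmax⟩ := isCompact_Icc.exists_isMaxOn ⟨0, le_rfl, hT0.le⟩ cu
  set m := exp (-(l * t₁)) * max (u t₁ 0 - v t₁ 0) 0 with hmdef
  have hm0 : 0 ≤ m := mul_nonneg (exp_pos _).le (le_max_right _ _)
  have hm : ∀ t ∈ Icc 0 T', max (u t 0 - v t 0) 0 ≤ m * exp (l * t) := fun t ht => by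
    have : exp (-(l * t)) * max (u t 0 - v t 0) 0 ≤ m := hmax ht
    rw [exp_neg, inv_mul_le_iff₀ (exp_pos _)] at this
    linarith
  have hpm : ∀ t ∈ Icc 0 T', u t 0 ^ p - v t 0 ^ p ≤ (C * m) * exp (l * t) := fun t ht => by
    have ht' := hsub ht
    have := pow_pos_lip hp (M := M) (a := u t 0) (b := v t 0)
      ⟨h.u_nonneg t ht' 0 (z1 t ht'), by linarith [hu t ht' 0 (z1 t ht')]⟩
      ⟨k.u_nonneg t ht' 0 (z2 t ht'), by linarith [hv t ht' 0 (z2 t ht')]⟩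
    refine this.trans ?_
    have := mul_le_mul_of_nonneg_left (hm t ht) hC
    linarith
  have hD := stepD hp0 h k h0 hφψ hT (mul_nonneg hC hm0) hl hpm
  have hsσ : ∀ t ∈ Icc 0 T', s t - σ t ≤ C * m / l * exp (l * t) := fun t ht => by
    have ht' := hsub ht
    have h1 := hD t ht (σ t) (k.s_pos t ht').le
    have h2 := (h.Hge t (σ t)).1
    rw [cl_eq ht'] at h2
    rw [Hf_zero ht' le_rfl] at h1
    linarith
  have key : ∀ t ∈ Icc 0 T', ∀ x ∈ Icc 0 (min (s t) (σ t)), u t x - v t x ≤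
      exp (l * t) * (m * (K * C / l + C / μ * exp (-(μ * x)))) := by
    intro t ht x hx
    refine le_of_eps (c := exp (t - x)) fun ε hε => ?_
    have := maxpr (b := fun t => min (s t) (σ t)) (T := T') (W := fun t x => u t x - v t x -
      exp (l * t) * (m * (K * C / l + C / μ * exp (-(μ * x)))) - ε * exp (t - x))
      ((h.s_cont.mono hsub).inf (k.s_cont.mono hsub))
      (fun t ht => lt_min (h.s_pos t (hsub ht)) (k.s_pos t (hsub ht))) ?_ ?_ ?_ ?_ ?_ t ht x hx
    · linarith
    · refine ((ContinuousOn.sub ?_ ?_).sub (by fun_prop)).sub (by fun_prop)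
      · exact h.u_cont.mono fun q hq => ⟨hsub hq.1, hq.2.1, hq.2.2.trans (min_le_left _ _)⟩
      · exact k.u_cont.mono fun q hq => ⟨hsub hq.1, hq.2.1, hq.2.2.trans (min_le_right _ _)⟩
    · intro y hy
      rw [h.init_s, k.init_s, min_eq_left h0] at hy
      rw [h.init y hy, k.init y ⟨hy.1, hy.2.trans h0⟩]
      have : 0 ≤ exp (l * 0) * (m * (K * C / l + C / μ * exp (-(μ * y)))) := by positivity
      have : 0 ≤ ε * exp (0 - y) := by positivity
      linarith [hφψ y hy]
    · intro τ hτ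
      have hτ' := hsub (Ioc_subset_Icc_self hτ)
      have hτ1 : τ ∈ Ioc 0 T := ⟨hτ.1, hτ'.2⟩
      have b1 : 0 ≤ ε * exp (τ - min (s τ) (σ τ)) := by positivity
      have b2 : 0 ≤ exp (l * τ) * (m * (C / μ * exp (-(μ * min (s τ) (σ τ))))) := by positivity
      have b3 : 0 ≤ exp (l * τ) * (m * (K * C / l)) := by positivity
      have b4 : u τ (min (s τ) (σ τ)) - v τ (min (s τ) (σ τ)) ≤ exp (l * τ) * (m * (K * C / l)) := by
        rcases le_total (s τ) (σ τ) with hc | hc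
        · rw [min_eq_left hc, h.bc_free τ hτ1]
          linarith [k.u_nonneg τ hτ' (s τ) ⟨(h.s_pos τ hτ').le, hc⟩]
        · rw [min_eq_right hc, k.bc_free τ hτ1]
          have c1 := hbar τ hτ' (σ τ) ⟨(k.s_pos τ hτ').le, hc⟩
          have c2 := mul_le_mul_of_nonneg_left (hsσ τ (Ioc_subset_Icc_self hτ)) hK
          have c3 : K * (C * m / l * exp (l * τ)) = exp (l * τ) * (m * (K * C / l)) := by ring
          linarith
      linarith
    · intro τ hτ _
      have hτ' := hsub (Ioc_subset_Icc_self hτ)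
      have hτ1 : τ ∈ Ioc 0 T := ⟨hτ.1, hτ'.2⟩
      refine ⟨_, ?_, (((h.d0 hτ1).sub (k.d0 hτ1)).sub (((((((hasDerivAt_id (0:ℝ)).const_mul μ).neg.exp).const_mul
        (C / μ)).const_add (K * C / l)).const_mul m).const_mul (exp (l * τ))).hasDerivWithinAt).sub
        ((((hasDerivAt_id (0:ℝ)).const_sub τ).exp).const_mul ε).hasDerivWithinAt⟩
      have b0 := h.bc_zero τ hτ1
      have b1 := k.bc_zero τ hτ1
      have b2 := hpm τ (Ioc_subset_Icc_self hτ)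
      have b3 : 0 < ε * exp (τ - 0) := by positivity
      have b4 : exp (l * τ) * (m * (C / μ * μ)) = C * m * exp (l * τ) := by
        rw [div_mul_cancel₀ _ (by positivity)]; ring
      simp only [Pi.neg_apply, id, mul_zero, neg_zero, exp_zero, mul_one, one_mul, mul_neg] at b3 ⊢
      linarith
    · intro τ hτ y hy
      have hτ' := hsub (Ioc_subset_Icc_self hτ)
      have hτ1 : τ ∈ Ioc 0 T := ⟨hτ.1, hτ'.2⟩
      obtain ⟨p1, p2, p3⟩ := h.pk hτ1 ⟨hy.1, hy.2.trans_le (min_le_left _ _)⟩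
      obtain ⟨q1, q2, q3⟩ := k.pk hτ1 ⟨hy.1, hy.2.trans_le (min_le_right _ _)⟩
      refine ⟨_, _, _, ((p1.sub q1).sub ((((hasDerivAt_id τ).const_mul l).exp).mul_const
        (m * (K * C / l + C / μ * exp (-(μ * y)))))).sub
        ((((hasDerivAt_id τ).sub_const y).exp).const_mul ε), ?_, ((p3.sub q3).sub
        (((((((hasDerivAt_id y).const_mul μ).neg.exp).mul_const
        (-(μ * 1))).const_mul (C / μ)).const_mul m).const_mul (exp (l * τ)))).sub
        (((((hasDerivAt_id y).const_sub τ).exp).mul_const (-1)).const_mul ε), ?_⟩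
      · filter_upwards [p2, q2] with z hz1 hz2
        exact ((hz1.sub hz2).sub (((((((hasDerivAt_id z).const_mul μ).neg.exp).const_mul
          (C / μ)).const_add (K * C / l)).const_mul m).const_mul (exp (l * τ)))).sub
          ((((hasDerivAt_id z).const_sub τ).exp).const_mul ε)
      · have b4 : exp (l * τ) * l * (m * (K * C / l + C / μ * exp (-(μ * y)))) =
            exp (l * τ) * (m * (K * C)) + exp (l * τ) * (m * (C / μ * (exp (-(μ * y)) * μ * μ))) := by
          have : μ ≠ 0 := by positivity
          simp only [l]
          field_simp
        have b5 : 0 ≤ exp (l * τ) * (m * (K * C)) := by positivity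
        simp only [Pi.neg_apply, id, mul_one, one_mul, mul_neg, neg_mul, neg_neg]
        linarith
  have hm' : m = 0 := by
    by_contra hne
    have hmp : 0 < m := lt_of_le_of_ne hm0 (Ne.symm hne)
    have ht' := hsub ht₁
    have e1 := key t₁ ht₁ 0 ⟨le_rfl, (lt_min (h.s_pos _ ht') (k.s_pos _ ht')).le⟩
    have e2 : 0 < max (u t₁ 0 - v t₁ 0) 0 := by
      by_contra hh
      have : max (u t₁ 0 - v t₁ 0) 0 = 0 := le_antisymm (not_lt.1 hh) (le_max_right _ _)
      rw [this, mul_zero] at hmdef; exact hne hmdef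
    have e3 : max (u t₁ 0 - v t₁ 0) 0 = u t₁ 0 - v t₁ 0 := by
      rcases lt_max_iff.1 e2 with h | h
      · exact max_eq_left h.le
      · exact absurd h (lt_irrefl _)
    rw [e3] at hmdef
    have e4 : u t₁ 0 - v t₁ 0 = exp (l * t₁) * m := by
      rw [hmdef, ← mul_assoc, ← exp_add]; simp
    rw [e4, mul_zero, neg_zero, exp_zero, mul_one] at e1
    have e5 := le_of_mul_le_mul_left e1 (exp_pos _)
    have e6 : K * C / l ≤ K * C / μ := by gcongr
    have e7 : K * C / μ + C / μ < 1 := by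
      rw [← add_div, div_lt_one (by positivity)]
      simp only [μ]; nlinarith [mul_nonneg hK hC]
    nlinarith
  intro t ht
  have hle : s t ≤ σ t := by
    have := hsσ t ht
    rw [hm'] at this; simp at this; linarith
  refine ⟨hle, fun x hx => ?_⟩
  have := key t ht x ⟨hx.1, le_min hx.2 (hx.2.trans hle)⟩
  rw [hm'] at this; simp at this; linarith
end comparison

/-- singular kernel weight -/
def kap (r : ℝ) : ℝ := (√(4 * π * r))⁻¹

def G (n : ℕ) (r d : ℝ) : ℝ := (r⁻¹) ^ n * (kap r * exp (-(d ^ 2 / (4 * r))))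

def K0 (r d : ℝ) : ℝ := G 0 r d
def K1 (r d : ℝ) : ℝ := -(d / 2) * G 1 r d
def K2 (r d : ℝ) : ℝ := d ^ 2 / 4 * G 2 r d - 1 / 2 * G 1 r d

lemma kap_np {r : ℝ} (h : r ≤ 0) : kap r = 0 := by
  rw [kap, Real.sqrt_eq_zero_of_nonpos (by nlinarith [pi_pos]), inv_zero]

lemma kap_nonneg (r : ℝ) : 0 ≤ kap r := by rw [kap]; positivity

lemma kap_pos {r : ℝ} (h : 0 < r) : 0 < kap r := by rw [kap]; positivity

lemma G_np {n : ℕ} {r d : ℝ} (h : r ≤ 0) : G n r d = 0 := by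
  rw [G, kap_np h]; ring

lemma kap_le {r : ℝ} (h : 0 < r) : kap r ≤ r⁻¹ ^ (1 / 2 : ℝ) := by
  rw [← Real.sqrt_eq_rpow, kap, ← Real.sqrt_inv]
  apply Real.sqrt_le_sqrt
  apply inv_anti₀ h
  nlinarith [pi_gt_three]

lemma G_lim (n : ℕ) {a : ℝ} (ha : 0 < a) (d₀ : ℝ) (hd : a < |d₀|) :
    Tendsto (fun q : ℝ × ℝ => G n q.1 q.2) (𝓝 (0, d₀)) (𝓝 0) := by
  have h1 := (tendsto_rpow_mul_exp_neg_mul_atTop_nhds_zero (n + 1 / 2) (a ^ 2 / 4)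
    (by positivity)).comp tendsto_inv_nhdsGT_zero
  rw [Metric.tendsto_nhds]
  intro ε hε
  have h2 := (Metric.tendsto_nhds.1 h1 ε hε)
  rw [eventually_nhdsWithin_iff] at h2
  have h3 : ∀ᶠ q : ℝ × ℝ in 𝓝 (0, d₀), a < |q.2| :=
    (continuous_snd.abs.tendsto (0, d₀)).eventually (lt_mem_nhds hd)
  have h4 := (continuous_fst.tendsto ((0:ℝ), d₀)).eventually h2
  filter_upwards [h3, h4] with q hq hq2
  rcases le_or_gt q.1 0 with hr | hr
  · rw [G_np hr]; simpa using hε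
  refine lt_of_le_of_lt ?_ (hq2 hr)
  rw [dist_zero_right, dist_zero_right, Function.comp_apply, Real.norm_eq_abs, Real.norm_eq_abs]
  rw [G, abs_of_nonneg (by have := kap_nonneg q.1; positivity), abs_of_nonneg (by positivity),
    Real.rpow_add (by positivity), Real.rpow_natCast, mul_assoc]
  have h5 := kap_le hr
  have h6 : -(q.2 ^ 2 / (4 * q.1)) ≤ -(a ^ 2 / 4) * q.1⁻¹ := by
    have : a ^ 2 ≤ q.2 ^ 2 := by rw [← sq_abs q.2]; gcongr
    have : a ^ 2 / (4 * q.1) ≤ q.2 ^ 2 / (4 * q.1) := by gcongr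
    have e : -(a ^ 2 / 4) * q.1⁻¹ = - (a ^ 2 / (4 * q.1)) := by field_simp
    rw [e]; linarith
  have h7 := kap_nonneg q.1
  gcongr

lemma G_cont (n : ℕ) {z : ℝ × ℝ} (hz : z ≠ 0) : ContinuousAt (fun q : ℝ × ℝ => G n q.1 q.2) z := by
  obtain ⟨r, d⟩ := z
  rcases lt_trichotomy r 0 with hr | hr | hr
  · refine (continuousAt_const (y := (0:ℝ))).congr ?_
    filter_upwards [(continuous_fst.tendsto (r, d)).eventually (gt_mem_nhds hr)] with q hq
    exact (G_np (le_of_lt hq)).symm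
  · subst hr
    have hd : d ≠ 0 := fun h => hz (by rw [h]; rfl)
    rw [ContinuousAt]; simp only [G_np le_rfl]
    exact G_lim n (half_pos (abs_pos.2 hd)) d (half_lt_self (abs_pos.2 hd))
  · have : √(4 * π * r) ≠ 0 := by positivity
    have h4 : (4 * (r, d).1) ≠ 0 := by simp; exact hr.ne'
    unfold G kap
    have h1 : ContinuousAt (fun q : ℝ × ℝ => q.1) (r, d) := by fun_prop
    have h2 : ContinuousAt (fun q : ℝ × ℝ => q.2) (r, d) := by fun_prop
    refine ((h1.inv₀ hr.ne').pow n).mul (ContinuousAt.mul ?_ ?_)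
    · refine ContinuousAt.inv₀ ?_ this
      fun_prop
    · exact (((h2.pow 2).div (continuousAt_const.mul h1) h4).neg).rexp

lemma G_dd (n : ℕ) (r d : ℝ) : HasDerivAt (fun d => G n r d) (-(d / 2) * G (n + 1) r d) d := by
  rcases le_or_gt r 0 with hr | hr
  · simp only [G_np hr, mul_zero]; exact hasDerivAt_const _ _
  unfold G
  have := ((((hasDerivAt_id d).pow 2).div_const (4 * r)).neg.exp.const_mul (kap r)).const_mul (r⁻¹ ^ n)
  refine this.congr_deriv ?_
  simp only [Pi.neg_apply, Pi.pow_apply, id]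
  norm_num
  ring

lemma kap_deriv {r : ℝ} (hr : 0 < r) : HasDerivAt kap (-(1 / 2) * (r⁻¹ * kap r)) r := by
  have h := (((hasDerivAt_id r).const_mul (4 * π)).sqrt (by simp; positivity)).inv (by
    simp; positivity)
  refine h.congr_deriv ?_
  simp only [kap, id]
  have : √(4 * π * r) ^ 2 = 4 * π * r := Real.sq_sqrt (by positivity)
  have h0 : √(4 * π * r) ≠ 0 := by positivity
  rw [this]
  field_simp

lemma G_dr (n : ℕ) {r d : ℝ} (h : (r, d) ≠ (0 : ℝ × ℝ)) : HasDerivAt (fun r => G n r d)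
    (d ^ 2 / 4 * G (n + 2) r d - (n + 1 / 2) * G (n + 1) r d) r := by
  rcases lt_trichotomy r 0 with hr | hr | hr
  · simp only [G_np hr.le, mul_zero, sub_zero]
    refine (hasDerivAt_const r (0:ℝ)).congr_of_eventuallyEq ?_
    filter_upwards [Iio_mem_nhds hr] with x hx using G_np (le_of_lt hx)
  · subst hr
    simp only [G_np le_rfl, mul_zero, sub_zero]
    rw [hasDerivAt_iff_tendsto_slope]
    have hd : d ≠ 0 := fun h' => h (by rw [h']; rfl)
    have h1 := G_lim (n + 1) (half_pos (abs_pos.2 hd)) d (half_lt_self (abs_pos.2 hd))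
    have h2 : Tendsto (fun r : ℝ => (r, d)) (𝓝[≠] 0) (𝓝 (0, d)) :=
      ((Continuous.prodMk_left d).tendsto 0).mono_left nhdsWithin_le_nhds
    refine (h1.comp h2).congr' ?_
    filter_upwards [self_mem_nhdsWithin] with r hr
    simp only [Function.comp_apply]
    rw [slope_def_field, G_np le_rfl, sub_zero, sub_zero, G, G, pow_succ]
    field_simp
  · unfold G
    have h1 := (hasDerivAt_inv hr.ne').pow n
    have h2 := (((hasDerivAt_id r).const_mul 4).inv (by simp; exact hr.ne')).const_mul (d ^ 2)
    have := h1.mul ((kap_deriv hr).mul h2.neg.exp)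
    refine (this.congr_deriv ?_).congr_of_eventuallyEq ?_
    · simp only [Pi.neg_apply, Pi.pow_apply, id, Pi.inv_apply, div_eq_mul_inv]
      rcases n with _ | n
      · simp only [Nat.cast_zero, pow_zero, Pi.mul_apply, Pi.neg_apply, Pi.inv_apply, id]
        ring
      · simp only [Nat.add_sub_cancel]
        push_cast
        simp only [Pi.mul_apply, Pi.neg_apply, Pi.inv_apply, id]
        ring
    · filter_upwards with x
      simp only [Pi.mul_apply, Pi.pow_apply, Pi.inv_apply, id, Pi.neg_apply, div_eq_mul_inv]

lemma K0_np {r d : ℝ} (h : r ≤ 0) : K0 r d = 0 := G_np h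
lemma K1_np {r d : ℝ} (h : r ≤ 0) : K1 r d = 0 := by rw [K1, G_np h, mul_zero]
lemma K2_np {r d : ℝ} (h : r ≤ 0) : K2 r d = 0 := by rw [K2, G_np h, G_np h]; ring

lemma K0_cont {z : ℝ × ℝ} (hz : z ≠ 0) : ContinuousAt (fun q : ℝ × ℝ => K0 q.1 q.2) z := G_cont 0 hz
lemma K1_cont {z : ℝ × ℝ} (hz : z ≠ 0) : ContinuousAt (fun q : ℝ × ℝ => K1 q.1 q.2) z :=
  ContinuousAt.mul (by fun_prop) (G_cont 1 hz)
lemma K2_cont {z : ℝ × ℝ} (hz : z ≠ 0) : ContinuousAt (fun q : ℝ × ℝ => K2 q.1 q.2) z :=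
  (ContinuousAt.mul (by fun_prop) (G_cont 2 hz)).sub (ContinuousAt.mul (by fun_prop) (G_cont 1 hz))

lemma K0_dd (r d : ℝ) : HasDerivAt (K0 r) (K1 r d) d := G_dd 0 r d
lemma K1_dd (r d : ℝ) : HasDerivAt (K1 r) (K2 r d) d := by
  have := (((hasDerivAt_id d).div_const 2).neg).mul (G_dd 1 r d)
  refine this.congr_deriv ?_
  simp only [K2, Pi.neg_apply, id]; ring
lemma K0_dr {r d : ℝ} (h : (r, d) ≠ (0 : ℝ × ℝ)) : HasDerivAt (fun r => K0 r d) (K2 r d) r := by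
  have := G_dr 0 h
  refine this.congr_deriv ?_
  simp only [K2]; norm_num

def Pt (k : ℝ → ℝ → ℝ) (w γ₁ γ₂ : ℝ → ℝ) (t x : ℝ) : ℝ := ∫ y, w y * k (t - γ₁ y) (x - γ₂ y)

structure PtOK (w γ₁ γ₂ : ℝ → ℝ) (α β : ℝ) : Prop where
  int : Integrable w
  supp : ∀ y ∉ Icc α β, w y = 0
  c1 : Continuous γ₁
  c2 : Continuous γ₂

section pot
variable {k k' : ℝ → ℝ → ℝ} {w γ₁ γ₂ : ℝ → ℝ} {α β : ℝ}

lemma Pt_eq (h : PtOK w γ₁ γ₂ α β) (t x : ℝ) :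
    Pt k w γ₁ γ₂ t x = ∫ y in Icc α β, w y * k (t - γ₁ y) (x - γ₂ y) :=
  (setIntegral_eq_integral_of_forall_compl_eq_zero fun y hy => by rw [h.supp y hy, zero_mul]).symm

lemma PtOK.off (h : PtOK w γ₁ γ₂ α β) {z : ℝ × ℝ} (hz : ∀ y ∈ Icc α β, (γ₁ y, γ₂ y) ≠ z) :
    ∃ ε > 0, ∀ z' ∈ Metric.closedBall z ε, ∀ y ∈ Icc α β, z' - (γ₁ y, γ₂ y) ≠ 0 := by
  have hc : IsCompact ((fun y => (γ₁ y, γ₂ y)) '' Icc α β) :=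
    isCompact_Icc.image (h.c1.prodMk h.c2)
  have hm : ((fun y => (γ₁ y, γ₂ y)) '' Icc α β)ᶜ ∈ 𝓝 z := by
    refine hc.isClosed.isOpen_compl.mem_nhds ?_
    rintro ⟨y, hy, rfl⟩
    exact hz y hy rfl
  obtain ⟨ε, hε, hb⟩ := Metric.nhds_basis_closedBall.mem_iff.1 hm
  refine ⟨ε, hε, fun z' hz' y hy h0 => hb hz' ⟨y, hy, ?_⟩⟩
  exact (sub_eq_zero.1 h0).symm

lemma PtOK.bound (h : PtOK w γ₁ γ₂ α β)
    (kc : ∀ z : ℝ × ℝ, z ≠ 0 → ContinuousAt (fun q : ℝ × ℝ => k q.1 q.2) z) {z : ℝ × ℝ} {ε : ℝ}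
    (hz : ∀ z' ∈ Metric.closedBall z ε, ∀ y ∈ Icc α β, z' - (γ₁ y, γ₂ y) ≠ 0) :
    ∃ C, ∀ z' ∈ Metric.closedBall z ε, ∀ y ∈ Icc α β, |k (z'.1 - γ₁ y) (z'.2 - γ₂ y)| ≤ C := by
  have hc : ContinuousOn (fun q : (ℝ × ℝ) × ℝ => |k (q.1.1 - γ₁ q.2) (q.1.2 - γ₂ q.2)|)
      (Metric.closedBall z ε ×ˢ Icc α β) := by
    intro q hq
    have hg : Continuous fun q : (ℝ × ℝ) × ℝ => q.1 - (γ₁ q.2, γ₂ q.2) := by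
      have := h.c1; have := h.c2; fun_prop
    exact ((kc _ (hz q.1 hq.1 q.2 hq.2)).comp (f := fun q : (ℝ × ℝ) × ℝ => q.1 - (γ₁ q.2, γ₂ q.2))
      hg.continuousAt).abs.continuousWithinAt
  obtain ⟨C, hC⟩ := ((isCompact_closedBall z ε).prod isCompact_Icc).bddAbove_image hc
  exact ⟨C, fun z' hz' y hy => hC ⟨(z', y), ⟨hz', hy⟩, rfl⟩⟩

lemma PtOK.meas (h : PtOK w γ₁ γ₂ α β)
    (kc : ∀ z : ℝ × ℝ, z ≠ 0 → ContinuousAt (fun q : ℝ × ℝ => k q.1 q.2) z) {z : ℝ × ℝ}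
    (hz : ∀ y ∈ Icc α β, z - (γ₁ y, γ₂ y) ≠ 0) :
    AEStronglyMeasurable (fun y => w y * k (z.1 - γ₁ y) (z.2 - γ₂ y)) (volume.restrict (Icc α β)) := by
  refine h.int.aestronglyMeasurable.restrict.mul (ContinuousOn.aestronglyMeasurable ?_ measurableSet_Icc)
  intro y hy
  have hg : Continuous fun y : ℝ => z - (γ₁ y, γ₂ y) := by
    have := h.c1; have := h.c2; fun_prop
  exact ((kc _ (hz y hy)).comp (f := fun y : ℝ => z - (γ₁ y, γ₂ y))
      hg.continuousAt).continuousWithinAt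

lemma Pt_cont (h : PtOK w γ₁ γ₂ α β)
    (kc : ∀ z : ℝ × ℝ, z ≠ 0 → ContinuousAt (fun q : ℝ × ℝ => k q.1 q.2) z) {z : ℝ × ℝ}
    (hz : ∀ y ∈ Icc α β, (γ₁ y, γ₂ y) ≠ z) :
    ContinuousAt (fun q : ℝ × ℝ => Pt k w γ₁ γ₂ q.1 q.2) z := by
  simp only [Pt_eq h]
  obtain ⟨ε, hε, ho⟩ := h.off hz
  obtain ⟨C, hC⟩ := h.bound kc ho
  have hb : ∀ᶠ z' in 𝓝 z, z' ∈ Metric.closedBall z ε := Metric.closedBall_mem_nhds z hε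
  refine continuousAt_of_dominated (bound := fun y => |w y| * C) ?_ ?_ ?_ ?_
  · filter_upwards [hb] with z' hz' using h.meas kc (ho z' hz')
  · filter_upwards [hb] with z' hz'
    filter_upwards [ae_restrict_mem measurableSet_Icc] with y hy
    rw [norm_mul]
    exact mul_le_mul_of_nonneg_left (hC z' hz' y hy) (norm_nonneg _)
  · exact (h.int.abs.mul_const C).restrict
  · filter_upwards [ae_restrict_mem measurableSet_Icc] with y hy
    have hg : Continuous fun q : ℝ × ℝ => q - (γ₁ y, γ₂ y) := by fun_prop
    exact continuousAt_const.mul ((kc _ (ho z (Metric.mem_closedBall_self hε.le) y hy)).comp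
      (f := fun q : ℝ × ℝ => q - (γ₁ y, γ₂ y)) hg.continuousAt)

lemma Pt_path (h : PtOK w γ₁ γ₂ α β)
    (kc : ∀ z : ℝ × ℝ, z ≠ 0 → ContinuousAt (fun q : ℝ × ℝ => k q.1 q.2) z)
    (kc' : ∀ z : ℝ × ℝ, z ≠ 0 → ContinuousAt (fun q : ℝ × ℝ => k' q.1 q.2) z)
    {c : ℝ → ℝ × ℝ} (hcc : Continuous c) {x₀ : ℝ}
    (hz : ∀ y ∈ Icc α β, (γ₁ y, γ₂ y) ≠ c x₀)
    (hd : ∀ x y, c x - (γ₁ y, γ₂ y) ≠ 0 → HasDerivAt (fun x => k ((c x).1 - γ₁ y) ((c x).2 - γ₂ y))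
      (k' ((c x).1 - γ₁ y) ((c x).2 - γ₂ y)) x) :
    HasDerivAt (fun x => Pt k w γ₁ γ₂ (c x).1 (c x).2) (Pt k' w γ₁ γ₂ (c x₀).1 (c x₀).2) x₀ := by
  simp only [Pt_eq h]
  obtain ⟨ε, hε, ho⟩ := h.off hz
  obtain ⟨C, hC⟩ := h.bound kc ho
  obtain ⟨C', hC'⟩ := h.bound kc' ho
  have hm : c ⁻¹' Metric.closedBall (c x₀) ε ∈ 𝓝 x₀ :=
    hcc.continuousAt.preimage_mem_nhds (Metric.closedBall_mem_nhds _ hε)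
  refine (hasDerivAt_integral_of_dominated_loc_of_deriv_le
    (F := fun x y => w y * k ((c x).1 - γ₁ y) ((c x).2 - γ₂ y))
    (F' := fun x y => w y * k' ((c x).1 - γ₁ y) ((c x).2 - γ₂ y))
    (bound := fun y => |w y| * C') hm ?_ ?_ ?_ ?_ ?_ ?_).2
  · filter_upwards [hm] with x hx using h.meas kc (ho _ hx)
  · refine Integrable.mono' (h.int.abs.mul_const C).restrict (h.meas kc (ho _ (Metric.mem_closedBall_self hε.le))) ?_
    filter_upwards [ae_restrict_mem measurableSet_Icc] with y hy
    rw [norm_mul]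
    exact mul_le_mul_of_nonneg_left (hC _ (Metric.mem_closedBall_self hε.le) y hy) (norm_nonneg _)
  · exact h.meas kc' (ho _ (Metric.mem_closedBall_self hε.le))
  · filter_upwards [ae_restrict_mem measurableSet_Icc] with y hy x hx
    rw [norm_mul]
    exact mul_le_mul_of_nonneg_left (hC' _ hx y hy) (norm_nonneg _)
  · exact (h.int.abs.mul_const C').restrict
  · filter_upwards [ae_restrict_mem measurableSet_Icc] with y hy x hx
    exact (hd x y (ho _ hx y hy)).const_mul _

/-- full package for K0 -/
lemma Pt_heat (h : PtOK w γ₁ γ₂ α β) {t x : ℝ} (hz : ∀ y ∈ Icc α β, (γ₁ y, γ₂ y) ≠ (t, x)) :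
    HasDerivAt (fun τ => Pt K0 w γ₁ γ₂ τ x) (Pt K2 w γ₁ γ₂ t x) t ∧
    HasDerivAt (fun y => Pt K0 w γ₁ γ₂ t y) (Pt K1 w γ₁ γ₂ t x) x ∧
    HasDerivAt (fun y => Pt K1 w γ₁ γ₂ t y) (Pt K2 w γ₁ γ₂ t x) x := by
  refine ⟨?_, ?_, ?_⟩
  · refine Pt_path h (fun _ => K0_cont) (fun _ => K2_cont) (c := fun τ => (τ, x)) (by fun_prop) hz ?_
    intro τ y hne
    exact (K0_dr hne).comp_sub_const τ (γ₁ y)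
  · refine Pt_path h (fun _ => K0_cont) (fun _ => K1_cont) (c := fun y => (t, y)) (by fun_prop) hz ?_
    intro τ y hne
    exact (K0_dd (t - γ₁ y) _).comp_sub_const τ (γ₂ y)
  · refine Pt_path h (fun _ => K1_cont) (fun _ => K2_cont) (c := fun y => (t, y)) (by fun_prop) hz ?_
    intro τ y hne
    exact (K1_dd (t - γ₁ y) _).comp_sub_const τ (γ₂ y)
end pot

lemma kap_prim {T : ℝ} (hT : 0 ≤ T) : IntegrableOn kap (Ioc 0 T) ∧ ∫ r in Ioc 0 T, kap r ≤ √T := by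
  have hc : ContinuousOn (fun r : ℝ => √(r / π)) (Icc 0 T) := by fun_prop
  have hd : ∀ r ∈ Ioo 0 T, HasDerivAt (fun r : ℝ => √(r / π)) (kap r) r := by
    intro r hr
    have h0 : 0 < r := hr.1
    have h := ((hasDerivAt_id r).div_const π).sqrt (by simp; positivity)
    refine h.congr_deriv ?_
    simp only [kap, id]
    have e : 4 * π * r = (2 * π) ^ 2 * (r / π) := by field_simp; ring
    rw [e, Real.sqrt_mul (by positivity), Real.sqrt_sq (by positivity)]
    field_simp
  have hi := intervalIntegral.integrableOn_deriv_of_nonneg hc hd (fun r _ => kap_nonneg r)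
  refine ⟨hi, ?_⟩
  rw [← intervalIntegral.integral_of_le hT, intervalIntegral.integral_eq_sub_of_hasDerivAt_of_le hT hc hd
    ((intervalIntegrable_iff_integrableOn_Ioc_of_le hT).2 hi)]
  have : √(T / π) ≤ √T := Real.sqrt_le_sqrt (div_le_self hT (by linarith [pi_gt_three]))
  simpa using this

lemma kind_int (C T : ℝ) : Integrable (indicator (Ioc 0 T) fun r => C * kap r) := by
  rcases le_or_gt T 0 with h | h
  · rw [Ioc_eq_empty (by linarith)]; simp
  · exact (integrable_indicator_iff measurableSet_Ioc).2 ((kap_prim h.le).1.const_mul C)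

lemma kind_bd {F : ℝ → ℝ} {C T : ℝ} (hF : ∀ r, |F r| ≤ C * kap r) (hs : ∀ r, T < r → F r = 0) (r : ℝ) :
    ‖F r‖ ≤ indicator (Ioc 0 T) (fun r => C * kap r) r := by
  by_cases h : r ∈ Ioc 0 T
  · rw [indicator_of_mem h]; exact hF r
  · rw [indicator_of_notMem h]
    rcases le_or_gt r 0 with h1 | h1
    · simpa [kap_np h1] using hF r
    · rw [hs r (by by_contra h2; exact h ⟨h1, not_lt.1 h2⟩)]; simp

lemma kint_bound {F : ℝ → ℝ} {C T : ℝ} (hT : 0 ≤ T) (hC : 0 ≤ C) (hF : ∀ r, |F r| ≤ C * kap r)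
    (hs : ∀ r, T < r → F r = 0) : |∫ r, F r| ≤ C * √T := by
  refine (norm_integral_le_of_norm_le (kind_int C T) (ae_of_all _ (kind_bd hF hs))).trans ?_
  rw [integral_indicator measurableSet_Ioc, integral_const_mul]
  exact mul_le_mul_of_nonneg_left (kap_prim hT).2 hC

lemma kint_int {F : ℝ → ℝ} {C T : ℝ} (hm : Measurable F) (hF : ∀ r, |F r| ≤ C * kap r)
    (hs : ∀ r, T < r → F r = 0) : Integrable F :=
  (kind_int C T).mono' hm.aestronglyMeasurable (ae_of_all _ (kind_bd hF hs))

structure LOK (ρ : ℝ → ℝ) (R δ : ℝ) : Prop where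
  cont : ContinuousOn ρ (Ioo 0 δ)
  bd : ∀ y, |ρ y| ≤ R
  supp : ∀ y ∉ Ioo 0 δ, ρ y = 0

section lok
variable {ρ q : ℝ → ℝ} {R δ : ℝ}

lemma LOK.R0 (h : LOK ρ R δ) : 0 ≤ R := (abs_nonneg _).trans (h.bd 0)

lemma LOK.contAt (h : LOK ρ R δ) {y : ℝ} (h0 : y ≠ 0) (h1 : y ≠ δ) : ContinuousAt ρ y := by
  by_cases hy : y ∈ Ioo 0 δ
  · exact h.cont.continuousAt (Ioo_mem_nhds hy.1 hy.2)
  · have : y ∈ (Icc 0 δ)ᶜ := fun h2 => hy ⟨lt_of_le_of_ne h2.1 h0.symm, lt_of_le_of_ne h2.2 h1⟩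
    refine (continuousAt_const (y := (0:ℝ))).congr ?_
    filter_upwards [isClosed_Icc.isOpen_compl.mem_nhds this] with z hz
    exact (h.supp z fun h3 => hz ⟨h3.1.le, h3.2.le⟩).symm

lemma LOK.meas (h : LOK ρ R δ) : Measurable ρ := by
  classical
  have e : ρ = (Ioo 0 δ).piecewise ρ (fun _ => 0) := by
    ext y
    by_cases hy : y ∈ Ioo 0 δ
    · simp [hy]
    · rw [piecewise_eq_of_notMem _ _ _ hy, h.supp y hy]
  rw [e]
  exact h.cont.measurable_piecewise continuousOn_const measurableSet_Ioo

lemma LOK.ptok (h : LOK ρ R δ) (hq : Continuous q) : PtOK ρ (fun y => y) q 0 δ where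
  int := by
    have hi : Integrable (indicator (Icc 0 δ) fun _ => R) :=
      (integrable_indicator_iff measurableSet_Icc).2 (integrableOn_const (by simp))
    refine hi.mono' h.meas.aestronglyMeasurable (ae_of_all _ fun y => ?_)
    by_cases hy : y ∈ Icc 0 δ
    · rw [indicator_of_mem hy]; exact h.bd y
    · rw [indicator_of_notMem hy, h.supp y fun h2 => hy ⟨h2.1.le, h2.2.le⟩]; simp
  supp := fun y hy => h.supp y fun h2 => hy ⟨h2.1.le, h2.2.le⟩
  c1 := continuous_id
  c2 := hq

lemma Pt_r (k : ℝ → ℝ → ℝ) (ρ q : ℝ → ℝ) (t x : ℝ) :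
    Pt k ρ (fun y => y) q t x = ∫ r, ρ (t - r) * k r (x - q (t - r)) := by
  rw [Pt, ← integral_sub_left_eq_self _ volume t]
  simp only [sub_sub_cancel]

lemma LOK.cut (h : LOK ρ R δ) {t T r : ℝ} (ht : t ≤ T) (hr : T < r) : ρ (t - r) = 0 :=
  h.supp _ fun h2 => by linarith [h2.1]

lemma LOK.bdk (h : LOK ρ R δ) {C k r t : ℝ} (hk : |k| ≤ C * kap r) : |ρ (t - r) * k| ≤ R * C * kap r := by
  rw [abs_mul, mul_assoc]
  exact mul_le_mul (h.bd _) hk (abs_nonneg _) h.R0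

lemma LOK.lbound (h : LOK ρ R δ) {k : ℝ → ℝ} {C t : ℝ} (ht : 0 ≤ t) (hC : 0 ≤ C)
    (hk : ∀ r, |k r| ≤ C * kap r) : |∫ r, ρ (t - r) * k r| ≤ R * C * √t :=
  kint_bound ht (mul_nonneg h.R0 hC) (fun r => h.bdk (hk r)) fun r hr => by
    rw [h.cut le_rfl hr, zero_mul]

lemma LOK.lint (h : LOK ρ R δ) {k : ℝ → ℝ} {C t : ℝ} (hm : Measurable k)
    (hk : ∀ r, |k r| ≤ C * kap r) : Integrable fun r => ρ (t - r) * k r :=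
  kint_int (T := t) ((h.meas.comp (by fun_prop)).mul hm) (fun r => h.bdk (hk r)) fun r hr => by
    rw [h.cut le_rfl hr, zero_mul]

/-- difference estimate -/
lemma LOK.ldiff {ρ' : ℝ → ℝ} (h : LOK ρ R δ) (h' : LOK ρ' R δ) {k k' : ℝ → ℝ} {C D E t : ℝ} (ht : 0 ≤ t)
    (hC : 0 ≤ C) (hD : 0 ≤ D) (hE : 0 ≤ E)
    (hm : Measurable k) (hm' : Measurable k')
    (hk : ∀ r, |k r| ≤ C * kap r) (hk' : ∀ r, |k' r| ≤ C * kap r)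
    (hkk : ∀ r, r ≤ t → |k r - k' r| ≤ D * kap r) (hρ : ∀ y, |ρ y - ρ' y| ≤ E) :
    |(∫ r, ρ (t - r) * k r) - ∫ r, ρ' (t - r) * k' r| ≤ (R * D + E * C) * √t := by
  rw [← integral_sub (h.lint hm hk) (h'.lint hm' hk')]
  have := h.R0
  refine kint_bound ht (by positivity) (fun r => ?_) fun r hr => by
    rw [h.cut le_rfl hr, h'.cut le_rfl hr]; ring
  rcases le_or_gt r t with hr | hr
  · have e : ρ (t - r) * k r - ρ' (t - r) * k' r =
      ρ (t - r) * (k r - k' r) + (ρ (t - r) - ρ' (t - r)) * k' r := by ring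
    rw [e]
    refine (abs_add_le _ _).trans ?_
    rw [abs_mul, abs_mul]
    calc _ ≤ R * (D * kap r) + E * (C * kap r) := by
          gcongr
          · exact h.bd _
          · exact hkk r hr
          · exact hρ _
          · exact hk' r
      _ = _ := by ring
  · rw [h.cut le_rfl hr, h'.cut le_rfl hr]
    have := kap_nonneg r
    simp; positivity

lemma LOK.lcont (h : LOK ρ R δ) {k : ℝ × ℝ → ℝ → ℝ} {z₀ : ℝ × ℝ} {C : ℝ} 
    (hm : ∀ z, Measurable (k z)) (hb : ∀ᶠ z in 𝓝 z₀, ∀ r, |k z r| ≤ C * kap r)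
    (hc : ∀ r > 0, ContinuousAt (fun z => k z r) z₀) :
    ContinuousAt (fun z : ℝ × ℝ => ∫ r, ρ (z.1 - r) * k z r) z₀ := by
  have ht : ∀ᶠ z : ℝ × ℝ in 𝓝 z₀, z.1 < z₀.1 + 1 :=
    (continuous_fst.tendsto z₀).eventually (gt_mem_nhds (by linarith))
  refine continuousAt_of_dominated (bound := indicator (Ioc 0 (z₀.1 + 1)) fun r => R * C * kap r) ?_ ?_
    (kind_int _ _) ?_
  · filter_upwards with z
    exact ((h.meas.comp (by fun_prop)).mul (hm z)).aestronglyMeasurable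
  · filter_upwards [hb, ht] with z hz hzt
    filter_upwards with r
    exact kind_bd (fun r => h.bdk (hz r)) (fun r hr => by rw [h.cut hzt.le hr, zero_mul]) r
  · have h1 : ∀ᵐ r : ℝ, r ≠ z₀.1 := by simp [ae_iff]
    have h2 : ∀ᵐ r : ℝ, r ≠ z₀.1 - δ := by simp [ae_iff]
    filter_upwards [h1, h2] with r hr1 hr2
    rcases le_or_gt r 0 with hr | hr
    · refine (continuousAt_const (y := (0:ℝ))).congr ?_
      filter_upwards [hb] with z hz
      have := hz r
      rw [kap_np hr, mul_zero, abs_nonpos_iff] at this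
      rw [this, mul_zero]
    · refine ContinuousAt.mul ?_ (hc r hr)
      exact (h.contAt (sub_ne_zero.2 hr1.symm) (fun h3 => hr2 (by linarith))).comp
        (f := fun z : ℝ × ℝ => z.1 - r) (by fun_prop)
end lok

lemma zexp {z : ℝ} (h : 0 ≤ z) : z * exp (-z) ≤ 1 ∧ z ^ 2 * exp (-z) ≤ 1 := by
  have h1 := Real.quadratic_le_exp_of_nonneg h
  have h3 := Real.quadratic_le_exp_of_nonneg (div_nonneg h zero_le_two)
  have h4 : exp z = exp (z / 2) ^ 2 := by rw [← Real.exp_nat_mul]; congr 1; push_cast; ring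
  rw [Real.exp_neg]
  constructor
  · rw [← div_eq_mul_inv, div_le_one (exp_pos _)]; nlinarith
  · rw [← div_eq_mul_inv, div_le_one (exp_pos _), h4]
    have : z ≤ exp (z / 2) := by nlinarith [sq_nonneg (z - 2)]
    gcongr

lemma K0_nonneg (r d : ℝ) : 0 ≤ K0 r d := by
  rw [K0, G]; have := kap_nonneg r; rw [pow_zero]; positivity

lemma K0_le (r d : ℝ) : |K0 r d| ≤ kap r := by
  rw [abs_of_nonneg (K0_nonneg r d), K0, G, pow_zero, one_mul]
  rcases le_or_gt r 0 with h | h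
  · simp [kap_np h]
  · refine mul_le_of_le_one_right (kap_nonneg r) (exp_le_one_iff.2 ?_)
    have : 0 ≤ d ^ 2 / (4 * r) := by positivity
    linarith

lemma K1_meas {f g : ℝ → ℝ} (hf : Measurable f) (hg : Measurable g) :
    Measurable fun r => K1 (f r) (g r) := by
  unfold K1 G kap; fun_prop
lemma K0_meas {f g : ℝ → ℝ} (hf : Measurable f) (hg : Measurable g) :
    Measurable fun r => K0 (f r) (g r) := by
  unfold K0 G kap; fun_prop

lemma K1_slope {r d m : ℝ} (hd : |d| ≤ m * r) : |K1 r d| ≤ m / 2 * kap r := by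
  rcases le_or_gt r 0 with h | h
  · simp [kap_np h, K1_np h]
  have h0 := K0_le r d
  have e : K1 r d = -(d / (2 * r)) * K0 r d := by simp only [K1, K0, G]; field_simp
  rw [e, abs_mul, abs_neg, abs_div, abs_of_pos (by positivity : 0 < 2 * r)]
  have : |d| / (2 * r) ≤ m / 2 := by rw [div_le_div_iff₀ (by positivity) (by norm_num)]; linarith
  have hm : 0 ≤ m / 2 := le_trans (by positivity) this
  gcongr

lemma K1_far {r d a : ℝ} (ha : 0 < a) (hd : a ≤ |d|) : |K1 r d| ≤ 2 / a * kap r := by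
  rcases le_or_gt r 0 with h | h
  · simp [kap_np h, K1_np h]
  have hz := (zexp (z := d ^ 2 / (4 * r)) (by positivity)).1
  have hd0 : 0 < |d| := lt_of_lt_of_le ha hd
  have e : |K1 r d| = 2 / |d| * (d ^ 2 / (4 * r) * exp (-(d ^ 2 / (4 * r)))) * kap r := by
    simp only [K1, G, abs_mul, abs_neg, abs_div, abs_pow, abs_inv, abs_of_pos h, abs_of_pos (kap_pos h), abs_of_pos (exp_pos _)]
    rw [show (d ^ 2 / (4 * r)) * exp (-(d ^ 2 / (4 * r))) = (|d| ^ 2 / (4 * r)) * exp (-(d ^ 2 / (4 * r))) by rw [sq_abs]]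
    norm_num
    field_simp
    norm_num
    ring
  rw [e]
  have := kap_nonneg r
  have h2 : 2 / |d| ≤ 2 / a := by gcongr
  calc _ ≤ 2 / a * 1 * kap r := by gcongr
    _ = _ := by ring

lemma K2_eq {r d : ℝ} (h : 0 < r) : K2 r d = r⁻¹ * ((d ^ 2 / (4 * r) - 1 / 2) * exp (-(d ^ 2 / (4 * r)))) * kap r := by
  simp only [K2, G]; field_simp

lemma K2_le {r d : ℝ} : |K2 r d| ≤ 3 / 2 * r⁻¹ * kap r := by
  rcases le_or_gt r 0 with h | h
  · simp [kap_np h, K2_np h]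
  have hz0 : 0 ≤ d ^ 2 / (4 * r) := by positivity
  have hz := (zexp hz0).1
  have he : exp (-(d ^ 2 / (4 * r))) ≤ 1 := exp_le_one_iff.2 (by linarith)
  have hp := exp_pos (-(d ^ 2 / (4 * r)))
  rw [K2_eq h, abs_mul, abs_mul, abs_of_pos (kap_pos h), abs_of_pos (inv_pos.2 h)]
  have := kap_nonneg r
  have h3 : |(d ^ 2 / (4 * r) - 1 / 2) * exp (-(d ^ 2 / (4 * r)))| ≤ 3 / 2 := by
    rw [abs_le]; constructor <;> nlinarith [mul_nonneg hz0 hp.le]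
  calc _ ≤ r⁻¹ * (3 / 2) * kap r := by gcongr
    _ = _ := by ring

lemma K2_far {r d a : ℝ} (ha : 0 < a) (hd : a ≤ |d|) : |K2 r d| ≤ 6 / a ^ 2 * kap r := by
  rcases le_or_gt r 0 with h | h
  · simp [kap_np h, K2_np h]
  have hd0 : 0 < |d| := lt_of_lt_of_le ha hd
  have hd1 : d ≠ 0 := abs_pos.1 hd0
  have hz0 : 0 ≤ d ^ 2 / (4 * r) := by positivity
  obtain ⟨hz, hz2⟩ := zexp hz0
  have hp := exp_pos (-(d ^ 2 / (4 * r)))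
  have e : r⁻¹ = 4 / d ^ 2 * (d ^ 2 / (4 * r)) := by field_simp
  rw [K2_eq h, abs_mul, abs_of_pos (kap_pos h), e]
  set z := d ^ 2 / (4 * r)
  have h3 : |z * ((z - 1 / 2) * exp (-z))| ≤ 3 / 2 := by
    rw [abs_le]; constructor <;> nlinarith [mul_nonneg hz0 hp.le, mul_nonneg (sq_nonneg z) hp.le]
  have := kap_nonneg r
  have h4 : 4 / d ^ 2 ≤ 4 / a ^ 2 := by rw [← sq_abs d]; gcongr
  rw [mul_assoc (4 / d ^ 2), abs_mul, abs_of_pos (by positivity : 0 < 4 / d ^ 2)]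
  calc _ ≤ 4 / a ^ 2 * (3 / 2) * kap r := by gcongr
    _ = _ := by ring

lemma K1_lip (r d d' : ℝ) : |K1 r d - K1 r d'| ≤ 3 / 2 * r⁻¹ * kap r * |d - d'| :=
  convex_univ.norm_image_sub_le_of_norm_hasDerivWithin_le (f' := K2 r)
    (fun x _ => (K1_dd r x).hasDerivWithinAt) (fun x _ => K2_le) (mem_univ _) (mem_univ _)

lemma K1_lip' {r d d' m : ℝ} (h : |d - d'| ≤ m * r) : |K1 r d - K1 r d'| ≤ 3 / 2 * m * kap r := by
  rcases le_or_gt r 0 with hr | hr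
  · simp [K1_np hr, kap_np hr]
  refine (K1_lip r d d').trans ?_
  have := kap_nonneg r
  calc _ ≤ 3 / 2 * r⁻¹ * kap r * (m * r) := by gcongr
    _ = _ := by field_simp

lemma K1_lip_far {r d d' a : ℝ} (ha : 0 < a) (hd : a ≤ d) (hd' : a ≤ d') :
    |K1 r d - K1 r d'| ≤ 6 / a ^ 2 * kap r * |d - d'| :=
  (convex_Ici a).norm_image_sub_le_of_norm_hasDerivWithin_le (f' := K2 r)
    (fun x _ => (K1_dd r x).hasDerivWithinAt) (fun x hx => K2_far ha (le_trans hx (le_abs_self x))) hd' hd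

lemma K0_lip_far {r d d' a : ℝ} (ha : 0 < a) (hd : a ≤ d) (hd' : a ≤ d') :
    |K0 r d - K0 r d'| ≤ 2 / a * kap r * |d - d'| :=
  (convex_Ici a).norm_image_sub_le_of_norm_hasDerivWithin_le (f' := K1 r)
    (fun x _ => (K0_dd r x).hasDerivWithinAt) (fun x hx => K1_far ha (le_trans hx (le_abs_self x))) hd' hd

lemma K0_neg (r d : ℝ) : K0 r (-d) = K0 r d := by simp [K0, G]
lemma K1_neg (r d : ℝ) : K1 r (-d) = -K1 r d := by simp [K1, G]; ring
lemma K1_zero (r : ℝ) : K1 r 0 = 0 := by simp [K1]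

/-- total mass of the double layer kernel -/
lemma K1_mass : Integrable (fun m => -K1 m 1) ∧ ∫ m, -K1 m 1 = 1 / 2 := by
  set g : ℝ → ℝ := fun y => (√(4 * π))⁻¹ * exp (-(1 / 4) * y ^ 2) with hg
  have he : EqOn (fun x : ℝ => (|(-(1 / 2) : ℝ)| * x ^ ((-(1 / 2) : ℝ) - 1)) • g (x ^ (-(1 / 2) : ℝ)))
      (fun m => -K1 m 1) (Ioi 0) := by
    intro x hx
    have hx : 0 < x := hx
    have h1 : (x ^ (-(1 / 2) : ℝ)) ^ 2 = x⁻¹ := by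
      rw [← Real.rpow_natCast, ← Real.rpow_mul hx.le, ← Real.rpow_neg_one]; norm_num
    have h2 : x ^ ((-(1 / 2) : ℝ) - 1) = x⁻¹ * (√x)⁻¹ := by
      rw [Real.sqrt_eq_rpow, ← Real.rpow_neg hx.le, ← Real.rpow_neg_one x, ← Real.rpow_add hx]; norm_num
    simp only [hg, h1, h2, K1, G, kap]
    rw [Real.sqrt_mul (by positivity) x, abs_of_neg (by norm_num), show -(1 / 4) * x⁻¹ = -(1 ^ 2 / (4 * x)) by field_simp; try norm_num]
    simp only [smul_eq_mul, mul_inv]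
    ring
  have hgi : Integrable g := (integrable_exp_neg_mul_sq (by norm_num)).const_mul _
  have hi : IntegrableOn (fun m => -K1 m 1) (Ioi 0) :=
    ((integrableOn_Ioi_comp_rpow_iff g (by norm_num)).2 hgi.integrableOn).congr_fun he measurableSet_Ioi
  have hz : ∀ m ∉ Ioi (0:ℝ), -K1 m 1 = 0 := fun m hm => by rw [K1_np (not_lt.1 hm), neg_zero]
  refine ⟨(integrableOn_iff_integrable_of_support_subset fun m hm => by
    by_contra h; exact hm (hz m h)).1 hi, ?_⟩
  rw [← setIntegral_eq_integral_of_forall_compl_eq_zero hz, ← setIntegral_congr_fun measurableSet_Ioi he,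
    integral_comp_rpow_Ioi g (by norm_num)]
  simp only [hg]
  rw [integral_const_mul, integral_gaussian_Ioi]
  have : π / (1 / 4) = 4 * π := by ring
  rw [this]
  have : √(4 * π) ≠ 0 := by positivity
  field_simp

def Ht (ρ : ℝ → ℝ) (t d : ℝ) : ℝ := ∫ m, ρ (t - d ^ 2 * m) * (-K1 m 1)

section lay
variable {ρ q : ℝ → ℝ} {R δ Q : ℝ}

lemma Ht_zero (t : ℝ) : Ht ρ t 0 = 1 / 2 * ρ t := by
  simp only [Ht, ne_eq, OfNat.ofNat_ne_zero, not_false_eq_true, zero_pow, zero_mul, sub_zero]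
  rw [integral_const_mul, K1_mass.2, mul_comm]

lemma flat_eq (t d : ℝ) : ∫ r, ρ (t - r) * K1 r d = -(Real.sign d * Ht ρ t d) := by
  rcases eq_or_ne d 0 with h | h
  · subst h; simp [K1_zero]
  have hd : 0 < d ^ 2 := by positivity
  have h1 := Measure.integral_comp_mul_left (fun r => ρ (t - r) * K1 r d) (d ^ 2)
  rw [abs_of_pos (inv_pos.2 hd), smul_eq_mul] at h1
  rw [show ∫ r, ρ (t - r) * K1 r d = d ^ 2 * ((d ^ 2)⁻¹ * ∫ r, ρ (t - r) * K1 r d) by field_simp, ← h1, Ht,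
    ← integral_const_mul, ← integral_const_mul, ← integral_neg]
  congr 1
  ext m
  rcases le_or_gt m 0 with hm | hm
  · rw [K1_np hm, K1_np (mul_nonpos_of_nonneg_of_nonpos hd.le hm)]; simp
  have hs : Real.sign d = d / |d| := by
    rcases lt_or_gt_of_ne h with h | h
    · rw [Real.sign_of_neg h, abs_of_neg h]; field_simp
    · rw [Real.sign_of_pos h, abs_of_pos h]; field_simp
  have hk : kap (d ^ 2 * m) = |d|⁻¹ * kap m := by
    rw [kap, kap, show 4 * π * (d ^ 2 * m) = d ^ 2 * (4 * π * m) by ring, Real.sqrt_mul hd.le, Real.sqrt_sq_eq_abs, mul_inv]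
  have hd' : |d| ≠ 0 := abs_ne_zero.2 h
  simp only [K1, G, hk, hs]
  rw [show d ^ 2 / (4 * (d ^ 2 * m)) = 1 ^ 2 / (4 * m) by field_simp; try norm_num]
  field_simp

lemma LOK.Ht_cont (h : LOK ρ R δ) {z₀ : ℝ × ℝ} (ht : z₀.1 ∈ Ioo 0 δ) :
    ContinuousAt (fun z : ℝ × ℝ => Ht ρ z.1 z.2) z₀ := by
  refine continuousAt_of_dominated (bound := fun m => R * |-K1 m 1|) ?_ ?_ (K1_mass.1.abs.const_mul R) ?_
  · filter_upwards with z
    exact ((h.meas.comp (by fun_prop)).mul (K1_meas measurable_id measurable_const).neg).aestronglyMeasurable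
  · filter_upwards with z
    filter_upwards with m
    rw [norm_mul]
    exact mul_le_mul_of_nonneg_right (h.bd _) (norm_nonneg _)
  · have h1 : ∀ᵐ r : ℝ, r ≠ z₀.1 / z₀.2 ^ 2 := by simp [ae_iff]
    have h2 : ∀ᵐ r : ℝ, r ≠ (z₀.1 - δ) / z₀.2 ^ 2 := by simp [ae_iff]
    filter_upwards [h1, h2] with r hr1 hr2
    refine ContinuousAt.mul ?_ continuousAt_const
    have h3 : z₀.1 - z₀.2 ^ 2 * r ≠ 0 ∧ z₀.1 - z₀.2 ^ 2 * r ≠ δ := by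
      rcases eq_or_ne z₀.2 0 with h0 | h0
      · rw [h0]; simp; exact ⟨ht.1.ne', ht.2.ne⟩
      · constructor
        · intro h4; apply hr1; field_simp; linarith
        · intro h4; apply hr2; field_simp; linarith
    exact (h.contAt h3.1 h3.2).comp (f := fun z : ℝ × ℝ => z.1 - z.2 ^ 2 * r) (by fun_prop)

lemma sign_mul_cont {F : ℝ × ℝ → ℝ} {d : ℝ × ℝ → ℝ} {z₀ : ℝ × ℝ} (hF : ContinuousAt F z₀) (hd : ContinuousAt d z₀)
    (h0 : d z₀ = 0 → F z₀ = 0) : ContinuousAt (fun z => Real.sign (d z) * F z) z₀ := by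
  rcases lt_trichotomy (d z₀) 0 with h | h | h
  · refine hF.neg.congr ?_
    filter_upwards [hd.eventually (gt_mem_nhds h)] with z hz
    rw [Real.sign_of_neg hz]; simp
  · rw [ContinuousAt, h, Real.sign_zero, zero_mul]
    have h1 : Tendsto (fun z => |F z|) (𝓝 z₀) (𝓝 0) := by
      have := hF.abs; rw [ContinuousAt, h0 h, abs_zero] at this; exact this
    refine squeeze_zero_norm (fun z => ?_) h1
    rw [norm_mul, Real.norm_eq_abs, Real.norm_eq_abs]
    rcases Real.sign_apply_eq (d z) with h | h | h <;> rw [h] <;> simp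
  · refine hF.congr ?_
    filter_upwards [hd.eventually (lt_mem_nhds h)] with z hz
    rw [Real.sign_of_pos hz]; simp

lemma LOK.layer1 (h : LOK ρ R δ) (hq : ∀ y z, |q y - q z| ≤ Q * |y - z|) :
    ∃ N : ℝ → ℝ → ℝ, (∀ z : ℝ × ℝ, z.1 ∈ Ioo 0 δ → ContinuousAt (fun z : ℝ × ℝ => N z.1 z.2) z) ∧
      ∀ t x, Pt K1 ρ (fun y => y) q t x = N t x - 1 / 2 * ρ t * Real.sign (x - q t) := by
  have hqc : Continuous q := by
    refine (LipschitzWith.of_dist_le_mul (K := Q.toNNReal) fun x y => ?_).continuous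
    rw [Real.dist_eq, Real.dist_eq]
    exact (hq x y).trans (mul_le_mul_of_nonneg_right (Real.le_coe_toNNReal Q) (abs_nonneg _))
  have hk : ∀ z : ℝ × ℝ, ∀ r, |K1 r (z.2 - q (z.1 - r)) - K1 r (z.2 - q z.1)| ≤ 3 / 2 * Q * kap r := by
    intro z r
    rcases le_or_gt r 0 with hr | hr
    · simp [K1_np hr, kap_np hr]
    apply K1_lip'
    have := hq z.1 (z.1 - r)
    rw [show z.1 - (z.1 - r) = r by ring, abs_of_pos hr] at this
    convert this using 2; ring
  have hm : ∀ z : ℝ × ℝ, Measurable fun r => K1 r (z.2 - q (z.1 - r)) - K1 r (z.2 - q z.1) := fun z =>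
    (K1_meas measurable_id (by have := hqc.measurable; fun_prop)).sub (K1_meas measurable_id measurable_const)
  refine ⟨fun t x => (∫ r, ρ (t - r) * (K1 r (x - q (t - r)) - K1 r (x - q t))) +
    Real.sign (x - q t) * (1 / 2 * ρ t - Ht ρ t (x - q t)), ?_, ?_⟩
  · intro z hz
    refine ContinuousAt.add ?_ (sign_mul_cont (d := fun z => z.2 - q z.1) ?_ (by fun_prop) ?_)
    · refine h.lcont (k := fun z r => K1 r (z.2 - q (z.1 - r)) - K1 r (z.2 - q z.1)) hm
        (Eventually.of_forall hk) ?_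
      intro r hr
      refine ContinuousAt.sub ?_ ?_
      · exact (K1_cont (z := (r, z.2 - q (z.1 - r))) (by simp [hr.ne'])).comp (f := fun z : ℝ × ℝ => (r, z.2 - q (z.1 - r))) (by fun_prop)
      · exact (K1_cont (z := (r, z.2 - q z.1)) (by simp [hr.ne'])).comp (f := fun z : ℝ × ℝ => (r, z.2 - q z.1)) (by fun_prop)
    · refine (continuousAt_const.mul ((h.contAt hz.1.ne' hz.2.ne).comp (f := fun z : ℝ × ℝ => z.1) (by fun_prop))).sub ?_
      exact (h.Ht_cont (z₀ := (z.1, z.2 - q z.1)) hz).comp (f := fun z : ℝ × ℝ => (z.1, z.2 - q z.1)) (by fun_prop)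
    · intro h0; rw [h0, Ht_zero]; ring
  · intro t x
    have hi2 : Integrable fun r => ρ (t - r) * K1 r (x - q t) := by
      rcases eq_or_ne (x - q t) 0 with h0 | h0
      · simp [h0, K1_zero]
      · exact h.lint (K1_meas measurable_id measurable_const) fun r => K1_far (abs_pos.2 h0) le_rfl
    have e : ∫ r, ρ (t - r) * K1 r (x - q (t - r)) =
        (∫ r, ρ (t - r) * (K1 r (x - q (t - r)) - K1 r (x - q t))) + ∫ r, ρ (t - r) * K1 r (x - q t) := by
      rw [← integral_add (h.lint (hm (t, x)) (hk (t, x))) hi2]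
      congr 1; ext r; ring
    rw [Pt_r, e, flat_eq]; ring
end lay

structure IOK (Φ : ℝ → ℝ) (L M s₁ : ℝ) : Prop where
  even : ∀ x, Φ (-x) = Φ x
  lip : ∀ x y, |Φ x - Φ y| ≤ L * |x - y|
  nn : ∀ x, 0 ≤ Φ x
  bd : ∀ x, Φ x ≤ M
  supp : ∀ x, s₁ ≤ |x| → Φ x = 0

lemma K0_mass {t : ℝ} (ht : 0 < t) : Integrable (K0 t) ∧ ∫ y, K0 t y = 1 := by
  have e : K0 t = fun y => kap t * exp (-(1 / (4 * t)) * y ^ 2) := by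
    ext y; simp only [K0, G, pow_zero, one_mul]; congr 2; ring
  have hb : 0 < 1 / (4 * t) := by positivity
  rw [e]
  refine ⟨(integrable_exp_neg_mul_sq hb).const_mul _, ?_⟩
  rw [integral_const_mul, integral_gaussian, kap, show π / (1 / (4 * t)) = 4 * π * t by field_simp]
  have : √(4 * π * t) ≠ 0 := by positivity
  field_simp

lemma K1_dom {t y : ℝ} (ht : 0 < t) : |K1 t y| ≤ 2 / √t * K0 (2 * t) y := by
  have hst : 0 < √t := Real.sqrt_pos.2 ht
  have hs2 : √t ^ 2 = t := Real.sq_sqrt ht.le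
  have h1 : |y| / (2 * √t) ≤ exp (y ^ 2 / (8 * t)) := by
    have := Real.add_one_le_exp (y ^ 2 / (8 * t))
    have e : y ^ 2 / (8 * t) = (|y| / (2 * √t)) ^ 2 / 2 := by
      rw [div_pow, sq_abs, mul_pow, hs2]; field_simp; norm_num
    rw [e] at this ⊢
    nlinarith [sq_nonneg (|y| / (2 * √t) - 1)]
  have hk : kap t = √2 * kap (2 * t) := by
    rw [kap, kap, show 4 * π * (2 * t) = 2 * (4 * π * t) by ring, Real.sqrt_mul zero_le_two, mul_inv]
    field_simp
  have h2 : √2 ≤ 2 := by rw [Real.sqrt_le_left zero_le_two]; norm_num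
  have e1 : |K1 t y| = (|y| / (2 * √t)) * (√2 / √t) * kap (2 * t) * exp (-(y ^ 2 / (4 * t))) := by
    simp only [K1, G, hk, abs_mul, abs_neg, abs_div, abs_inv, abs_pow, abs_of_pos ht, abs_of_pos (exp_pos _),
      abs_of_nonneg (kap_nonneg (2 * t)), abs_of_nonneg (Real.sqrt_nonneg 2)]
    norm_num
    rw [show |y| / (2 * √t) * (√2 / √t) = |y| * √2 / (2 * √t ^ 2) by field_simp, hs2]
    field_simp
  have e2 : K0 (2 * t) y = kap (2 * t) * (exp (y ^ 2 / (8 * t)) * exp (-(y ^ 2 / (4 * t)))) := by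
    rw [← Real.exp_add]; simp only [K0, G, pow_zero, one_mul]; congr 2; field_simp; ring
  rw [e1, e2]
  have := kap_nonneg (2 * t)
  calc _ ≤ exp (y ^ 2 / (8 * t)) * (2 / √t) * kap (2 * t) * exp (-(y ^ 2 / (4 * t))) := by gcongr
    _ = _ := by ring

lemma K1_L1 {t : ℝ} (ht : 0 < t) : Integrable (K1 t) ∧ ∫ y, |K1 t y| ≤ 2 / √t := by
  have h2 := K0_mass (t := 2 * t) (by positivity)
  have hi : Integrable (K1 t) := (h2.1.const_mul (2 / √t)).mono'
    (K1_meas measurable_const measurable_id).aestronglyMeasurable (ae_of_all _ fun y => K1_dom ht)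
  refine ⟨hi, ?_⟩
  calc _ ≤ ∫ y, 2 / √t * K0 (2 * t) y := integral_mono hi.abs (h2.1.const_mul _) fun y => K1_dom ht
    _ = _ := by rw [integral_const_mul, h2.2, mul_one]

def Ini (k : ℝ → ℝ → ℝ) (Φ : ℝ → ℝ) (t x : ℝ) : ℝ := Pt k Φ (fun _ => 0) (fun y => y) t x

section ini
variable {Φ : ℝ → ℝ} {L M s₁ : ℝ}

lemma IOK.cont (h : IOK Φ L M s₁) : Continuous Φ := by
  refine (LipschitzWith.of_dist_le_mul (K := L.toNNReal) fun x y => ?_).continuous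
  rw [Real.dist_eq, Real.dist_eq]
  exact (h.lip x y).trans (mul_le_mul_of_nonneg_right (Real.le_coe_toNNReal L) (abs_nonneg _))

lemma IOK.L0 (h : IOK Φ L M s₁) : 0 ≤ L := by
  have := (abs_nonneg _).trans (h.lip 1 0); simpa using this

lemma IOK.ptok (h : IOK Φ L M s₁) : PtOK Φ (fun _ => 0) (fun y => y) (-s₁) s₁ where
  int := h.cont.integrable_of_hasCompactSupport (by
    refine HasCompactSupport.intro (isCompact_Icc (a := -s₁) (b := s₁)) fun x hx => h.supp x ?_
    by_contra h2; push Not at h2; exact hx ⟨(abs_lt.1 h2).1.le, (abs_lt.1 h2).2.le⟩)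
  supp := fun x hx => h.supp x (by
    by_contra h2; push Not at h2; exact hx ⟨(abs_lt.1 h2).1.le, (abs_lt.1 h2).2.le⟩)
  c1 := continuous_const
  c2 := continuous_id

lemma Ini_y (k : ℝ → ℝ → ℝ) (t x : ℝ) : Ini k Φ t x = ∫ y, Φ (x - y) * k t y := by
  rw [Ini, Pt, ← integral_sub_left_eq_self _ volume x]
  simp only [sub_sub_cancel, sub_zero]

lemma IOK.int_mul (h : IOK Φ L M s₁) {k : ℝ → ℝ} (hk : Integrable k) (x : ℝ) :
    Integrable fun y => Φ (x - y) * k y := by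
  refine hk.bdd_mul (c := M) (h.cont.comp (by fun_prop)).aestronglyMeasurable (ae_of_all _ fun y => ?_)
  rw [Real.norm_eq_abs, abs_of_nonneg (h.nn _)]; exact h.bd _

lemma IOK.I_bd (h : IOK Φ L M s₁) {t : ℝ} (ht : 0 < t) (x : ℝ) : 0 ≤ Ini K0 Φ t x ∧ Ini K0 Φ t x ≤ M := by
  rw [Ini_y]
  obtain ⟨h1, h2⟩ := K0_mass ht
  refine ⟨integral_nonneg fun y => mul_nonneg (h.nn _) (K0_nonneg _ _), ?_⟩
  calc _ ≤ ∫ y, M * K0 t y := integral_mono (h.int_mul h1 x) (h1.const_mul M) fun y =>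
        mul_le_mul_of_nonneg_right (h.bd _) (K0_nonneg _ _)
    _ = M := by rw [integral_const_mul, h2, mul_one]

lemma IOK.diff (h : IOK Φ L M s₁) {k : ℝ → ℝ} (hk : Integrable k) (x x' : ℝ) :
    |(∫ y, Φ (x - y) * k y) - ∫ y, Φ (x' - y) * k y| ≤ L * |x - x'| * ∫ y, |k y| := by
  rw [← integral_sub (h.int_mul hk x) (h.int_mul hk x'), ← integral_const_mul]
  rw [← Real.norm_eq_abs]
  refine norm_integral_le_of_norm_le (hk.abs.const_mul _) (ae_of_all _ fun y => ?_)
  rw [← sub_mul, norm_mul]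
  refine mul_le_mul_of_nonneg_right ?_ (abs_nonneg _)
  have := h.lip (x - y) (x' - y)
  rwa [sub_sub_sub_cancel_right] at this

lemma IOK.I_lip (h : IOK Φ L M s₁) {t : ℝ} (ht : 0 < t) (x x' : ℝ) :
    |Ini K0 Φ t x - Ini K0 Φ t x'| ≤ L * |x - x'| := by
  rw [Ini_y, Ini_y]
  have := h.diff (K0_mass ht).1 x x'
  simp only [abs_of_nonneg (K0_nonneg _ _)] at this
  rwa [(K0_mass ht).2, mul_one] at this

lemma IOK.J_lip (h : IOK Φ L M s₁) {t : ℝ} (ht : 0 < t) (x x' : ℝ) :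
    |Ini K1 Φ t x - Ini K1 Φ t x'| ≤ L * |x - x'| * (2 / √t) := by
  rw [Ini_y, Ini_y]
  have := h.L0
  exact (h.diff (K1_L1 ht).1 x x').trans (mul_le_mul_of_nonneg_left (K1_L1 ht).2 (by positivity))

lemma IOK.heat (h : IOK Φ L M s₁) {t : ℝ} (ht : 0 < t) (x : ℝ) :
    HasDerivAt (fun τ => Ini K0 Φ τ x) (Ini K2 Φ t x) t ∧
    HasDerivAt (fun y => Ini K0 Φ t y) (Ini K1 Φ t x) x ∧
    HasDerivAt (fun y => Ini K1 Φ t y) (Ini K2 Φ t x) x :=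
  Pt_heat h.ptok fun y _ h0 => ht.ne (Prod.ext_iff.1 h0).1

lemma IOK.I_cont (h : IOK Φ L M s₁) {k : ℝ → ℝ → ℝ}
    (kc : ∀ z : ℝ × ℝ, z ≠ 0 → ContinuousAt (fun q : ℝ × ℝ => k q.1 q.2) z) {z : ℝ × ℝ} (hz : 0 < z.1) :
    ContinuousAt (fun q : ℝ × ℝ => Ini k Φ q.1 q.2) z :=
  Pt_cont h.ptok kc fun y _ h0 => hz.ne (Prod.ext_iff.1 h0).1

lemma IOK.J_bd (h : IOK Φ L M s₁) {t : ℝ} (ht : 0 < t) (x : ℝ) : |Ini K1 Φ t x| ≤ L :=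
  (h.heat ht x).2.1.le_of_lip' h.L0 (Eventually.of_forall fun y => h.I_lip ht y x)

lemma IOK.I_near (h : IOK Φ L M s₁) {t : ℝ} (ht : 0 < t) (x : ℝ) :
    |Ini K0 Φ t x - Φ x| ≤ 4 * L * √t := by
  obtain ⟨h1, h2⟩ := K0_mass ht
  have hL := h.L0
  have e : Φ x = ∫ y, Φ x * K0 t y := by rw [integral_const_mul, h2, mul_one]
  rw [Ini_y, e, ← integral_sub (h.int_mul h1 x) (h1.const_mul _)]
  have hs2 : √t * √t = t := Real.mul_self_sqrt ht.le
  have hst : 0 < √t := Real.sqrt_pos.2 ht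
  have hi := (K1_L1 ht).1.abs.const_mul (2 * t * L)
  rw [← Real.norm_eq_abs]
  refine (norm_integral_le_of_norm_le hi (ae_of_all _ fun y => ?_)).trans ?_
  · rw [← sub_mul, norm_mul, Real.norm_eq_abs, Real.norm_eq_abs, abs_of_nonneg (K0_nonneg _ _)]
    have e : |K1 t y| = |y| / (2 * t) * K0 t y := by
      rw [← abs_of_nonneg (K0_nonneg t y), ← abs_of_pos (by positivity : 0 < 2 * t), ← abs_div, ← abs_mul, ← abs_neg]
      congr 1; simp only [K1, K0, G]; field_simp
    have := h.lip (x - y) x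
    rw [show x - y - x = -y by ring, abs_neg] at this
    rw [e]
    calc _ ≤ L * |y| * K0 t y := mul_le_mul_of_nonneg_right this (K0_nonneg _ _)
      _ = _ := by field_simp
  · rw [integral_const_mul]
    calc _ ≤ 2 * t * L * (2 / √t) := mul_le_mul_of_nonneg_left (K1_L1 ht).2 (by positivity)
      _ = _ := by rw [← hs2]; field_simp; rw [Real.sqrt_sq hst.le]; ring

lemma IOK.I_even (h : IOK Φ L M s₁) (t x : ℝ) : Ini K0 Φ t (-x) = Ini K0 Φ t x := by
  rw [Ini_y, Ini_y, ← integral_neg_eq_self]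
  congr 1; ext y; rw [K0_neg, ← h.even]; congr 2; ring

lemma IOK.J_odd (h : IOK Φ L M s₁) (t x : ℝ) : Ini K1 Φ t (-x) = -Ini K1 Φ t x := by
  rw [Ini_y, Ini_y, ← integral_neg_eq_self, ← integral_neg]
  congr 1; ext y; rw [K1_neg, ← h.even, show -(-x - -y) = x - y by ring]; ring
end ini

lemma maxpr2 {b : ℝ → ℝ} {T X : ℝ} {W : ℝ → ℝ → ℝ} (hb : ContinuousOn b (Icc 0 T))
    (hb0 : ∀ t ∈ Icc 0 T, b t < X)
    (hW : ContinuousOn (fun q : ℝ × ℝ => W q.1 q.2)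
      {q : ℝ × ℝ | q.1 ∈ Icc 0 T ∧ q.2 ∈ Icc (b q.1) X})
    (h0 : ∀ x ∈ Icc (b 0) X, W 0 x ≤ 0) (hr : ∀ t ∈ Ioc 0 T, W t X ≤ 0)
    (hl : ∀ t ∈ Ioc 0 T, 0 < W t (b t) → ∃ d > 0, HasDerivWithinAt (W t) d (Ici (b t)) (b t))
    (hi : ∀ t ∈ Ioc 0 T, ∀ x ∈ Ioo (b t) X, ∃ a c W', HasDerivAt (fun τ => W τ x) a t ∧
      (∀ᶠ y in 𝓝 x, HasDerivAt (W t) (W' y) y) ∧ HasDerivAt W' c x ∧ a ≤ c) :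
    ∀ t ∈ Icc 0 T, ∀ x ∈ Icc (b t) X, W t x ≤ 0 := by
  intro t ht x hx
  by_contra hpos
  push Not at hpos
  have hb' : ContinuousOn (fun t => X - b t) (Icc 0 T) := by fun_prop
  have hcomp : IsCompact {q : ℝ × ℝ | q.1 ∈ Icc 0 T ∧ q.2 ∈ Icc (b q.1) X} := by
    convert (region_compact hb' fun t ht => sub_pos.2 (hb0 t ht)).image
      (f := fun q : ℝ × ℝ => (q.1, X - q.2)) (by fun_prop) using 1
    ext ⟨t, x⟩
    simp only [mem_ofPred_eq, mem_image, Prod.mk.injEq, Prod.exists]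
    constructor
    · rintro ⟨ht, hx⟩
      exact ⟨t, X - x, ⟨ht, by linarith [hx.2], by linarith [hx.1]⟩, rfl, by ring⟩
    · rintro ⟨t', y, ⟨ht, hy⟩, rfl, rfl⟩
      exact ⟨ht, by linarith [hy.2], by linarith [hy.1]⟩
  obtain ⟨⟨t₀, x₀⟩, hq, hp, hm⟩ := exp_max hcomp hW
    (q := (t, x)) ⟨ht, hx⟩ hpos
  simp only [mem_ofPred_eq] at hq hp hm
  obtain ⟨ht0, hx0⟩ := hq
  have htp : t₀ ∈ Ioc 0 T := by
    refine ⟨lt_of_le_of_ne ht0.1 fun h => ?_, ht0.2⟩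
    subst h
    linarith [h0 x₀ hx0]
  have hmx : ∀ y ∈ Icc (b t₀) X, W t₀ y ≤ W t₀ x₀ := fun y hy => by
    simpa using hm (t₀, y) ⟨ht0, hy⟩
  have hxb : x₀ < X := by
    refine lt_of_le_of_ne hx0.2 fun h => ?_
    subst h
    linarith [hr t₀ htp]
  rcases hx0.1.eq_or_lt with h | h
  · subst h
    obtain ⟨d, hd, hd2⟩ := hl t₀ htp hp
    have := left_end hd2 (by
      filter_upwards [Ioo_mem_nhdsGT hxb] with y hy using hmx y ⟨hy.1.le, hy.2.le⟩)
    linarith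
  · obtain ⟨a, c, W', h1, h2, h3, h4⟩ := hi t₀ htp x₀ ⟨h, hxb⟩
    have h5 := dd_nonpos h2 h3 (by
      filter_upwards [Ioo_mem_nhds h hxb] with y hy using hmx y ⟨hy.1.le, hy.2.le⟩)
    have h6 := dt_ge h1 (by
      filter_upwards [left_mem hb' htp (x := X - x₀) (by linarith)] with τ hτ
      exact hm (τ, x₀) ⟨hτ.1, by linarith [hτ.2], hxb.le⟩)
    linarith

/-- the combined potential -/
def VV (k : ℝ → ℝ → ℝ) (Φ f ρ s : ℝ → ℝ) (t x : ℝ) : ℝ :=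
  Ini k Φ t x + 2 * Pt k f (fun y => y) (fun _ => 0) t x - Pt k ρ (fun y => y) s t x
    - Pt k ρ (fun y => y) (fun y => -s y) t x

structure VOK (Φ f ρ s : ℝ → ℝ) (L M s₁ R δ : ℝ) : Prop where
  iok : IOK Φ L M s₁
  fok : LOK f R δ
  rok : LOK ρ R δ
  slip : ∀ y z, |s y - s z| ≤ R * |y - z|
  spos : ∀ y, 0 < s y
  s0 : s 0 = s₁

section vok
variable {Φ f ρ s : ℝ → ℝ} {L M s₁ R δ : ℝ}

lemma lip_cont {q : ℝ → ℝ} {Q : ℝ} (hq : ∀ y z, |q y - q z| ≤ Q * |y - z|) : Continuous q := by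
  refine (LipschitzWith.of_dist_le_mul (K := Q.toNNReal) fun x y => ?_).continuous
  rw [Real.dist_eq, Real.dist_eq]
  exact (hq x y).trans (mul_le_mul_of_nonneg_right (Real.le_coe_toNNReal Q) (abs_nonneg _))

lemma VOK.sc (h : VOK Φ f ρ s L M s₁ R δ) : Continuous s := lip_cont h.slip

lemma VOK.slip' (h : VOK Φ f ρ s L M s₁ R δ) (y z : ℝ) : |-s y - -s z| ≤ R * |y - z| := by
  rw [show -s y - -s z = -(s y - s z) by ring, abs_neg]; exact h.slip y z

lemma LOK.P0_cont {ρ q : ℝ → ℝ} (h : LOK ρ R δ) (hq : Continuous q) (z : ℝ × ℝ) :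
    ContinuousAt (fun z : ℝ × ℝ => Pt K0 ρ (fun y => y) q z.1 z.2) z := by
  simp only [Pt_r]
  refine h.lcont (k := fun z r => K0 r (z.2 - q (z.1 - r))) (C := 1)
    (fun z => K0_meas measurable_id (by have := hq.measurable; fun_prop))
    (Eventually.of_forall fun z r => by rw [one_mul]; exact K0_le _ _) ?_
  intro r hr
  exact (K0_cont (z := (r, z.2 - q (z.1 - r))) (by simp [hr.ne'])).comp (f := fun z : ℝ × ℝ => (r, z.2 - q (z.1 - r))) (by fun_prop)

lemma LOK.P0_bd {ρ q : ℝ → ℝ} (h : LOK ρ R δ) {t : ℝ} (ht : 0 ≤ t) (x : ℝ) :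
    |Pt K0 ρ (fun y => y) q t x| ≤ R * √t := by
  rw [Pt_r]
  have := h.lbound (k := fun r => K0 r (x - q (t - r))) ht zero_le_one (fun r => by rw [one_mul]; exact K0_le _ _)
  rwa [mul_one] at this

lemma VOK.cont0 (h : VOK Φ f ρ s L M s₁ R δ) {z : ℝ × ℝ} (hz : 0 < z.1) :
    ContinuousAt (fun z : ℝ × ℝ => VV K0 Φ f ρ s z.1 z.2) z := by
  have := h.sc
  exact (((h.iok.I_cont (fun _ => K0_cont) hz).add ((h.fok.P0_cont continuous_const z).const_mul 2)).sub
    (h.rok.P0_cont h.sc z)).sub (h.rok.P0_cont (q := fun y => -s y) (by fun_prop) z)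

lemma VOK.near (h : VOK Φ f ρ s L M s₁ R δ) {t : ℝ} (ht : 0 < t) (x : ℝ) :
    |VV K0 Φ f ρ s t x - Φ x| ≤ (4 * L + 4 * R) * √t := by
  have h1 := abs_le.1 (h.iok.I_near ht x)
  have h2 := abs_le.1 (h.fok.P0_bd (q := fun _ => 0) ht.le x)
  have h3 := abs_le.1 (h.rok.P0_bd (q := s) ht.le x)
  have h4 := abs_le.1 (h.rok.P0_bd (q := fun y => -s y) ht.le x)
  rw [VV, abs_le]; constructor <;> linarith [h1.1, h1.2]

lemma P1_flip {ρ q : ℝ → ℝ} (t x : ℝ) :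
    Pt K1 ρ (fun y => y) q t (-x) = -Pt K1 ρ (fun y => y) (fun y => -q y) t x := by
  rw [Pt, Pt, ← integral_neg]
  congr 1; ext y
  rw [show -x - q y = -(x - -q y) by ring, K1_neg]; ring

lemma VOK.odd (h : VOK Φ f ρ s L M s₁ R δ) (t : ℝ) : VV K1 Φ f ρ s t 0 = 0 := by
  have h1 := h.iok.J_odd t 0
  have h2 := P1_flip (ρ := f) (q := fun _ => 0) t 0
  have h3 := P1_flip (ρ := ρ) (q := s) t 0
  rw [neg_zero] at h1 h2 h3
  rw [VV]; linarith

lemma VOK.heat (h : VOK Φ f ρ s L M s₁ R δ) {t x : ℝ} (ht : 0 < t) (h0 : 0 < x) (hx : x ≠ s t) :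
    HasDerivAt (fun τ => VV K0 Φ f ρ s τ x) (VV K2 Φ f ρ s t x) t ∧
    HasDerivAt (VV K0 Φ f ρ s t) (VV K1 Φ f ρ s t x) x ∧
    HasDerivAt (VV K1 Φ f ρ s t) (VV K2 Φ f ρ s t x) x := by
  have hs := h.sc
  have h1 := h.iok.heat ht x
  have h2 := Pt_heat (h.fok.ptok (q := fun _ => 0) continuous_const) (t := t) (x := x) (fun y _ he => by
    obtain ⟨rfl, he⟩ := Prod.ext_iff.1 he; exact h0.ne he)
  have h3 := Pt_heat (h.rok.ptok h.sc) (t := t) (x := x) (fun y _ he => by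
    obtain ⟨rfl, he⟩ := Prod.ext_iff.1 he; exact hx he.symm)
  have h4 := Pt_heat (h.rok.ptok (q := fun y => -s y) (by fun_prop)) (t := t) (x := x) (fun y _ he => by
    have := (Prod.ext_iff.1 he).2; simp at this; linarith [h.spos y])
  exact ⟨((h1.1.add (h2.1.const_mul 2)).sub h3.1).sub h4.1,
    ((h1.2.1.add (h2.2.1.const_mul 2)).sub h3.2.1).sub h4.2.1,
    ((h1.2.2.add (h2.2.2.const_mul 2)).sub h3.2.2).sub h4.2.2⟩

lemma VOK.cont2 (h : VOK Φ f ρ s L M s₁ R δ) {z : ℝ × ℝ} (ht : 0 < z.1) (h0 : 0 < z.2) (hx : z.2 ≠ s z.1) :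
    ContinuousAt (fun z : ℝ × ℝ => VV K2 Φ f ρ s z.1 z.2) z := by
  have hs := h.sc
  have h1 := h.iok.I_cont (fun _ => K2_cont) ht
  have h2 := Pt_cont (h.fok.ptok (q := fun _ => 0) continuous_const) (fun _ => K2_cont) (z := z) (fun y _ he => by
    subst he; exact h0.ne rfl)
  have h3 := Pt_cont (h.rok.ptok h.sc) (fun _ => K2_cont) (z := z) (fun y _ he => by
    subst he; exact hx rfl)
  have h4 := Pt_cont (h.rok.ptok (q := fun y => -s y) (by fun_prop)) (fun _ => K2_cont) (z := z) (fun y _ he => by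
    subst he; simp at h0; linarith [h.spos y])
  exact ((h1.add (h2.const_mul 2)).sub h3).sub h4

/-- one-sided gradient -/
lemma VOK.grad (h : VOK Φ f ρ s L M s₁ R δ)
    (hρ : ∀ t ∈ Ioo 0 δ, ρ t = -2 * VV K1 Φ f ρ s t (s t)) :
    ∃ D : ℝ → ℝ → ℝ, (∀ z : ℝ × ℝ, z.1 ∈ Ioo 0 δ → ContinuousAt (fun z : ℝ × ℝ => D z.1 z.2) z) ∧
      ∀ t ∈ Ioo 0 δ, D t 0 = -f t ∧ D t (s t) = -ρ t ∧ (∀ x, 0 < x → x < s t → VV K1 Φ f ρ s t x = D t x) ∧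
        (∀ x, s t < x → VV K1 Φ f ρ s t x = D t x + ρ t) := by
  obtain ⟨N1, c1, e1⟩ := h.fok.layer1 (q := fun _ => 0) (Q := 0) (by simp)
  obtain ⟨N2, c2, e2⟩ := h.rok.layer1 h.slip
  obtain ⟨N3, c3, e3⟩ := h.rok.layer1 (q := fun y => -s y) h.slip'
  refine ⟨fun t x => Ini K1 Φ t x + 2 * N1 t x - N2 t x - N3 t x - f t, ?_, ?_⟩
  · intro z hz
    refine ((((h.iok.I_cont (fun _ => K1_cont) hz.1).add ((c1 z hz).const_mul 2)).sub (c2 z hz)).sub (c3 z hz)).sub ?_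
    exact (h.fok.contAt hz.1.ne' hz.2.ne).comp (f := fun z : ℝ × ℝ => z.1) (by fun_prop)
  · intro t ht
    have hs := h.spos t
    have e : ∀ x, VV K1 Φ f ρ s t x = Ini K1 Φ t x + 2 * N1 t x - N2 t x - N3 t x
        - f t * Real.sign x + 1 / 2 * ρ t * Real.sign (x - s t) + 1 / 2 * ρ t * Real.sign (x + s t) := by
      intro x
      rw [VV, e1, e2, e3, sub_zero, sub_neg_eq_add]; ring
    refine ⟨?_, ?_, ?_, ?_⟩
    · have := e 0
      rw [h.odd, Real.sign_zero, zero_sub, zero_add, Real.sign_of_pos hs, Real.sign_of_neg (by linarith)] at this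
      linarith
    · have := e (s t)
      rw [sub_self, Real.sign_zero, Real.sign_of_pos hs, Real.sign_of_pos (by linarith)] at this
      have := hρ t ht
      simp only; linarith
    · intro x h0 h1
      rw [e x, Real.sign_of_pos h0, Real.sign_of_neg (by linarith : x - s t < 0), Real.sign_of_pos (by linarith : 0 < x + s t)]
      ring
    · intro x h1
      rw [e x, Real.sign_of_pos (by linarith), Real.sign_of_pos (by linarith : 0 < x - s t), Real.sign_of_pos (by linarith : 0 < x + s t)]
      ring
end vok

def UU (Φ f ρ s : ℝ → ℝ) (t x : ℝ) : ℝ := if t ≤ 0 then Φ x else VV K0 Φ f ρ s t x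

section build
variable {Φ f ρ s : ℝ → ℝ} {L M s₁ R δ : ℝ}

lemma UU_pos {t x : ℝ} (ht : 0 < t) : UU Φ f ρ s t x = VV K0 Φ f ρ s t x := if_neg (not_le.2 ht)

lemma VOK.near' (h : VOK Φ f ρ s L M s₁ R δ) (t x : ℝ) :
    |UU Φ f ρ s t x - Φ x| ≤ (4 * L + 4 * R) * √t := by
  rcases le_or_gt t 0 with ht | ht
  · rw [UU, if_pos ht, sub_self, abs_zero, Real.sqrt_eq_zero_of_nonpos ht, mul_zero]
  · rw [UU_pos ht]; exact h.near ht x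

lemma VOK.U_cont (h : VOK Φ f ρ s L M s₁ R δ) : Continuous (fun z : ℝ × ℝ => UU Φ f ρ s z.1 z.2) := by
  rw [continuous_iff_continuousAt]
  intro z
  rcases le_or_gt z.1 0 with hz | hz
  · have h1 : Tendsto (fun z : ℝ × ℝ => UU Φ f ρ s z.1 z.2 - Φ z.2) (𝓝 z) (𝓝 0) := by
      refine squeeze_zero_norm (fun z => h.near' z.1 z.2) ?_
      have : Continuous fun z : ℝ × ℝ => (4 * L + 4 * R) * √z.1 := by fun_prop
      have := this.tendsto z
      rwa [Real.sqrt_eq_zero_of_nonpos hz, mul_zero] at this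
    have h2 := h1.add ((h.iok.cont.comp continuous_snd).tendsto z)
    rw [ContinuousAt, UU, if_pos hz]
    simpa using h2
  · refine (h.cont0 hz).congr ?_
    filter_upwards [(continuous_fst.tendsto z).eventually (lt_mem_nhds hz)] with y hy
    exact (UU_pos hy).symm

lemma VOK.U_bd (h : VOK Φ f ρ s L M s₁ R δ) {t T : ℝ} (ht : t ≤ T) (x : ℝ) :
    |UU Φ f ρ s t x| ≤ M + (4 * L + 4 * R) * √T := by
  have h1 := abs_le.1 (h.near' t x)
  have h2 := h.iok.nn x
  have h3 := h.iok.bd x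
  have h4 : (4 * L + 4 * R) * √t ≤ (4 * L + 4 * R) * √T := by
    have := h.iok.L0; have := h.fok.R0; gcongr
  rw [abs_le]; constructor <;> linarith [h1.1, h1.2]

lemma VOK.slice (h : VOK Φ f ρ s L M s₁ R δ) {t : ℝ} (ht : 0 < t) : Continuous (VV K0 Φ f ρ s t) := by
  have h1 : Continuous fun x => UU Φ f ρ s t x := h.U_cont.comp (by fun_prop : Continuous fun x : ℝ => (t, x))
  simpa only [UU_pos ht] using h1

lemma VOK.ends (h : VOK Φ f ρ s L M s₁ R δ) {D : ℝ → ℝ → ℝ}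
    (hD : ∀ z : ℝ × ℝ, z.1 ∈ Ioo 0 δ → ContinuousAt (fun z : ℝ × ℝ => D z.1 z.2) z)
    {t : ℝ} (ht : t ∈ Ioo 0 δ) (h1 : D t (s t) = -ρ t) (h2 : ∀ x, 0 < x → x < s t → VV K1 Φ f ρ s t x = D t x)
    (h3 : ∀ x, s t < x → VV K1 Φ f ρ s t x = D t x + ρ t) :
    HasDerivWithinAt (VV K0 Φ f ρ s t) (D t 0) (Ici 0) 0 ∧
    HasDerivWithinAt (VV K0 Φ f ρ s t) (D t (s t)) (Iic (s t)) (s t) ∧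
    HasDerivWithinAt (VV K0 Φ f ρ s t) 0 (Ici (s t)) (s t) := by
  have hs := h.spos t
  have hDc : Continuous (D t) := continuous_iff_continuousAt.2 fun x =>
    (hD (t, x) ht).comp (f := fun x : ℝ => (t, x)) (by fun_prop)
  have hd : ∀ x, 0 < x → x ≠ s t → HasDerivAt (VV K0 Φ f ρ s t) (VV K1 Φ f ρ s t x) x := fun x h0 hx =>
    (h.heat ht.1 h0 hx).2.1
  have hc := h.slice ht.1
  refine ⟨?_, ?_, ?_⟩
  · refine hasDerivWithinAt_Ici_of_tendsto_deriv (s := Ioo 0 (s t)) (fun x hx => (hd x hx.1 hx.2.ne).differentiableAt.differentiableWithinAt)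
      hc.continuousWithinAt (Ioo_mem_nhdsGT hs) ?_
    refine ((hDc.tendsto 0).mono_left nhdsWithin_le_nhds).congr' ?_
    filter_upwards [Ioo_mem_nhdsGT hs] with x hx
    rw [(hd x hx.1 hx.2.ne).deriv, h2 x hx.1 hx.2]
  · refine hasDerivWithinAt_Iic_of_tendsto_deriv (s := Ioo 0 (s t)) (fun x hx => (hd x hx.1 hx.2.ne).differentiableAt.differentiableWithinAt)
      hc.continuousWithinAt (Ioo_mem_nhdsLT hs) ?_
    refine ((hDc.tendsto (s t)).mono_left nhdsWithin_le_nhds).congr' ?_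
    filter_upwards [Ioo_mem_nhdsLT hs] with x hx
    rw [(hd x hx.1 hx.2.ne).deriv, h2 x hx.1 hx.2]
  · refine hasDerivWithinAt_Ici_of_tendsto_deriv (s := Ioi (s t)) (fun x hx => (hd x (hs.trans hx) (ne_of_gt hx)).differentiableAt.differentiableWithinAt)
      hc.continuousWithinAt self_mem_nhdsWithin ?_
    have : Tendsto (fun x => D t x + ρ t) (𝓝[>] (s t)) (𝓝 0) := by
      have := ((hDc.tendsto (s t)).add_const (ρ t)).mono_left (nhdsWithin_le_nhds (s := Ioi (s t)))
      rwa [h1, neg_add_cancel] at this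
    refine this.congr' ?_
    filter_upwards [self_mem_nhdsWithin] with x hx
    rw [(hd x (hs.trans hx) (ne_of_gt hx)).deriv, h3 x hx]

lemma bar_dx (ε X t x : ℝ) : HasDerivAt (fun x => ε * ((x - X) ^ 2 + 2 * t + 1)) (ε * (2 * (x - X))) x := by
  have := (((((hasDerivAt_id x).sub_const X).pow 2).add_const (2 * t)).add_const 1).const_mul ε
  refine (this.congr_deriv ?_)
  simp

lemma bar_dxx (ε X x : ℝ) : HasDerivAt (fun x => ε * (2 * (x - X))) (ε * 2) x := by
  have := ((((hasDerivAt_id x).sub_const X)).const_mul 2).const_mul ε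
  refine (this.congr_deriv ?_)
  ring

lemma bar_dt (ε X t x : ℝ) : HasDerivAt (fun t => ε * ((x - X) ^ 2 + 2 * t + 1)) (ε * 2) t := by
  have := ((((hasDerivAt_id t).const_mul 2).const_add ((x - X) ^ 2)).add_const 1).const_mul ε
  refine (this.congr_deriv ?_)
  ring

lemma VOK.hi (h : VOK Φ f ρ s L M s₁ R δ) (e ε X : ℝ) {t x : ℝ} (ht : 0 < t) (h0 : 0 < x) (hx : x ≠ s t) :
    ∃ a c W', HasDerivAt (fun τ => e * UU Φ f ρ s τ x - ε * ((x - X) ^ 2 + 2 * τ + 1)) a t ∧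
      (∀ᶠ y in 𝓝 x, HasDerivAt (fun x => e * UU Φ f ρ s t x - ε * ((x - X) ^ 2 + 2 * t + 1)) (W' y) y) ∧
      HasDerivAt W' c x ∧ a ≤ c := by
  obtain ⟨h1, h2, h3⟩ := h.heat ht h0 hx
  refine ⟨_, _, fun y => e * VV K1 Φ f ρ s t y - ε * (2 * (y - X)), ?_, ?_,
    (h3.const_mul e).sub (bar_dxx ε X x), le_rfl⟩
  · have h1' : HasDerivAt (fun τ => UU Φ f ρ s τ x) (VV K2 Φ f ρ s t x) t := by
      refine h1.congr_of_eventuallyEq ?_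
      filter_upwards [lt_mem_nhds ht] with τ hτ using UU_pos hτ
    exact (h1'.const_mul e).sub (bar_dt ε X t x)
  · simp only [UU_pos ht]
    filter_upwards [lt_mem_nhds h0, isOpen_ne.mem_nhds hx] with y hy hy2
    exact ((h.heat ht hy hy2).2.1.const_mul e).sub (bar_dx ε X t y)

lemma VOK.s_le (h : VOK Φ f ρ s L M s₁ R δ) {t : ℝ} (ht : t ∈ Icc 0 δ) : s t < s₁ + R * δ + 1 := by
  have h1 := (abs_le.1 (h.slip t 0)).2
  rw [h.s0, sub_zero, abs_of_nonneg ht.1] at h1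
  have : R * t ≤ R * δ := mul_le_mul_of_nonneg_left ht.2 h.fok.R0
  linarith

lemma VOK.exterior (h : VOK Φ f ρ s L M s₁ R δ)
    (hl : ∀ t ∈ Ioo 0 δ, HasDerivWithinAt (VV K0 Φ f ρ s t) 0 (Ici (s t)) (s t)) {t x : ℝ}
    (ht : t ∈ Ioo 0 δ) (hx : s t ≤ x) : VV K0 Φ f ρ s t x = 0 := by
  have hs1 : 0 < s₁ := h.s0 ▸ h.spos 0
  have hR := h.fok.R0
  have hδ : 0 < δ := ht.1.trans ht.2
  set X₀ := s₁ + R * δ + 1 with hX₀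
  have hX0p : 0 < X₀ := by positivity
  set B := M + (4 * L + 4 * R) * √t with hB
  have hB0 : 0 ≤ B := (abs_nonneg _).trans (h.U_bd le_rfl 0)
  have key : ∀ e : ℝ, |e| = 1 → e * VV K0 Φ f ρ s t x ≤ 0 := by
    intro e he
    refine le_of_eps (c := ((x - X₀) ^ 2 + 2 * t + 1)) fun ε hε => ?_
    set X := X₀ + |x| + B / ε + 1 with hX
    have hBε : 0 ≤ B / ε := by positivity
    have hub : ∀ τ ≤ t, ∀ y, e * UU Φ f ρ s τ y ≤ B := fun τ hτ y => by
      refine (le_abs_self _).trans ?_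
      rw [abs_mul, he, one_mul]; exact h.U_bd hτ y
    have := maxpr2 (b := s) (T := t) (X := X)
      (W := fun τ x => e * UU Φ f ρ s τ x - ε * ((x - X₀) ^ 2 + 2 * τ + 1)) h.sc.continuousOn ?_ ?_ ?_ ?_ ?_ ?_
      t ⟨ht.1.le, le_rfl⟩ x ⟨hx, by rw [hX]; linarith [le_abs_self x]⟩
    · rw [UU_pos ht.1] at this; linarith
    · intro τ hτ
      have := h.s_le (t := τ) ⟨hτ.1, hτ.2.trans ht.2.le⟩
      rw [hX]; linarith [abs_nonneg x]
    · have := h.U_cont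
      have : Continuous (fun q : ℝ × ℝ => e * UU Φ f ρ s q.1 q.2 - ε * ((q.2 - X₀) ^ 2 + 2 * q.1 + 1)) := by fun_prop
      exact this.continuousOn
    · intro y hy
      have : Φ y = 0 := h.iok.supp y (by rw [← h.s0]; exact hy.1.trans (le_abs_self y))
      simp only [UU, le_refl, if_true, this]
      have : 0 ≤ ε * ((y - X₀) ^ 2 + 2 * 0 + 1) := by positivity
      linarith
    · intro τ hτ
      have h1 := hub τ hτ.2 X
      have h2 : B / ε ≤ (X - X₀) ^ 2 := by
        have : X - X₀ = |x| + B / ε + 1 := by rw [hX]; ring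
        rw [this]; nlinarith [abs_nonneg x]
      have h3 : B ≤ ε * (X - X₀) ^ 2 := by rw [div_le_iff₀ hε] at h2; linarith
      have := hτ.1
      have h4 : 0 < ε * (2 * τ + 1) := by positivity
      nlinarith
    · intro τ hτ _
      have hτδ : τ ∈ Ioo 0 δ := ⟨hτ.1, hτ.2.trans_lt ht.2⟩
      have hsl := h.s_le (t := τ) ⟨hτ.1.le, hτδ.2.le⟩
      refine ⟨_, ?_, (by simp only [UU_pos hτ.1]; exact ((hl τ hτδ).const_mul e).sub (bar_dx ε X₀ τ (s τ)).hasDerivWithinAt)⟩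
      nlinarith
    · intro τ hτ y hy
      exact h.hi e ε X₀ hτ.1 ((h.spos τ).trans hy.1) hy.1.ne'
  have h1 := key 1 (by simp)
  have h2 := key (-1) (by simp)
  linarith

lemma VOK.nonneg (h : VOK Φ f ρ s L M s₁ R δ) (hf : ∀ t, 0 ≤ f t)
    (hr : ∀ t ∈ Ioo 0 δ, VV K0 Φ f ρ s t (s t) = 0)
    (hl : ∀ t ∈ Ioo 0 δ, HasDerivWithinAt (VV K0 Φ f ρ s t) (-f t) (Ici 0) 0) {t x : ℝ}
    (ht : t ∈ Ioo 0 δ) (hx : x ∈ Icc 0 (s t)) : 0 ≤ VV K0 Φ f ρ s t x := by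
  have hs1 : 0 < s₁ := h.s0 ▸ h.spos 0
  have hR := h.fok.R0
  have hδ : 0 < δ := ht.1.trans ht.2
  suffices -VV K0 Φ f ρ s t x ≤ 0 by linarith
  refine le_of_eps (c := ((x - 1) ^ 2 + 2 * t + 1)) fun ε hε => ?_
  have := maxpr (b := s) (T := t) 
      (W := fun τ x => -1 * UU Φ f ρ s τ x - ε * ((x - 1) ^ 2 + 2 * τ + 1)) h.sc.continuousOn (fun τ _ => h.spos τ) ?_ ?_ ?_ ?_ ?_
      t ⟨ht.1.le, le_rfl⟩ x hx
  · rw [UU_pos ht.1] at this; linarith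
  · have := h.U_cont
    have : Continuous (fun q : ℝ × ℝ => -1 * UU Φ f ρ s q.1 q.2 - ε * ((q.2 - 1) ^ 2 + 2 * q.1 + 1)) := by fun_prop
    exact this.continuousOn
  · intro y hy
    have h1 := h.iok.nn y
    simp only [UU, le_refl, if_true]
    have : 0 ≤ ε * ((y - 1) ^ 2 + 2 * 0 + 1) := by positivity
    linarith
  · intro τ hτ
    have := hτ.1
    simp only [UU_pos hτ.1, hr τ ⟨hτ.1, hτ.2.trans_lt ht.2⟩]
    have : 0 ≤ ε * ((s τ - 1) ^ 2 + 2 * τ + 1) := by positivity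
    linarith
  · intro τ hτ _
    have hτδ : τ ∈ Ioo 0 δ := ⟨hτ.1, hτ.2.trans_lt ht.2⟩
    refine ⟨_, ?_, (by simp only [UU_pos hτ.1]; exact ((hl τ hτδ).const_mul (-1)).sub (bar_dx ε 1 τ 0).hasDerivWithinAt)⟩
    nlinarith [hf τ]
  · intro τ hτ y hy
    exact h.hi (-1) ε 1 hτ.1 hy.1 hy.2.ne

def ww (Φ f ρ s : ℝ → ℝ) (t x : ℝ) : ℝ := if t ≤ 0 then Φ x else if x < 0 then VV K0 Φ f ρ s t 0 - f t * x else
  if x ≤ s t then VV K0 Φ f ρ s t x else -ρ t * (x - s t)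

lemma ww_eq {t x : ℝ} (ht : 0 < t) (hx : x ∈ Icc 0 (s t)) : ww Φ f ρ s t x = VV K0 Φ f ρ s t x := by
  rw [ww, if_neg (not_le.2 ht), if_neg (not_lt.2 hx.1), if_pos hx.2]

lemma VOK.build (h : VOK Φ f ρ s L M s₁ R δ) {p T : ℝ} (hf : ∀ t, 0 ≤ f t)
    (hs : ∀ t ∈ Ioo 0 δ, HasDerivAt s (ρ t) t)
    (hρ : ∀ t ∈ Ioo 0 δ, ρ t = -2 * VV K1 Φ f ρ s t (s t))
    (hfe : ∀ t ∈ Ioo 0 δ, 0 ≤ VV K0 Φ f ρ s t 0 → f t = VV K0 Φ f ρ s t 0 ^ p)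
    (hT : 0 < T) (hTδ : T < δ) : IsSolOn p s₁ Φ T s (ww Φ f ρ s) := by
  obtain ⟨D, hD, hDe⟩ := h.grad hρ
  have hsub : ∀ {t}, t ∈ Ioc 0 T → t ∈ Ioo 0 δ := fun ht => ⟨ht.1, ht.2.trans_lt hTδ⟩
  have hends := fun t (ht : t ∈ Ioo 0 δ) => h.ends hD ht (hDe t ht).2.1 (hDe t ht).2.2.1 (hDe t ht).2.2.2
  have hext : ∀ t ∈ Ioo 0 δ, VV K0 Φ f ρ s t (s t) = 0 := fun t ht =>
    h.exterior (fun t ht => (hends t ht).2.2) ht le_rfl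
  have hnn : ∀ t ∈ Ioo 0 δ, ∀ x ∈ Icc 0 (s t), 0 ≤ VV K0 Φ f ρ s t x := fun t ht x hx =>
    h.nonneg hf hext (fun t ht => by have := (hends t ht).1; rwa [(hDe t ht).1] at this) ht hx
  have hloc : ∀ t x, 0 < t → x ∈ Ioo 0 (s t) → ww Φ f ρ s t =ᶠ[𝓝 x] VV K0 Φ f ρ s t := fun t x ht hx => by
    filter_upwards [Ioo_mem_nhds hx.1 hx.2] with y hy using ww_eq ht ⟨hy.1.le, hy.2.le⟩
  have hdt : ∀ t ∈ Ioc 0 T, ∀ x ∈ Ioo 0 (s t), HasDerivAt (fun τ => ww Φ f ρ s τ x) (VV K2 Φ f ρ s t x) t := by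
    intro t ht x hx
    refine (h.heat ht.1 hx.1 hx.2.ne).1.congr_of_eventuallyEq ?_
    filter_upwards [lt_mem_nhds ht.1, (h.sc.tendsto t).eventually (lt_mem_nhds hx.2)] with τ h1 h2
    exact ww_eq h1 ⟨hx.1.le, h2.le⟩
  have hdx : ∀ t ∈ Ioo 0 δ, ∀ x ∈ Icc 0 (s t), HasDerivAt (ww Φ f ρ s t) (D t x) x := by
    intro t ht x hx
    have hst := h.spos t
    obtain ⟨e1, e2, -⟩ := hends t ht
    rcases hx.1.eq_or_lt with h0 | h0
    · subst h0
      rw [← hasDerivWithinAt_univ, ← Iic_union_Ici (a := (0:ℝ))]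
      refine HasDerivWithinAt.union ?_ ?_
      · have : HasDerivWithinAt (fun x => VV K0 Φ f ρ s t 0 - f t * x) (D t 0) (Iic 0) 0 := by
          rw [(hDe t ht).1]
          have := ((hasDerivAt_id (0:ℝ)).const_mul (f t)).const_sub (VV K0 Φ f ρ s t 0)
          rw [mul_one] at this; exact this.hasDerivWithinAt
        refine this.congr (fun y hy => ?_) ?_
        · rcases (show y ≤ 0 from hy).eq_or_lt with h1 | h1
          · rw [h1, ww_eq ht.1 ⟨le_rfl, hst.le⟩]; ring
          · rw [ww, if_neg (not_le.2 ht.1), if_pos h1]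
        · rw [ww_eq ht.1 ⟨le_rfl, hst.le⟩]; ring
      · refine e1.congr_of_eventuallyEq ?_ (ww_eq ht.1 hx)
        filter_upwards [self_mem_nhdsWithin, nhdsWithin_le_nhds (gt_mem_nhds hst)] with y h1 h2
        exact ww_eq ht.1 ⟨h1, h2.le⟩
    rcases hx.2.eq_or_lt with h1 | h1
    · subst h1
      rw [← hasDerivWithinAt_univ, ← Iic_union_Ici (a := s t)]
      refine HasDerivWithinAt.union ?_ ?_
      · refine e2.congr_of_eventuallyEq ?_ (ww_eq ht.1 hx)
        filter_upwards [self_mem_nhdsWithin, nhdsWithin_le_nhds (lt_mem_nhds hst)] with y h1 h2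
        exact ww_eq ht.1 ⟨h2.le, h1⟩
      · have : HasDerivWithinAt (fun x => -ρ t * (x - s t)) (D t (s t)) (Ici (s t)) (s t) := by
          rw [(hDe t ht).2.1]
          have := ((hasDerivAt_id (s t)).sub_const (s t)).const_mul (-ρ t)
          rw [mul_one] at this; exact this.hasDerivWithinAt
        refine this.congr (fun y hy => ?_) ?_
        · rcases (show s t ≤ y from hy).eq_or_lt with h1 | h1
          · rw [← h1, ww_eq ht.1 hx, hext t ht]; ring
          · rw [ww, if_neg (not_le.2 ht.1), if_neg (by linarith), if_neg (by linarith)]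
        · rw [ww_eq ht.1 hx, hext t ht]; ring
    · rw [← (hDe t ht).2.2.1 x h0 h1]
      exact (h.heat ht.1 h0 h1.ne).2.1.congr_of_eventuallyEq (hloc t x ht.1 ⟨h0, h1⟩)
  have hdxx : ∀ t ∈ Ioc 0 T, ∀ x ∈ Ioo 0 (s t), HasDerivAt (deriv (ww Φ f ρ s t)) (VV K2 Φ f ρ s t x) x := by
    intro t ht x hx
    refine (h.heat ht.1 hx.1 hx.2.ne).2.2.congr_of_eventuallyEq ?_
    filter_upwards [Ioo_mem_nhds hx.1 hx.2] with y hy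
    rw [(hdx t (hsub ht) y ⟨hy.1.le, hy.2.le⟩).deriv, (hDe t (hsub ht)).2.2.1 y hy.1 hy.2]
  have hst0 : ∀ t, (0:ℝ) ∈ Icc 0 (s t) := fun t => ⟨le_rfl, (h.spos t).le⟩
  have hstr : ∀ t, s t ∈ Icc 0 (s t) := fun t => ⟨(h.spos t).le, le_rfl⟩
  refine
   { T_pos := hT
     s_cont := h.sc.continuousOn
     s_diff := fun t ht => (hs t (hsub ht)).differentiableAt
     s_deriv_cont := (h.rok.cont.mono fun t ht => hsub ht).congr fun t ht => (hs t (hsub ht)).deriv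
     s_pos := fun t _ => h.spos t
     ut_diff := fun t ht x hx => (hdt t ht x hx).differentiableAt
     ux_diff := fun t ht x hx => (hdx t (hsub ht) x ⟨hx.1.le, hx.2.le⟩).differentiableAt
     uxx_diff := fun t ht x hx => (hdxx t ht x hx).differentiableAt
     ut_cont := ?_
     uxx_cont := ?_
     ux_cont := ?_
     u_cont := ?_
     u_nonneg := ?_
     heat := fun t ht x hx => by rw [(hdt t ht x hx).deriv, (hdxx t ht x hx).deriv]
     bc_zero := ?_
     bc_free := fun t ht => by rw [ww_eq ht.1 (hstr t), hext t (hsub ht)]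
     stefan := fun t ht => by
       rw [(hs t (hsub ht)).deriv, (hdx t (hsub ht) _ (hstr t)).deriv, (hDe t (hsub ht)).2.1, neg_neg]
     init := fun x _ => by rw [ww, if_pos le_rfl]
     init_s := h.s0 }
  · refine ContinuousOn.congr (f := fun q : ℝ × ℝ => VV K2 Φ f ρ s q.1 q.2) (fun q hq => ?_)
      (fun q hq => (hdt q.1 hq.1 q.2 hq.2).deriv)
    exact (h.cont2 hq.1.1 hq.2.1 hq.2.2.ne).continuousWithinAt
  · refine ContinuousOn.congr (f := fun q : ℝ × ℝ => VV K2 Φ f ρ s q.1 q.2) (fun q hq => ?_)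
      (fun q hq => (hdxx q.1 hq.1 q.2 hq.2).deriv)
    exact (h.cont2 hq.1.1 hq.2.1 hq.2.2.ne).continuousWithinAt
  · refine ContinuousOn.congr (f := fun q : ℝ × ℝ => D q.1 q.2) (fun q hq => ?_)
      (fun q hq => (hdx q.1 (hsub hq.1) q.2 hq.2).deriv)
    exact (hD q (hsub hq.1)).continuousWithinAt
  · refine h.U_cont.continuousOn.congr fun q hq => ?_
    rcases hq.1.1.eq_or_lt with h0 | h0
    · simp only [ww, UU, ← h0, le_refl, if_true]
    · rw [ww_eq h0 hq.2]; exact (UU_pos h0).symm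
  · intro t ht x hx
    rcases ht.1.eq_or_lt with h0 | h0
    · rw [ww, if_pos h0.symm.le]; exact h.iok.nn x
    · rw [ww_eq h0 hx]; exact hnn t (hsub ⟨h0, ht.2⟩) x hx
  · intro t ht
    rw [(hdx t (hsub ht) 0 (hst0 t)).deriv, (hDe t (hsub ht)).1, ww_eq ht.1 (hst0 t), neg_neg]
    exact hfe t (hsub ht) (hnn t (hsub ht) 0 (hst0 t))
end build

def sof (s₁ : ℝ) (ρ : ℝ → ℝ) (y : ℝ) : ℝ := s₁ + ∫ z in (0:ℝ)..y, ρ z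

section sofs
variable {ρ ρ' : ℝ → ℝ} {R E δ s₁ : ℝ}

lemma LOK.integ (h : LOK ρ R δ) : Integrable ρ := (h.ptok (q := fun _ => 0) continuous_const).int

lemma LOK.sub' (h : LOK ρ R δ) (h' : LOK ρ' R δ) (hE : ∀ y, |ρ y - ρ' y| ≤ E) :
    LOK (fun y => ρ y - ρ' y) E δ where
  cont := h.cont.sub h'.cont
  bd := hE
  supp := fun y hy => by rw [h.supp y hy, h'.supp y hy, sub_zero]

lemma LOK.sof_sub (h : LOK ρ R δ) (y z : ℝ) : sof s₁ ρ y - sof s₁ ρ z = ∫ x in z..y, ρ x := by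
  have := intervalIntegral.integral_interval_sub_left (μ := volume) (a := 0) (b := y) (c := z)
    h.integ.intervalIntegrable h.integ.intervalIntegrable
  rw [← this, sof, sof]; ring

lemma LOK.sof_lip (h : LOK ρ R δ) (y z : ℝ) : |sof s₁ ρ y - sof s₁ ρ z| ≤ R * |y - z| := by
  rw [h.sof_sub]
  exact intervalIntegral.norm_integral_le_of_norm_le_const (f := ρ) (C := R) fun x _ => h.bd x

lemma sof_zero : sof s₁ ρ 0 = s₁ := by simp [sof]

lemma LOK.sof_near (h : LOK ρ R δ) (hδ : 0 ≤ δ) (y : ℝ) : |sof s₁ ρ y - s₁| ≤ R * δ := by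
  rw [sof, add_sub_cancel_left]
  refine (intervalIntegral.norm_integral_le_integral_norm_uIoc (f := ρ) (a := 0) (b := y) (μ := volume)).trans ?_
  refine (setIntegral_le_integral h.integ.norm (ae_of_all _ fun x => norm_nonneg _)).trans ?_
  calc ∫ x, ‖ρ x‖ ≤ ∫ x, (Icc 0 δ).indicator (fun _ => R) x := by
        refine integral_mono h.integ.norm ((integrable_indicator_iff measurableSet_Icc).2 (integrableOn_const (by simp))) fun x => ?_
        by_cases hx : x ∈ Icc 0 δ
        · rw [indicator_of_mem hx]; exact h.bd x
        · rw [indicator_of_notMem hx, h.supp x fun hx' => hx ⟨hx'.1.le, hx'.2.le⟩, norm_zero]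
    _ = R * δ := by
        rw [integral_indicator measurableSet_Icc, setIntegral_const]
        simp [hδ, mul_comm]

lemma LOK.sof_deriv (h : LOK ρ R δ) {t : ℝ} (ht : t ∈ Ioo 0 δ) : HasDerivAt (sof s₁ ρ) (ρ t) t :=
  (intervalIntegral.integral_hasDerivAt_right h.integ.intervalIntegrable
    h.meas.stronglyMeasurable.stronglyMeasurableAtFilter
    (h.contAt ht.1.ne' ht.2.ne)).const_add s₁

lemma LOK.sof_diff (h : LOK ρ R δ) (h' : LOK ρ' R δ) (y : ℝ) :
    sof s₁ ρ y - sof s₁ ρ' y = sof s₁ (fun z => ρ z - ρ' z) y - s₁ := by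
  rw [sof, sof, sof, intervalIntegral.integral_sub h.integ.intervalIntegrable h'.integ.intervalIntegrable]; ring
end sofs

section ests
variable {Φ f ρ s f' ρ' s' : ℝ → ℝ} {L M s₁ R δ a E P : ℝ}

lemma VOK.psi2_bd (h : VOK Φ f ρ s L M s₁ R δ) (ha : 0 < a) (hs : ∀ y, a ≤ s y) {t : ℝ} (ht : 0 < t) :
    |VV K1 Φ f ρ s t (s t)| ≤ L + (R * (6 / a) + R * (R / 2)) * √t := by
  have hR := h.fok.R0
  have h1 := abs_le.1 (h.iok.J_bd ht (s t))
  have h2 := abs_le.1 (h.fok.lbound (k := fun r => K1 r (s t - 0)) (C := 2 / a) ht.le (by positivity) fun r =>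
    K1_far ha (by rw [sub_zero]; exact (hs t).trans (le_abs_self _)))
  have h3 := abs_le.1 (h.rok.lbound (k := fun r => K1 r (s t - s (t - r))) (C := R / 2) ht.le (by positivity) fun r => by
    rcases le_or_gt r 0 with h0 | h0
    · simp [K1_np h0, kap_np h0]
    · refine K1_slope ((h.slip _ _).trans ?_)
      rw [sub_sub_cancel, abs_of_pos h0])
  have h4 := abs_le.1 (h.rok.lbound (k := fun r => K1 r (s t - -s (t - r))) (C := 2 / a) ht.le (by positivity) fun r =>
    K1_far ha (by rw [sub_neg_eq_add]; exact le_trans (by linarith [hs t, hs (t - r)]) (le_abs_self _)))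
  have e : R * (6 / a) * √t = 3 * (R * (2 / a) * √t) := by ring
  simp only [VV, Pt_r]
  rw [abs_le, add_mul, e]; constructor <;> linarith [h1.1, h1.2, h2.1, h2.2, h3.1, h3.2, h4.1, h4.2]

lemma VOK.psi2_cont (h : VOK Φ f ρ s L M s₁ R δ) (ha : 0 < a) (hs : ∀ y, a ≤ s y) :
    ContinuousOn (fun t => VV K1 Φ f ρ s t (s t)) (Ioi 0) := by
  intro t ht
  have hsc := h.sc
  refine ContinuousAt.continuousWithinAt ?_
  have h1 := (h.iok.I_cont (k := K1) (fun _ => K1_cont) (z := (t, s t)) ht)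
  have h2 := h.fok.lcont (k := fun z r => K1 r (s z.1 - 0)) (z₀ := (t, s t)) (C := 2 / a)
    (fun z => K1_meas measurable_id measurable_const) (Eventually.of_forall fun z r => 
    K1_far ha (by rw [sub_zero]; exact (hs _).trans (le_abs_self _))) (fun r hr => 
    (K1_cont (z := (r, s t - 0)) (by simp [hr.ne'])).comp (f := fun z : ℝ × ℝ => (r, s z.1 - 0)) (x := (t, s t)) (by fun_prop))
  have h3 := h.rok.lcont (k := fun z r => K1 r (s z.1 - s (z.1 - r))) (z₀ := (t, s t)) (C := R / 2)
    (fun z => K1_meas measurable_id (by have := hsc.measurable; fun_prop)) (Eventually.of_forall fun z r => by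
    rcases le_or_gt r 0 with h0 | h0
    · simp [K1_np h0, kap_np h0]
    · refine K1_slope ((h.slip _ _).trans ?_)
      rw [sub_sub_cancel, abs_of_pos h0]) (fun r hr => 
    (K1_cont (z := (r, s t - s (t - r))) (by simp [hr.ne'])).comp (f := fun z : ℝ × ℝ => (r, s z.1 - s (z.1 - r))) (x := (t, s t)) (by fun_prop))
  have h4 := h.rok.lcont (k := fun z r => K1 r (s z.1 - -s (z.1 - r))) (z₀ := (t, s t)) (C := 2 / a)
    (fun z => K1_meas measurable_id (by have := hsc.measurable; fun_prop)) (Eventually.of_forall fun z r => 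
    K1_far ha (by rw [sub_neg_eq_add]; exact le_trans (by linarith [hs z.1, hs (z.1 - r)]) (le_abs_self _))) (fun r hr => 
    (K1_cont (z := (r, s t - -s (t - r))) (by simp [hr.ne'])).comp (f := fun z : ℝ × ℝ => (r, s z.1 - -s (z.1 - r))) (x := (t, s t)) (by fun_prop))
  have h5 := ((h1.comp (f := fun t => (t, s t)) (by fun_prop)).add ((h2.comp (f := fun t => (t, s t)) (x := t) (by fun_prop)).const_mul 2)).sub
    (h3.comp (f := fun t => (t, s t)) (x := t) (by fun_prop)) |>.sub (h4.comp (f := fun t => (t, s t)) (x := t) (by fun_prop))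
  simp only [VV, Pt_r]
  exact h5

lemma comb4 {A A' x x' y y' z z' b c d e : ℝ} (hA : |A - A'| ≤ b) (hx : |x - x'| ≤ c) (hy : |y - y'| ≤ d)
    (hz : |z - z'| ≤ e) : |A + 2 * x - y - z - (A' + 2 * x' - y' - z')| ≤ b + 2 * c + d + e := by
  rw [abs_le] at *
  constructor <;> linarith [hA.1, hA.2, hx.1, hx.2, hy.1, hy.2, hz.1, hz.2]

lemma VOK.psi1_diff (h : VOK Φ f ρ s L M s₁ R δ) (h' : VOK Φ f' ρ' s' L M s₁ R δ) (ha : 0 < a)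
    (hs : ∀ y, a ≤ s y) (hs' : ∀ y, a ≤ s' y) (hE : 0 ≤ E) (hP : 0 ≤ P)
    (hf : ∀ y, |f y - f' y| ≤ P * E) (hρ : ∀ y, |ρ y - ρ' y| ≤ E) (hss : ∀ y, |s y - s' y| ≤ E)
    {t : ℝ} (ht : 0 < t) :
    |VV K0 Φ f ρ s t 0 - VV K0 Φ f' ρ' s' t 0| ≤ (2 * P + 4 * (R / a) + 2) * √t * E := by
  have hR := h.fok.R0
  have hsm := h.sc.measurable
  have hsm' := h'.sc.measurable
  have h2 := (h.fok.ldiff h'.fok (k := fun r => K0 r (0 - 0)) (k' := fun r => K0 r (0 - 0)) (C := 1) (D := 0) (E := P * E) ht.le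
    zero_le_one le_rfl (by positivity) (K0_meas measurable_id measurable_const) (K0_meas measurable_id measurable_const)
    (fun r => by rw [one_mul]; exact K0_le _ _) (fun r => by rw [one_mul]; exact K0_le _ _) (fun r _ => by simp) hf)
  have h3 := (h.rok.ldiff h'.rok (k := fun r => K0 r (0 - s (t - r))) (k' := fun r => K0 r (0 - s' (t - r))) (C := 1) (D := 2 / a * E) (E := E) ht.le
    zero_le_one (by positivity) (by positivity) (K0_meas measurable_id (by fun_prop)) (K0_meas measurable_id (by fun_prop))
    (fun r => by rw [one_mul]; exact K0_le _ _) (fun r => by rw [one_mul]; exact K0_le _ _) (fun r _ => by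
      rw [zero_sub, zero_sub, K0_neg, K0_neg]
      refine (K0_lip_far ha (hs _) (hs' _)).trans ?_
      have := kap_nonneg r
      calc _ ≤ 2 / a * kap r * E := by have := hss (t - r); gcongr
        _ = _ := by ring) hρ)
  have h4 := (h.rok.ldiff h'.rok (k := fun r => K0 r (0 - -s (t - r))) (k' := fun r => K0 r (0 - -s' (t - r))) (C := 1) (D := 2 / a * E) (E := E) ht.le
    zero_le_one (by positivity) (by positivity) (K0_meas measurable_id (by fun_prop)) (K0_meas measurable_id (by fun_prop))
    (fun r => by rw [one_mul]; exact K0_le _ _) (fun r => by rw [one_mul]; exact K0_le _ _) (fun r _ => by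
      rw [zero_sub, zero_sub, neg_neg, neg_neg]
      refine (K0_lip_far ha (hs _) (hs' _)).trans ?_
      have := kap_nonneg r
      calc _ ≤ 2 / a * kap r * E := by have := hss (t - r); gcongr
        _ = _ := by ring) hρ)
  simp only [VV, Pt_r]
  exact (comb4 (b := 0) (by simp) h2 h3 h4).trans (le_of_eq (by ring))

lemma VOK.psi2_diff (h : VOK Φ f ρ s L M s₁ R δ) (h' : VOK Φ f' ρ' s' L M s₁ R δ) (ha : 0 < a)
    (hs : ∀ y, a ≤ s y) (hs' : ∀ y, a ≤ s' y) (hE : 0 ≤ E) (hP : 0 ≤ P)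
    (hf : ∀ y, |f y - f' y| ≤ P * E) (hρ : ∀ y, |ρ y - ρ' y| ≤ E) (hss : ∀ y, |s y - s' y| ≤ E)
    (hsl : ∀ y z, |(s y - s' y) - (s z - s' z)| ≤ E * |y - z|) {t : ℝ} (ht : 0 < t) :
    |VV K1 Φ f ρ s t (s t) - VV K1 Φ f' ρ' s' t (s' t)| ≤
      (2 * L + 24 * (R / a ^ 2) + 4 * (P / a) + 2 * R + 2 / a) * √t * E := by
  have hR := h.fok.R0
  have hL := h.iok.L0
  have hsm := h.sc.measurable
  have hsm' := h'.sc.measurable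
  have hst : 0 < √t := Real.sqrt_pos.2 ht
  have hs2 : √t * √t = t := Real.mul_self_sqrt ht.le
  have h1 : |Ini K1 Φ t (s t) - Ini K1 Φ t (s' t)| ≤ 2 * L * √t * E := by
    refine (h.iok.J_lip ht _ _).trans ?_
    have := hsl t 0
    rw [h.s0, h'.s0, sub_self, sub_zero, sub_zero, abs_of_pos ht] at this
    calc _ ≤ L * (E * t) * (2 / √t) := by gcongr
      _ = _ := by rw [show 2 / √t = 2 * √t / t by rw [eq_div_iff ht.ne']; nth_rw 2 [← hs2]; field_simp]; field_simp
  have h2 := (h.fok.ldiff h'.fok (k := fun r => K1 r (s t - 0)) (k' := fun r => K1 r (s' t - 0)) (C := 2 / a) (D := 6 / a ^ 2 * E) (E := P * E) ht.le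
    (by positivity) (by positivity) (by positivity) (K1_meas measurable_id measurable_const) (K1_meas measurable_id measurable_const)
    (fun r => K1_far ha (by rw [sub_zero]; exact (hs t).trans (le_abs_self _)))
    (fun r => K1_far ha (by rw [sub_zero]; exact (hs' t).trans (le_abs_self _))) (fun r _ => by
      rw [sub_zero, sub_zero]
      refine (K1_lip_far ha (hs _) (hs' _)).trans ?_
      have := kap_nonneg r
      calc _ ≤ 6 / a ^ 2 * kap r * E := by have := hss t; gcongr
        _ = _ := by ring) hf)
  have h3 := (h.rok.ldiff h'.rok (k := fun r => K1 r (s t - s (t - r))) (k' := fun r => K1 r (s' t - s' (t - r))) (C := R / 2) (D := 3 / 2 * E) (E := E) ht.le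
    (by positivity) (by positivity) (by positivity) (K1_meas measurable_id (by fun_prop)) (K1_meas measurable_id (by fun_prop))
    (fun r => by
      rcases le_or_gt r 0 with h0 | h0
      · simp [K1_np h0, kap_np h0]
      · refine K1_slope ((h.slip _ _).trans ?_)
        rw [sub_sub_cancel, abs_of_pos h0])
    (fun r => by
      rcases le_or_gt r 0 with h0 | h0
      · simp [K1_np h0, kap_np h0]
      · refine K1_slope ((h'.slip _ _).trans ?_)
        rw [sub_sub_cancel, abs_of_pos h0]) (fun r _ => by
      rcases le_or_gt r 0 with h0 | h0
      · simp [K1_np h0, kap_np h0]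
      · refine K1_lip' ?_
        have := hsl t (t - r)
        rw [sub_sub_cancel, abs_of_pos h0] at this
        rwa [show s t - s (t - r) - (s' t - s' (t - r)) = s t - s' t - (s (t - r) - s' (t - r)) by ring]) hρ)
  have h4 := (h.rok.ldiff h'.rok (k := fun r => K1 r (s t - -s (t - r))) (k' := fun r => K1 r (s' t - -s' (t - r))) (C := 2 / a) (D := 6 / a ^ 2 * (2 * E)) (E := E) ht.le
    (by positivity) (by positivity) (by positivity) (K1_meas measurable_id (by fun_prop)) (K1_meas measurable_id (by fun_prop))
    (fun r => K1_far ha (by rw [sub_neg_eq_add]; exact le_trans (by linarith [hs t, hs (t - r)]) (le_abs_self _)))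
    (fun r => K1_far ha (by rw [sub_neg_eq_add]; exact le_trans (by linarith [hs' t, hs' (t - r)]) (le_abs_self _))) (fun r _ => by
      rw [sub_neg_eq_add, sub_neg_eq_add]
      refine (K1_lip_far ha (by linarith [hs t, hs (t - r)]) (by linarith [hs' t, hs' (t - r)])).trans ?_
      have := kap_nonneg r
      have h5 : |s t + s (t - r) - (s' t + s' (t - r))| ≤ 2 * E := by
        have h6 := abs_le.1 (hss t)
        have h7 := abs_le.1 (hss (t - r))
        rw [abs_le]; constructor <;> linarith [h6.1, h6.2, h7.1, h7.2]
      calc _ ≤ 6 / a ^ 2 * kap r * (2 * E) := by gcongr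
        _ = _ := by ring) hρ)
  simp only [VV, Pt_r]
  exact (comb4 h1 h2 h3 h4).trans (le_of_eq (by ring))
end ests

lemma cl_lip (a b x y : ℝ) : |cl a b x - cl a b y| ≤ |x - y| := by
  rw [cl, cl]
  refine (abs_max_sub_max_le_max _ _ _ _).trans ?_
  rw [sub_self, abs_zero]
  refine max_le (abs_nonneg _) ((abs_min_sub_min_le_max _ _ _ _).trans ?_)
  rw [sub_self, abs_zero]
  exact max_le le_rfl (abs_nonneg _)

open Classical in
def ext0 {δ : ℝ} (g : BoundedContinuousFunction (Ioo (0:ℝ) δ) ℝ) (y : ℝ) : ℝ :=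
  if h : y ∈ Ioo 0 δ then g ⟨y, h⟩ else 0

lemma ext0_mem {δ : ℝ} (g : BoundedContinuousFunction (Ioo (0:ℝ) δ) ℝ) {y : ℝ} (h : y ∈ Ioo 0 δ) :
    ext0 g y = g ⟨y, h⟩ := by rw [ext0, dif_pos h]

lemma ext0_not {δ : ℝ} (g : BoundedContinuousFunction (Ioo (0:ℝ) δ) ℝ) {y : ℝ} (h : y ∉ Ioo 0 δ) :
    ext0 g y = 0 := by rw [ext0, dif_neg h]

lemma ext0_cont {δ : ℝ} (g : BoundedContinuousFunction (Ioo (0:ℝ) δ) ℝ) : ContinuousOn (ext0 g) (Ioo 0 δ) := by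
  rw [continuousOn_iff_continuous_restrict]
  convert g.continuous using 1
  ext ⟨y, hy⟩
  exact ext0_mem g hy

lemma ext0_dist {δ : ℝ} (g g' : BoundedContinuousFunction (Ioo (0:ℝ) δ) ℝ) (y : ℝ) :
    |ext0 g y - ext0 g' y| ≤ dist g g' := by
  by_cases h : y ∈ Ioo 0 δ
  · rw [ext0_mem g h, ext0_mem g' h]; exact BoundedContinuousFunction.dist_coe_le_dist (f := g) (g := g') ⟨y, h⟩
  · rw [ext0_not g h, ext0_not g' h, sub_zero, abs_zero]; exact dist_nonneg

/-- local existence -/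
lemma existence {p a L M : ℝ} (hp : 1 < p) (ha : 0 < a) (hL : 0 ≤ L) (hM : 0 ≤ M) :
    ∃ δ > 0, ∀ s₁ ≥ a, ∀ Φ, IOK Φ L M s₁ → ∃ s w, IsSolOn p s₁ Φ (δ / 2) s w := by
  set M' := M + 1 with hM'
  have hM'0 : 0 ≤ M' := by linarith
  set P := p * M' ^ (p - 1) with hPd
  have hP : 0 ≤ P := mul_nonneg (by linarith) (by positivity)
  set R := 2 * L + 1 + M' ^ p with hRd
  have hMp : 0 ≤ M' ^ p := by positivity
  have hR : 0 < R := by linarith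
  set b := a / 2 with hb
  have hb0 : 0 < b := by positivity
  set Q1 := 2 * P + 4 * (R / b) + 2 with hQ1
  set Q2 := 2 * L + 24 * (R / b ^ 2) + 4 * (P / b) + 2 * R + 2 / b with hQ2
  set Q3 := 4 * L + 4 * R with hQ3
  set Q4 := R * (6 / b) + R * (R / 2) with hQ4
  have hQ1p : 0 < Q1 := by positivity
  have hQ2p : 0 < Q2 := by positivity
  have hQ3p : 0 < Q3 := by positivity
  have hQ4p : 0 < Q4 := by positivity
  set Q := Q1 + 2 * Q2 + Q3 + 2 * Q4 with hQ
  have hQp : 0 < Q := by positivity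
  set δ := min 1 (min (b / R) ((1 / (2 * Q)) ^ 2)) with hδd
  have hδ : 0 < δ := by positivity
  have hδ1 : δ ≤ 1 := min_le_left _ _
  have hδR : R * δ ≤ b := by
    have : δ ≤ b / R := (min_le_right _ _).trans (min_le_left _ _)
    rw [le_div_iff₀ hR] at this; linarith
  have hδQ : Q * √δ ≤ 1 / 2 := by
    have : δ ≤ (1 / (2 * Q)) ^ 2 := (min_le_right _ _).trans (min_le_right _ _)
    have h1 : √δ ≤ 1 / (2 * Q) := Real.sqrt_le_iff.2 ⟨by positivity, this⟩
    calc Q * √δ ≤ Q * (1 / (2 * Q)) := by gcongr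
      _ = 1 / 2 := by field_simp
  have hsq : ∀ t ∈ Ioo 0 δ, Q * √t ≤ 1 / 2 := fun t ht =>
    (mul_le_mul_of_nonneg_left (Real.sqrt_le_sqrt ht.2.le) hQp.le).trans hδQ
  refine ⟨δ, hδ, fun s₁ hs₁ Φ hΦ => ?_⟩
  let X := BoundedContinuousFunction (Ioo (0:ℝ) δ) ℝ
  let fF : X → ℝ → ℝ := fun g y => cl 0 M' (ext0 g y) ^ p
  let rF : X → ℝ → ℝ := fun g y => cl (-R) R (ext0 g y)
  have hf : ∀ g : X, LOK (fF g) R δ := fun g =>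
    { cont := by
        refine ContinuousOn.rpow_const ?_ fun _ _ => Or.inr (by linarith)
        exact (cl_cont (f := fun _ => (0:ℝ)) (g := fun _ => M') (k := fun y : ℝ => y) (by fun_prop) (by fun_prop) (by fun_prop)).comp_continuousOn (ext0_cont g)
      bd := fun y => by
        have := cl_mem hM'0 (ext0 g y)
        have h1 : cl 0 M' (ext0 g y) ^ p ≤ M' ^ p := Real.rpow_le_rpow this.1 this.2 (by linarith)
        have h2 : 0 ≤ cl 0 M' (ext0 g y) ^ p := Real.rpow_nonneg this.1 _
        rw [abs_of_nonneg h2]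
        linarith
      supp := fun y hy => by
        simp only [fF, ext0_not g hy, cl]
        rw [min_eq_left hM'0, max_self, Real.zero_rpow (by linarith)] }
  have hr : ∀ g : X, LOK (rF g) R δ := fun g =>
    { cont := (cl_cont (f := fun _ => -R) (g := fun _ => R) (k := fun y : ℝ => y) (by fun_prop) (by fun_prop) (by fun_prop)).comp_continuousOn (ext0_cont g)
      bd := fun y => abs_le.2 (cl_mem (by linarith) (ext0 g y))
      supp := fun y hy => by
        simp only [rF, ext0_not g hy, cl]
        rw [min_eq_left hR.le, max_eq_right (by linarith)] }
  have hs : ∀ g : X, ∀ y, b ≤ sof s₁ (rF g) y := fun g y => by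
    have := abs_le.1 ((hr g).sof_near (s₁ := s₁) hδ.le y)
    linarith [this.1]
  have hv : ∀ x : X × X, VOK Φ (fF x.1) (rF x.2) (sof s₁ (rF x.2)) L M s₁ R δ := fun x =>
    ⟨hΦ, hf _, hr _, (hr _).sof_lip, fun y => hb0.trans_le (hs _ y), sof_zero⟩
  have b1 : ∀ x : X × X, ∀ t ∈ Ioo 0 δ, |VV K0 Φ (fF x.1) (rF x.2) (sof s₁ (rF x.2)) t 0| ≤ M' := by
    intro x t ht
    have h1 := abs_le.1 ((hv x).near ht.1 0)
    have h2 := hΦ.bd 0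
    have h3 := hΦ.nn 0
    have h4 : Q3 * √t ≤ Q * √t := by gcongr; rw [hQ]; linarith
    have h5 := hsq t ht
    rw [abs_le]; constructor <;> linarith [h1.1, h1.2]
  have b2 : ∀ x : X × X, ∀ t ∈ Ioo 0 δ, |-2 * VV K1 Φ (fF x.1) (rF x.2) (sof s₁ (rF x.2)) t (sof s₁ (rF x.2) t)| ≤ R := by
    intro x t ht
    have h1 := (hv x).psi2_bd hb0 (hs _) ht.1
    rw [← hQ4] at h1
    have h4 : 2 * Q4 * √t ≤ Q * √t := by gcongr; rw [hQ]; linarith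
    have h5 := hsq t ht
    rw [abs_mul, abs_neg, abs_two]
    linarith
  have hF : ∀ x : X × X, ∃ y : X × X, ∀ t (ht : t ∈ Ioo 0 δ),
      y.1 ⟨t, ht⟩ = VV K0 Φ (fF x.1) (rF x.2) (sof s₁ (rF x.2)) t 0 ∧
      y.2 ⟨t, ht⟩ = -2 * VV K1 Φ (fF x.1) (rF x.2) (sof s₁ (rF x.2)) t (sof s₁ (rF x.2) t) := by
    intro x
    have c1 : ContinuousOn (fun t => VV K0 Φ (fF x.1) (rF x.2) (sof s₁ (rF x.2)) t 0) (Ioo 0 δ) := fun t ht =>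
      (((hv x).cont0 (z := (t, 0)) ht.1).comp (f := fun t : ℝ => (t, (0:ℝ))) (x := t) (by fun_prop)).continuousWithinAt
    have c2 : ContinuousOn (fun t => -2 * VV K1 Φ (fF x.1) (rF x.2) (sof s₁ (rF x.2)) t (sof s₁ (rF x.2) t)) (Ioo 0 δ) :=
      (((hv x).psi2_cont hb0 (hs _)).mono fun t ht => ht.1).const_mul _
    exact ⟨(BoundedContinuousFunction.ofNormedAddCommGroup _ c1.restrict M' fun t => b1 x t t.2,
      BoundedContinuousFunction.ofNormedAddCommGroup _ c2.restrict R fun t => b2 x t t.2), fun t ht => ⟨rfl, rfl⟩⟩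
  choose F hF using hF
  have hc : ContractingWith (1 / 2) F := by
    refine ⟨by norm_num, LipschitzWith.of_dist_le_mul fun x y => ?_⟩
    set E := dist x y with hE
    have hE0 : 0 ≤ E := dist_nonneg
    have e1 : dist x.1 y.1 ≤ E := by rw [hE, Prod.dist_eq]; exact le_max_left _ _
    have e2 : dist x.2 y.2 ≤ E := by rw [hE, Prod.dist_eq]; exact le_max_right _ _
    have df : ∀ z, |fF x.1 z - fF y.1 z| ≤ P * E := fun z =>
      (pow_lip hp (cl_mem hM'0 _) (cl_mem hM'0 _)).trans
        (mul_le_mul_of_nonneg_left ((cl_lip _ _ _ _).trans ((ext0_dist _ _ z).trans e1)) hP)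
    have dr : ∀ z, |rF x.2 z - rF y.2 z| ≤ E := fun z => (cl_lip _ _ _ _).trans ((ext0_dist _ _ z).trans e2)
    have lr := (hr x.2).sub' (hr y.2) dr
    have ds : ∀ z, |sof s₁ (rF x.2) z - sof s₁ (rF y.2) z| ≤ E := fun z => by
      rw [(hr x.2).sof_diff (hr y.2)]
      exact (lr.sof_near hδ.le z).trans (mul_le_of_le_one_right hE0 hδ1)
    have dl : ∀ z z', |sof s₁ (rF x.2) z - sof s₁ (rF y.2) z - (sof s₁ (rF x.2) z' - sof s₁ (rF y.2) z')| ≤ E * |z - z'| := fun z z' => by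
      rw [(hr x.2).sof_diff (hr y.2), (hr x.2).sof_diff (hr y.2), sub_sub_sub_cancel_right]
      exact lr.sof_lip z z'
    have hh : (0:ℝ) ≤ (1 / 2 : NNReal) * E := by positivity
    have hhe : (((1 / 2 : NNReal) : NNReal) : ℝ) * E = 1 / 2 * E := by push_cast; rfl
    rw [hhe] at hh ⊢
    rw [Prod.dist_eq]
    refine max_le ((BoundedContinuousFunction.dist_le hh).2 ?_) ((BoundedContinuousFunction.dist_le hh).2 ?_)
    · rintro ⟨t, ht⟩
      rw [(hF x t ht).1, (hF y t ht).1, Real.dist_eq]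
      refine ((hv x).psi1_diff (hv y) hb0 (hs _) (hs _) hE0 hP df dr ds ht.1).trans ?_
      refine mul_le_mul_of_nonneg_right ?_ hE0
      have h4 : Q1 * √t ≤ Q * √t := by gcongr; rw [hQ]; linarith
      exact h4.trans (hsq t ht)
    · rintro ⟨t, ht⟩
      rw [(hF x t ht).2, (hF y t ht).2, Real.dist_eq, ← mul_sub, abs_mul, abs_neg, abs_two]
      have h3 := (hv x).psi2_diff (hv y) hb0 (hs _) (hs _) hE0 hP df dr ds dl ht.1
      rw [← hQ2] at h3
      have h4 : 2 * Q2 * √t ≤ Q * √t := by gcongr; rw [hQ]; linarith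
      have h5 : 2 * Q2 * √t * E ≤ 1 / 2 * E := mul_le_mul_of_nonneg_right (h4.trans (hsq t ht)) hE0
      linarith
  obtain ⟨x, hx⟩ : ∃ x, F x = x := ⟨_, hc.fixedPoint_isFixedPt⟩
  have g1 : ∀ t ∈ Ioo 0 δ, ext0 x.1 t = VV K0 Φ (fF x.1) (rF x.2) (sof s₁ (rF x.2)) t 0 := fun t ht => by
    rw [ext0_mem _ ht, ← (hF x t ht).1, hx]
  have g2 : ∀ t ∈ Ioo 0 δ, ext0 x.2 t = -2 * VV K1 Φ (fF x.1) (rF x.2) (sof s₁ (rF x.2)) t (sof s₁ (rF x.2) t) := fun t ht => by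
    rw [ext0_mem _ ht, ← (hF x t ht).2, hx]
  refine ⟨_, _, (hv x).build (p := p) (fun t => Real.rpow_nonneg (cl_mem hM'0 _).1 _) (fun t ht => (hr x.2).sof_deriv ht) ?_ ?_ (by linarith) (by linarith)⟩
  · intro t ht
    rw [← g2 t ht]
    refine cl_eq ?_
    have := abs_le.1 (b2 x t ht)
    rw [← g2 t ht] at this
    exact this
  · intro t ht h0
    have := (abs_le.1 (b1 x t ht)).2
    rw [← g1 t ht] at this h0 ⊢
    simp only [fF]
    rw [cl_eq ⟨h0, this⟩]

lemma existence' {p a L M : ℝ} (hp : 1 < p) (ha : 0 < a) (hL : 0 ≤ L) (hM : 0 ≤ M) :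
    ∃ δ > 0, ∀ s₁ ≥ a, ∀ φ : ℝ → ℝ, (∀ x ∈ Icc 0 s₁, ∀ y ∈ Icc 0 s₁, |φ x - φ y| ≤ L * |x - y|) →
      (∀ x ∈ Icc 0 s₁, 0 ≤ φ x ∧ φ x ≤ M) → φ s₁ = 0 → ∃ s w, IsSolOn p s₁ φ δ s w := by
  obtain ⟨δ, hδ, H⟩ := existence hp ha hL hM
  refine ⟨δ / 2, by positivity, fun s₁ hs₁ φ hl hb h0 => ?_⟩
  have hs0 : 0 < s₁ := ha.trans_le hs₁
  have hm : ∀ x : ℝ, min |x| s₁ ∈ Icc 0 s₁ := fun x => ⟨le_min (abs_nonneg _) hs0.le, min_le_right _ _⟩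
  obtain ⟨s, w, h⟩ := H s₁ hs₁ (fun x => φ (min |x| s₁))
    { even := fun x => by simp only [abs_neg]
      lip := fun x y => by
        refine (hl _ (hm x) _ (hm y)).trans (mul_le_mul_of_nonneg_left ?_ hL)
        refine (abs_min_sub_min_le_max _ _ _ _).trans ?_
        rw [sub_self, abs_zero]
        exact max_le (abs_abs_sub_abs_le _ _) (abs_nonneg _)
      nn := fun x => (hb _ (hm x)).1
      bd := fun x => (hb _ (hm x)).2
      supp := fun x hx => by simp only [min_eq_right hx, h0] }
  have hi : ∀ x ∈ Icc 0 s₁, w 0 x = φ x := fun x hx => by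
    rw [h.init x hx, abs_of_nonneg hx.1, min_eq_left hx.2]
  exact ⟨s, w, { h with init := hi }⟩

section sh
variable {p s₀ T : ℝ} {φ s : ℝ → ℝ} {u : ℝ → ℝ → ℝ}

lemma IsSolOn.shift (h : IsSolOn p s₀ φ T s u) {t₁ : ℝ} (h0 : 0 < t₁) (h1 : t₁ < T) :
    IsSolOn p (s t₁) (u t₁) (T - t₁) (fun t => s (t₁ + t)) (fun t => u (t₁ + t)) := by
  have m1 : ∀ {t}, t ∈ Icc 0 (T - t₁) → t₁ + t ∈ Icc 0 T := fun ht => ⟨by linarith [ht.1], by linarith [ht.2]⟩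
  have m2 : ∀ {t}, t ∈ Ioc 0 (T - t₁) → t₁ + t ∈ Ioc 0 T := fun ht => ⟨by linarith [ht.1], by linarith [ht.2]⟩
  have e1 : deriv (fun t => s (t₁ + t)) = fun t => deriv s (t₁ + t) := by
    ext t; exact deriv_comp_const_add s t₁ t
  have e2 : ∀ t x, deriv (fun τ => u (t₁ + τ) x) t = deriv (fun τ => u τ x) (t₁ + t) := fun t x =>
    deriv_comp_const_add (fun τ => u τ x) t₁ t
  have d : ∀ {f : ℝ → ℝ} {t}, DifferentiableAt ℝ f (t₁ + t) → DifferentiableAt ℝ (fun t => f (t₁ + t)) t := 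
    fun hf => hf.comp (f := fun t => t₁ + t) _ (by fun_prop)
  exact
  { T_pos := by linarith
    s_cont := h.s_cont.comp (by fun_prop) fun t ht => m1 ht
    s_diff := fun t ht => d (h.s_diff _ (m2 ht))
    s_deriv_cont := by rw [e1]; exact h.s_deriv_cont.comp (by fun_prop) fun t ht => m2 ht
    s_pos := fun t ht => h.s_pos _ (m1 ht)
    ut_diff := fun t ht x hx => d (f := fun τ => u τ x) (h.ut_diff _ (m2 ht) x hx)
    ux_diff := fun t ht x hx => h.ux_diff _ (m2 ht) x hx
    uxx_diff := fun t ht x hx => h.uxx_diff _ (m2 ht) x hx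
    ut_cont := by 
      simp only [e2]
      exact h.ut_cont.comp (f := fun q : ℝ × ℝ => (t₁ + q.1, q.2)) (by fun_prop) fun q hq => ⟨m2 hq.1, hq.2⟩
    uxx_cont := h.uxx_cont.comp (f := fun q : ℝ × ℝ => (t₁ + q.1, q.2)) (by fun_prop) fun q hq => ⟨m2 hq.1, hq.2⟩
    ux_cont := h.ux_cont.comp (f := fun q : ℝ × ℝ => (t₁ + q.1, q.2)) (by fun_prop) fun q hq => ⟨m2 hq.1, hq.2⟩
    u_cont := h.u_cont.comp (f := fun q : ℝ × ℝ => (t₁ + q.1, q.2)) (by fun_prop) fun q hq => ⟨m1 hq.1, hq.2⟩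
    u_nonneg := fun t ht x hx => h.u_nonneg _ (m1 ht) x hx
    heat := fun t ht x hx => by rw [e2]; exact h.heat _ (m2 ht) x hx
    bc_zero := fun t ht => h.bc_zero _ (m2 ht)
    bc_free := fun t ht => h.bc_free _ (m2 ht)
    stefan := fun t ht => by rw [e1]; exact h.stefan _ (m2 ht)
    init := fun x _ => by simp only [add_zero]
    init_s := by simp only [add_zero] }

lemma cover {X : Type*} [TopologicalSpace X] {F G H : X → ℝ} {S A B U V : Set X} (hU : IsOpen U) (hV : IsOpen V)
    (hS : S ⊆ U ∪ V) (hG : ContinuousOn G A) (hH : ContinuousOn H B)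
    (h1 : ∀ q ∈ S, q ∈ U → q ∈ A ∧ F q = G q) (h2 : ∀ q ∈ S, q ∈ V → q ∈ B ∧ F q = H q) : ContinuousOn F S := by
  intro q hq
  rcases hS hq with h | h
  · have : ContinuousOn F (S ∩ U) := (hG.mono fun x hx => (h1 x hx.1 hx.2).1).congr fun x hx => (h1 x hx.1 hx.2).2
    exact (this q ⟨hq, h⟩).mono_of_mem_nhdsWithin (inter_mem_nhdsWithin _ (hU.mem_nhds h))
  · have : ContinuousOn F (S ∩ V) := (hH.mono fun x hx => (h2 x hx.1 hx.2).1).congr fun x hx => (h2 x hx.1 hx.2).2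
    exact (this q ⟨hq, h⟩).mono_of_mem_nhdsWithin (inter_mem_nhdsWithin _ (hV.mem_nhds h))

lemma IsSolOn.glue (h : IsSolOn p s₀ φ T s u) {t₁ s₁ T₁ : ℝ} {φ₁ s' : ℝ → ℝ} {w : ℝ → ℝ → ℝ}
    (k : IsSolOn p s₁ φ₁ T₁ s' w) (h0 : 0 < t₁) (h1 : t₁ < T)
    (as : ∀ t ∈ Ioo t₁ T, s t = s' (t - t₁))
    (au : ∀ t ∈ Ioo t₁ T, ∀ x ∈ Icc 0 (s t), u t x = w (t - t₁) x) (hT : T < t₁ + T₁) :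
    ∃ σ v, IsSolOn p s₀ φ (t₁ + T₁) σ v := by
  classical
  set r := (t₁ + T) / 2 with hr
  have r1 : t₁ < r := by linarith
  have r2 : r < T := by linarith
  let S : ℝ → ℝ := fun t => if t ≤ r then s t else s' (t - t₁)
  let W : ℝ → ℝ → ℝ := fun t => if t ≤ r then u t else w (t - t₁)
  have Wle : ∀ {t}, t ≤ r → W t = u t := fun h => if_pos h
  have Wgt : ∀ {t}, r < t → W t = w (t - t₁) := fun h => if_neg h.not_ge
  have mT : ∀ {t}, t ∈ Ioo t₁ T → t ∈ Ioc 0 T := fun ht => ⟨h0.trans ht.1, ht.2.le⟩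
  have mk : ∀ {t}, t ∈ Ioo t₁ T → t - t₁ ∈ Ioc 0 T₁ := fun ht => ⟨by linarith [ht.1], by linarith [ht.2]⟩
  have SA : ∀ t, t < T → S t = s t := fun t ht => by
    by_cases hc : t ≤ r
    · exact if_pos hc
    · push Not at hc
      rw [as t ⟨r1.trans hc, ht⟩]; exact if_neg hc.not_ge
  have SB : ∀ t, t₁ < t → S t = s' (t - t₁) := fun t ht => by
    by_cases hc : t ≤ r
    · rw [← as t ⟨ht, hc.trans_lt r2⟩]; exact if_pos hc
    · exact if_neg hc
  have UA : ∀ t, t < T → ∀ x ∈ Icc 0 (s t), W t x = u t x := fun t ht x hx => by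
    by_cases hc : t ≤ r
    · rw [Wle hc]
    · push Not at hc
      rw [Wgt hc, au t ⟨r1.trans hc, ht⟩ x hx]
  have UB : ∀ t, t₁ < t → ∀ x ∈ Icc 0 (s' (t - t₁)), W t x = w (t - t₁) x := fun t ht x hx => by
    by_cases hc : t ≤ r
    · have hm : t ∈ Ioo t₁ T := ⟨ht, hc.trans_lt r2⟩
      rw [Wle hc, au t hm x (by rwa [as t hm])]
    · push Not at hc
      rw [Wgt hc]
  -- agreement of derivatives
  have asd : ∀ t ∈ Ioo t₁ T, deriv s t = deriv s' (t - t₁) := fun t ht => by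
    rw [← deriv_comp_sub_const]
    refine Filter.EventuallyEq.deriv_eq ?_
    filter_upwards [Ioo_mem_nhds ht.1 ht.2] with τ hτ using as τ hτ
  have aux0 : ∀ t ∈ Ioo t₁ T, ∀ x ∈ Ioo 0 (s t), deriv (u t) x = deriv (w (t - t₁)) x := fun t ht x hx => by
    refine Filter.EventuallyEq.deriv_eq ?_
    filter_upwards [Ioo_mem_nhds hx.1 hx.2] with y hy using au t ht y (Ioo_subset_Icc_self hy)
  have aux2 : ∀ t ∈ Ioo t₁ T, ∀ x ∈ Ioo 0 (s t), deriv (deriv (u t)) x = deriv (deriv (w (t - t₁))) x := fun t ht x hx => by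
    refine Filter.EventuallyEq.deriv_eq ?_
    filter_upwards [Ioo_mem_nhds hx.1 hx.2] with y hy using aux0 t ht y hy
  have aux1 : ∀ t ∈ Ioo t₁ T, ∀ x ∈ Icc 0 (s t), deriv (u t) x = deriv (w (t - t₁)) x := fun t ht x hx => by
    rcases hx.1.eq_or_lt with e | e
    · subst e
      have e1 := h.bc_zero t (mT ht)
      have e2 := k.bc_zero _ (mk ht)
      rw [au t ht 0 hx] at e1; linarith
    rcases hx.2.eq_or_lt with e' | e'
    · subst e'
      have e1 := h.stefan t (mT ht)
      have e2 := k.stefan _ (mk ht)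
      rw [← asd t ht, ← as t ht] at e2; linarith
    · exact aux0 t ht x ⟨e, e'⟩
  have XA : ∀ t, t < T → ∀ x ∈ Icc 0 (s t), deriv (W t) x = deriv (u t) x := fun t ht x hx => by
    by_cases hc : t ≤ r
    · rw [Wle hc]
    · push Not at hc
      rw [Wgt hc, aux1 t ⟨r1.trans hc, ht⟩ x hx]
  have XB : ∀ t, t₁ < t → ∀ x ∈ Icc 0 (s' (t - t₁)), deriv (W t) x = deriv (w (t - t₁)) x := fun t ht x hx => by
    by_cases hc : t ≤ r
    · have hm : t ∈ Ioo t₁ T := ⟨ht, hc.trans_lt r2⟩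
      rw [Wle hc, aux1 t hm x (by rwa [as t hm])]
    · push Not at hc
      rw [Wgt hc]
  have YA : ∀ t, t < T → ∀ x ∈ Ioo 0 (s t), deriv (deriv (W t)) x = deriv (deriv (u t)) x := fun t ht x hx => by
    by_cases hc : t ≤ r
    · rw [Wle hc]
    · push Not at hc
      rw [Wgt hc, aux2 t ⟨r1.trans hc, ht⟩ x hx]
  have YB : ∀ t, t₁ < t → ∀ x ∈ Ioo 0 (s' (t - t₁)), deriv (deriv (W t)) x = deriv (deriv (w (t - t₁))) x := fun t ht x hx => by
    by_cases hc : t ≤ r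
    · have hm : t ∈ Ioo t₁ T := ⟨ht, hc.trans_lt r2⟩
      rw [Wle hc, aux2 t hm x (by rwa [as t hm])]
    · push Not at hc
      rw [Wgt hc]
  -- local equalities in time
  have sA : ∀ t, t < T → S =ᶠ[𝓝 t] s := fun t ht => by
    filter_upwards [gt_mem_nhds ht] with τ hτ using SA τ hτ
  have sB : ∀ t, t₁ < t → S =ᶠ[𝓝 t] fun τ => s' (τ - t₁) := fun t ht => by
    filter_upwards [lt_mem_nhds ht] with τ hτ using SB τ hτ
  have tA : ∀ t, 0 < t → t < T → ∀ x ∈ Ioo 0 (s t), (fun τ => W τ x) =ᶠ[𝓝 t] fun τ => u τ x := fun t h0 ht x hx => by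
    have hc := (h.s_diff t ⟨h0, ht.le⟩).continuousAt
    filter_upwards [gt_mem_nhds ht, hc.eventually (lt_mem_nhds hx.2)] with τ hτ h2 using UA τ hτ x ⟨hx.1.le, h2.le⟩
  have tB : ∀ t, t₁ < t → t ≤ t₁ + T₁ → ∀ x ∈ Ioo 0 (s' (t - t₁)), (fun τ => W τ x) =ᶠ[𝓝 t] fun τ => w (τ - t₁) x := fun t h0 ht x hx => by
    have hc : ContinuousAt (fun τ => s' (τ - t₁)) t :=
      (k.s_diff (t - t₁) ⟨by linarith, by linarith⟩).continuousAt.comp (f := fun τ => τ - t₁) (by fun_prop)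
    filter_upwards [lt_mem_nhds h0, hc.eventually (lt_mem_nhds hx.2)] with τ hτ h2 using UB τ hτ x ⟨hx.1.le, h2.le⟩
  have mB : ∀ {t}, t₁ < t → t ≤ t₁ + T₁ → t - t₁ ∈ Ioc 0 T₁ := fun h h' => ⟨by linarith, by linarith⟩
  have d : ∀ {f : ℝ → ℝ} {t}, DifferentiableAt ℝ f (t - t₁) → DifferentiableAt ℝ (fun t => f (t - t₁)) t := 
    fun hf => hf.comp (f := fun t => t - t₁) _ (by fun_prop)
  have e2 : ∀ t x, deriv (fun τ => w (τ - t₁) x) t = deriv (fun τ => w τ x) (t - t₁) := fun t x =>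
    deriv_comp_sub_const (fun τ => w τ x) t₁ t
  have dich : ∀ t, t < T ∨ t₁ < t := fun t => (lt_or_ge t T).imp_right h1.trans_le
  have oU : IsOpen {q : ℝ × ℝ | q.1 < T} := isOpen_lt continuous_fst continuous_const
  have oV : IsOpen {q : ℝ × ℝ | t₁ < q.1} := isOpen_lt continuous_const continuous_fst
  have cq : Continuous fun q : ℝ × ℝ => (q.1 - t₁, q.2) := by fun_prop
  refine ⟨S, W, ?_⟩
  exact
  { T_pos := by linarith
    s_cont := cover (isOpen_Iio (a := T)) (isOpen_Ioi (a := t₁)) (fun t _ => dich t) h.s_cont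
      (k.s_cont.comp (t := Icc 0 T₁) (s := Icc t₁ (t₁ + T₁)) (f := fun t => t - t₁) (by fun_prop) fun t ht => ⟨by linarith [ht.1], by linarith [ht.2]⟩)
      (fun t ht h2 => ⟨⟨ht.1, le_of_lt h2⟩, SA t h2⟩) (fun t ht h2 => ⟨⟨le_of_lt h2, ht.2⟩, SB t h2⟩)
    s_diff := fun t ht => by
      rcases dich t with hd | hd
      · exact (sA t hd).differentiableAt_iff.2 (h.s_diff t ⟨ht.1, hd.le⟩)
      · exact (sB t hd).differentiableAt_iff.2 (d (k.s_diff _ (mB hd ht.2)))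
    s_deriv_cont := cover (isOpen_Iio (a := T)) (isOpen_Ioi (a := t₁)) (fun t _ => dich t) h.s_deriv_cont
      (k.s_deriv_cont.comp (t := Ioc 0 T₁) (s := Ioc t₁ (t₁ + T₁)) (f := fun t => t - t₁) (by fun_prop) fun t ht => ⟨by linarith [ht.1], by linarith [ht.2]⟩)
      (fun t ht h2 => ⟨⟨ht.1, le_of_lt h2⟩, (sA t h2).deriv_eq⟩) 
      (fun t ht h2 => ⟨⟨h2, ht.2⟩, (sB t h2).deriv_eq.trans (deriv_comp_sub_const s' t₁ t)⟩)
    s_pos := fun t ht => by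
      rcases dich t with hd | hd
      · rw [SA t hd]; exact h.s_pos t ⟨ht.1, hd.le⟩
      · rw [SB t hd]; exact k.s_pos _ (Ioc_subset_Icc_self (mB hd ht.2))
    ut_diff := fun t ht x hx => by
      rcases dich t with hd | hd
      · rw [SA t hd] at hx
        exact (tA t ht.1 hd x hx).differentiableAt_iff.2 (h.ut_diff t ⟨ht.1, hd.le⟩ x hx)
      · rw [SB t hd] at hx
        exact (tB t hd ht.2 x hx).differentiableAt_iff.2 (d (f := fun τ => w τ x) (k.ut_diff _ (mB hd ht.2) x hx))
    ux_diff := fun t ht x hx => by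
      rcases le_or_gt t r with hd | hd
      · rw [SA t (hd.trans_lt r2)] at hx; rw [Wle hd]
        exact h.ux_diff t ⟨ht.1, hd.trans r2.le⟩ x hx
      · rw [SB t (r1.trans hd)] at hx; rw [Wgt hd]
        exact k.ux_diff _ (mB (r1.trans hd) ht.2) x hx
    uxx_diff := fun t ht x hx => by
      rcases le_or_gt t r with hd | hd
      · rw [SA t (hd.trans_lt r2)] at hx; rw [Wle hd]
        exact h.uxx_diff t ⟨ht.1, hd.trans r2.le⟩ x hx
      · rw [SB t (r1.trans hd)] at hx; rw [Wgt hd]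
        exact k.uxx_diff _ (mB (r1.trans hd) ht.2) x hx
    ut_cont := cover oU oV (fun q _ => dich q.1) h.ut_cont
      (k.ut_cont.comp (s := {q : ℝ × ℝ | q.1 - t₁ ∈ Ioc 0 T₁ ∧ q.2 ∈ Ioo 0 (s' (q.1 - t₁))}) cq.continuousOn fun q hq => hq)
      (fun q hq h2 => by
        have hq2 := hq.2
        rw [SA q.1 h2] at hq2
        exact ⟨⟨⟨hq.1.1, le_of_lt h2⟩, hq2⟩, (tA q.1 hq.1.1 h2 _ hq2).deriv_eq⟩)
      (fun q hq h2 => by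
        have hq2 := hq.2
        rw [SB q.1 h2] at hq2
        exact ⟨⟨mB h2 hq.1.2, hq2⟩, (tB q.1 h2 hq.1.2 _ hq2).deriv_eq.trans (e2 _ _)⟩)
    uxx_cont := cover oU oV (fun q _ => dich q.1) h.uxx_cont
      (k.uxx_cont.comp (s := {q : ℝ × ℝ | q.1 - t₁ ∈ Ioc 0 T₁ ∧ q.2 ∈ Ioo 0 (s' (q.1 - t₁))}) cq.continuousOn fun q hq => hq)
      (fun q hq h2 => by
        have hq2 := hq.2
        rw [SA q.1 h2] at hq2
        exact ⟨⟨⟨hq.1.1, le_of_lt h2⟩, hq2⟩, YA q.1 h2 _ hq2⟩)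
      (fun q hq h2 => by
        have hq2 := hq.2
        rw [SB q.1 h2] at hq2
        exact ⟨⟨mB h2 hq.1.2, hq2⟩, YB q.1 h2 _ hq2⟩)
    ux_cont := cover oU oV (fun q _ => dich q.1) h.ux_cont
      (k.ux_cont.comp (s := {q : ℝ × ℝ | q.1 - t₁ ∈ Ioc 0 T₁ ∧ q.2 ∈ Icc 0 (s' (q.1 - t₁))}) cq.continuousOn fun q hq => hq)
      (fun q hq h2 => by
        have hq2 := hq.2
        rw [SA q.1 h2] at hq2
        exact ⟨⟨⟨hq.1.1, le_of_lt h2⟩, hq2⟩, XA q.1 h2 _ hq2⟩)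
      (fun q hq h2 => by
        have hq2 := hq.2
        rw [SB q.1 h2] at hq2
        exact ⟨⟨mB h2 hq.1.2, hq2⟩, XB q.1 h2 _ hq2⟩)
    u_cont := cover oU oV (fun q _ => dich q.1) h.u_cont
      (k.u_cont.comp (s := {q : ℝ × ℝ | q.1 - t₁ ∈ Icc 0 T₁ ∧ q.2 ∈ Icc 0 (s' (q.1 - t₁))}) cq.continuousOn fun q hq => hq)
      (fun q hq h2 => by
        have hq2 := hq.2
        rw [SA q.1 h2] at hq2
        exact ⟨⟨⟨hq.1.1, le_of_lt h2⟩, hq2⟩, UA q.1 h2 _ hq2⟩)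
      (fun q hq h2 => by
        have hq2 := hq.2
        rw [SB q.1 h2] at hq2
        exact ⟨⟨Ioc_subset_Icc_self (mB h2 hq.1.2), hq2⟩, UB q.1 h2 _ hq2⟩)
    u_nonneg := fun t ht x hx => by
      rcases dich t with hd | hd
      · rw [SA t hd] at hx; rw [UA t hd x hx]
        exact h.u_nonneg t ⟨ht.1, hd.le⟩ x hx
      · rw [SB t hd] at hx; rw [UB t hd x hx]
        exact k.u_nonneg _ (Ioc_subset_Icc_self (mB hd ht.2)) x hx
    heat := fun t ht x hx => by
      rcases dich t with hd | hd
      · rw [SA t hd] at hx; rw [YA t hd x hx, (tA t ht.1 hd x hx).deriv_eq]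
        exact h.heat t ⟨ht.1, hd.le⟩ x hx
      · rw [SB t hd] at hx; rw [YB t hd x hx, (tB t hd ht.2 x hx).deriv_eq, e2]
        exact k.heat _ (mB hd ht.2) x hx
    bc_zero := fun t ht => by
      rcases le_or_gt t r with hd | hd
      · rw [Wle hd]; exact h.bc_zero t ⟨ht.1, hd.trans r2.le⟩
      · rw [Wgt hd]; exact k.bc_zero _ (mB (r1.trans hd) ht.2)
    bc_free := fun t ht => by
      rcases le_or_gt t r with hd | hd
      · rw [Wle hd, SA t (hd.trans_lt r2)]; exact h.bc_free t ⟨ht.1, hd.trans r2.le⟩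
      · rw [Wgt hd, SB t (r1.trans hd)]; exact k.bc_free _ (mB (r1.trans hd) ht.2)
    stefan := fun t ht => by
      rcases le_or_gt t r with hd | hd
      · rw [Wle hd, SA t (hd.trans_lt r2), (sA t (hd.trans_lt r2)).deriv_eq]; exact h.stefan t ⟨ht.1, hd.trans r2.le⟩
      · rw [Wgt hd, SB t (r1.trans hd), (sB t (r1.trans hd)).deriv_eq, deriv_comp_sub_const]; exact k.stefan _ (mB (r1.trans hd) ht.2)
    init := fun x hx => by rw [Wle (h0.trans r1).le]; exact h.init x hx
    init_s := by rw [SA 0 (h0.trans h1)]; exact h.init_s }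

lemma IsSolOn.extend (hp : 1 < p) (h : IsSolOn p s₀ φ T s u) {t₁ T₁ L : ℝ} {s' : ℝ → ℝ} {w : ℝ → ℝ → ℝ}
    (h0 : 0 < t₁) (h1 : t₁ < T) (k : IsSolOn p (s t₁) (u t₁) T₁ s' w) (hT : T < t₁ + T₁) (hL0 : 0 ≤ L)
    (hL : ∀ x ∈ Icc 0 (s t₁), u t₁ x ≤ L * (s t₁ - x)) :
    ∃ σ v, IsSolOn p s₀ φ (t₁ + T₁) σ v := by
  have hs := h.shift h0 h1
  have hk := k.mono_T (T' := T - t₁) (by linarith) (by linarith)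
  have key : ∀ t ∈ Ioo t₁ T, s t = s' (t - t₁) ∧ ∀ x ∈ Icc 0 (s t), u t x = w (t - t₁) x := by
    intro t ht
    have h3 : t - t₁ ∈ Icc 0 (t - t₁) := ⟨by linarith [ht.1], le_rfl⟩
    obtain ⟨a1, a2⟩ := comparison hp hs hk le_rfl (fun x _ => le_rfl) hL0 hL (by linarith [ht.1]) (by linarith [ht.2]) _ h3
    obtain ⟨b1, b2⟩ := comparison hp hk hs le_rfl (fun x _ => le_rfl) hL0 hL (by linarith [ht.1]) (by linarith [ht.2]) _ h3
    simp only [add_sub_cancel] at a1 a2 b1 b2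
    have e := le_antisymm a1 b1
    exact ⟨e, fun x hx => le_antisymm (a2 x hx) (b2 x (e ▸ hx))⟩
  exact h.glue k h0 h1 (fun t ht => (key t ht).1) (fun t ht => (key t ht).2) hT
end sh

lemma ofReal_btw {t : ℝ} {T : ℝ≥0∞} (h : ENNReal.ofReal t < T) :
    ∃ r : ℝ, t < r ∧ ENNReal.ofReal r < T := by
  obtain ⟨r, _, h1, h2⟩ := ENNReal.lt_iff_exists_real_btwn.1 h
  exact ⟨r, lt_of_not_ge fun hle => h1.not_ge (ENNReal.ofReal_le_ofReal hle), h2⟩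

/-- Proposition 2.5: the comparison principle for problem (P). -/
theorem stmt_10 (p : ℝ) (hp : 1 < p) (s₀ σ₀ : ℝ) (φ ψ : ℝ → ℝ)
    (hWφ : memW s₀ φ) (hWψ : memW σ₀ ψ)
    (s σ : ℝ → ℝ) (u v : ℝ → ℝ → ℝ) (Tu Tv : ℝ≥0∞)
    (hu : IsMaxSol p s₀ φ Tu s u) (hv : IsMaxSol p σ₀ ψ Tv σ v)
    (h0 : s₀ ≤ σ₀) (hφψ : ∀ x ∈ Icc 0 s₀, φ x ≤ ψ x) :
    Tv ≤ Tu ∧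
    (∀ t : ℝ, 0 < t → ENNReal.ofReal t < Tv → s t ≤ σ t) ∧
    (∀ T : ℝ, 0 < T → ENNReal.ofReal T < Tv →
      ∀ t ∈ Ioc 0 T, ∀ x ∈ Ioo 0 (s t), u t x ≤ v t x) := by
  obtain ⟨hs₀, ⟨K, hK⟩, -, hφ0, hφs⟩ := hWφ
  have hKl : ∀ x ∈ Icc 0 s₀, ∀ y ∈ Icc 0 s₀, |φ x - φ y| ≤ K * |x - y| := fun x hx y hy => by
    have := hK.dist_le_mul x hx y hy
    rwa [Real.dist_eq, Real.dist_eq] at this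
  have hK0 : (0:ℝ) ≤ K := K.2
  have hφK : ∀ x ∈ Icc 0 s₀, φ x ≤ K * (s₀ - x) := fun x hx => by
    have := hKl x hx s₀ ⟨hs₀.le, le_rfl⟩
    rw [hφs, sub_zero, abs_sub_comm, abs_of_nonneg (sub_nonneg.2 hx.2)] at this
    exact (le_abs_self _).trans this
  have cmp : ∀ T : ℝ, 0 < T → ENNReal.ofReal T < Tu → ENNReal.ofReal T < Tv → ∀ t ∈ Icc 0 T,
      s t ≤ σ t ∧ ∀ x ∈ Icc 0 (s t), u t x ≤ v t x := by
    intro T hT h1 h2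
    obtain ⟨r, hr, hr'⟩ := ofReal_btw (lt_min h1 h2)
    have hr0 := hT.trans hr
    exact comparison hp (hu.2.1 r hr0 (hr'.trans_le (min_le_left _ _))) (hv.2.1 r hr0 (hr'.trans_le (min_le_right _ _)))
      h0 hφψ hK0 hφK hT hr
  have main : Tv ≤ Tu := by
    by_contra hc
    push Not at hc
    have hne : Tu ≠ ⊤ := hc.ne_top
    set τ := Tu.toReal with hτd
    have hTu : ENNReal.ofReal τ = Tu := ENNReal.ofReal_toReal hne
    have hτ : 0 < τ := ENNReal.toReal_pos hu.1.ne' hne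
    obtain ⟨r, hr, hr'⟩ := ofReal_btw (hTu ▸ hc)
    have hvr := hv.2.1 r (hτ.trans hr) hr'
    obtain ⟨M, hM, hvM⟩ := hvr.bdd
    have lu : ∀ {t}, t < τ → ENNReal.ofReal t < Tu := fun ht => by
      rw [← hTu]; exact (ENNReal.ofReal_lt_ofReal_iff hτ).2 ht
    have huM : ∀ t ∈ Ico 0 τ, ∀ x ∈ Icc 0 (s t), u t x ≤ M := by
      intro t ht x hx
      obtain ⟨T, hT1, hT2⟩ := exists_between ht.2
      have := cmp T (ht.1.trans_lt hT1) (lu hT2) ((lu hT2).trans hc) t ⟨ht.1, hT1.le⟩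
      exact (this.2 x hx).trans (hvM t ⟨ht.1, (ht.2.trans hr).le⟩ x ⟨hx.1, hx.2.trans this.1⟩)
    set L : ℝ := K + M / s₀ + M ^ p + 1 with hL
    have hMp : 0 ≤ M ^ p := Real.rpow_nonneg hM _
    have hMs : 0 ≤ M / s₀ := div_nonneg hM hs₀.le
    have hL0 : 0 ≤ L := by linarith
    have hL1 : M ≤ L * s₀ := by
      have : M = M / s₀ * s₀ := by field_simp
      rw [this]; exact mul_le_mul_of_nonneg_right (by linarith) hs₀.le
    have hL2 : M ^ p < L := by linarith
    have hL3 : ∀ x ∈ Icc 0 s₀, ∀ y ∈ Icc 0 s₀, |φ x - φ y| ≤ L * |x - y| := fun x hx y hy =>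
      (hKl x hx y hy).trans (mul_le_mul_of_nonneg_right (by linarith) (abs_nonneg _))
    obtain ⟨δ, hδ, H⟩ := existence' hp hs₀ hL0 hM
    set t₁ := max (τ / 2) (τ - δ / 2) with ht₁
    have t1 : 0 < t₁ := lt_max_of_lt_left (by linarith)
    have t2 : t₁ < τ := max_lt (by linarith) (by linarith)
    have t3 : τ - δ / 2 ≤ t₁ := le_max_right _ _
    obtain ⟨T, hT1, hT2⟩ := exists_between t2
    have hT0 := t1.trans hT1
    have hsol := hu.2.1 T hT0 (lu hT2)
    have hM0 : ∀ t ∈ Icc 0 T, u t 0 ≤ M := fun t ht =>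
      huM t ⟨ht.1, ht.2.trans_lt hT2⟩ 0 ⟨le_rfl, (hsol.s_pos t ht).le⟩
    have m1 : t₁ ∈ Icc 0 T := ⟨t1.le, hT1.le⟩
    have hp0 : 0 < p := by linarith
    have l1 := hsol.lip hL0 (Or.inl rfl) hp0 hM0 hL1 hL2 hL3 hφs t₁ m1
    have l2 := hsol.lip hL0 (Or.inr rfl) hp0 hM0 hL1 hL2 hL3 hφs t₁ m1
    have l3 : ∀ x ∈ Icc 0 (s t₁), ∀ y ∈ Icc 0 (s t₁), |u t₁ x - u t₁ y| ≤ L * |x - y| := by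
      have aux : ∀ x ∈ Icc 0 (s t₁), ∀ y ∈ Icc 0 (s t₁), y ≤ x → |u t₁ x - u t₁ y| ≤ L * |x - y| := by
        intro x hx y hy hyx
        rw [abs_of_nonneg (sub_nonneg.2 hyx), abs_le]
        have a := l1 x hx y ⟨hy.1, hyx⟩
        have b := l2 x hx y ⟨hy.1, hyx⟩
        constructor <;> linarith
      intro x hx y hy
      rcases le_total y x with h | h
      · exact aux x hx y hy h
      · rw [abs_sub_comm, abs_sub_comm x y]; exact aux y hy x hx h
    have hz := hsol.bc_free t₁ ⟨t1, hT1.le⟩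
    obtain ⟨s', w, k⟩ := H (s t₁) (hsol.s_ge m1) (u t₁) l3
      (fun x hx => ⟨hsol.u_nonneg t₁ m1 x hx, huM t₁ ⟨t1.le, t2⟩ x hx⟩) hz
    have hsp := (hsol.s_pos t₁ m1).le
    obtain ⟨S, W, hSW⟩ := hsol.extend hp t1 hT1 k (by linarith) hL0 (fun x hx => by
      have := l3 x hx (s t₁) ⟨hsp, le_rfl⟩
      rw [hz, sub_zero, abs_sub_comm, abs_of_nonneg (sub_nonneg.2 hx.2)] at this
      exact (le_abs_self _).trans this)
    refine hu.2.2 (t₁ + δ) ?_ ⟨S, W, hSW⟩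
    rw [← hTu]
    exact (ENNReal.ofReal_lt_ofReal_iff (by linarith)).2 (by linarith)
  refine ⟨main, fun t ht h => (cmp t ht (h.trans_le main) h t ⟨ht.le, le_rfl⟩).1, fun T hT h t ht x hx => ?_⟩
  exact (cmp T hT (h.trans_le main) h t (Ioc_subset_Icc_self ht)).2 x (Ioo_subset_Icc_self hx)
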